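/- arXiv:0712.0492 — 4 statements merged into one kernel-verified Lean document; each statement's English description precedes it below -/
import Mathlib

section
/- Let f be a bounded analytic function on Re s > 0 represented by a Dirichlet series ∑ a_n n^{-s} in some half-plane, with boundary values f(it) defined almost everywhere. Then liminf_{T→∞} (1/T) ∫_0^T |f(it)|² dt ≥ ∑_{n=1}^∞ |a_n|². -/
open MeasureTheory Filter Complex Real

lemma bms_mean_exp (c : ℝ) :
    Tendsto (fun T : ℝ => (1 / T : ℂ) * ∫ t in (0:ℝ)..T, cexp (c * t * I)) atTop
      (nhds (if c = 0 then 1 else 0)) := by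
  split_ifs with h
  · subst h
    refine tendsto_const_nhds.congr' ?_
    filter_upwards [eventually_gt_atTop 0] with T hT
    have : (T : ℂ) ≠ 0 := by exact_mod_cast hT.ne'
    simp [this]
  · have hc : (c * I : ℂ) ≠ 0 := mul_ne_zero (by exact_mod_cast h) I_ne_zero
    have h1 : ∀ T : ℝ, ∫ t in (0:ℝ)..T, cexp (c * t * I) = (cexp (c * I * T) - 1) / (c * I) := by
      intro T
      have := integral_exp_mul_complex (a := 0) (b := T) hc
      simp only [ofReal_zero, mul_zero, Complex.exp_zero] at this
      rw [← this]
      congr 1; ext t; congr 1; ring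
    simp_rw [h1]
    apply squeeze_zero_norm' (a := fun T : ℝ => T⁻¹ * (2 / |c|))
    · filter_upwards [eventually_gt_atTop 0] with T hT
      rw [norm_mul, norm_div, norm_div, norm_mul, norm_I, norm_real, norm_real, norm_one, mul_one,
        Real.norm_eq_abs, Real.norm_eq_abs, abs_of_pos hT, one_div]
      gcongr
      refine (norm_sub_le _ _).trans ?_
      have : (c * I * T : ℂ) = (c * T : ℝ) * I := by push_cast; ring
      rw [this, norm_exp_ofReal_mul_I, norm_one]; norm_num
    · simpa using tendsto_inv_atTop_zero.mul_const (2 / |c|)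

lemma bms_cpow (n : ℕ) (s : ℂ) :
    ((n + 1 : ℕ) : ℂ) ^ (-s) = cexp (-(Real.log (n + 1) : ℝ) * s) := by
  rw [cpow_def_of_ne_zero (by exact_mod_cast Nat.succ_ne_zero n)]
  congr 1
  have : ((n + 1 : ℕ) : ℂ) = ((n + 1 : ℝ) : ℂ) := by push_cast; rfl
  rw [this, ← Complex.ofReal_log (by positivity)]
  ring

lemma bms_log_inj (m n : ℕ) : (Real.log (n + 1) - Real.log (m + 1) = 0) ↔ m = n := by
  rw [sub_eq_zero]
  constructor
  · intro h
    have := Real.log_injOn_pos (by simp; positivity) (by simp; positivity) h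
    have : (n : ℝ) = m := by linarith
    exact_mod_cast this.symm
  · rintro rfl; rfl

lemma bms_mean_right (f : ℂ → ℂ) (a : ℕ → ℂ) (σ : ℝ)
    (hrep : ∀ s : ℂ, s.re = σ →
      HasSum (fun n : ℕ => a (n + 1) * ((n + 1 : ℕ) : ℂ) ^ (-s)) (f s)) (n : ℕ) :
    Tendsto (fun T : ℝ => (1 / T : ℂ) * ∫ t in (0:ℝ)..T,
      f (σ + t * I) * cexp ((Real.log (n + 1) : ℝ) * (σ + t * I))) atTop (nhds (a (n + 1))) := by
  set l : ℕ → ℝ := fun n => Real.log (n + 1) with hl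
  set b : ℕ → ℂ := fun m => a (m + 1) * cexp (((l n - l m) * σ : ℝ)) with hb
  have hterm : ∀ t : ℝ, HasSum (fun m => b m * cexp ((l n - l m : ℝ) * t * I))
      (f (σ + t * I) * cexp ((l n : ℝ) * (σ + t * I))) := by
    intro t
    have := (hrep (σ + t * I) (by simp)).mul_right (cexp ((l n : ℝ) * (σ + t * I)))
    suffices e : (fun m => b m * cexp ((l n - l m : ℝ) * t * I)) = fun m : ℕ =>
        a (m + 1) * ((m + 1 : ℕ) : ℂ) ^ (-((σ : ℂ) + t * I)) *
          cexp ((l n : ℝ) * (σ + t * I)) by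
      rw [e]; exact this
    ext m
    rw [bms_cpow, hb, mul_assoc (a (m + 1)), mul_assoc (a (m + 1)), ← Complex.exp_add, ← Complex.exp_add]
    congr 2
    simp only [hl]; push_cast; ring
  have hnorm : ∀ (m : ℕ) (t : ℝ), ‖b m * cexp ((l n - l m : ℝ) * t * I)‖ = ‖b m‖ := by
    intro m t
    rw [norm_mul, ← ofReal_mul, norm_exp_ofReal_mul_I, mul_one]
  have hsum : Summable (fun m => ‖b m‖) := by
    have := (hterm 0).summable.norm
    simpa only [hnorm] using this
  have hint : ∀ T : ℝ, HasSum (fun m => ∫ t in (0:ℝ)..T, b m * cexp ((l n - l m : ℝ) * t * I))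
      (∫ t in (0:ℝ)..T, f (σ + t * I) * cexp ((l n : ℝ) * (σ + t * I))) := by
    intro T
    apply intervalIntegral.hasSum_integral_of_dominated_convergence (fun m _ => ‖b m‖)
    · intro m
      exact Continuous.aestronglyMeasurable (by fun_prop)
    · intro m
      exact ae_of_all _ fun t _ => (hnorm m t).le
    · exact ae_of_all _ fun t _ => hsum
    · exact intervalIntegrable_const
    · exact ae_of_all _ fun t _ => hterm t
  have key : Tendsto (fun T : ℝ => ∑' m, (1 / T : ℂ) *
      ∫ t in (0:ℝ)..T, b m * cexp ((l n - l m : ℝ) * t * I)) atTop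
      (nhds (∑' m, if m = n then a (n + 1) else 0)) := by
    apply tendsto_tsum_of_dominated_convergence hsum
    · intro m
      have := (bms_mean_exp (l n - l m)).const_mul (b m)
      have e : b m * (if l n - l m = 0 then 1 else 0) = if m = n then a (n + 1) else 0 := by
        rw [hl]; simp only [bms_log_inj]
        split_ifs with h
        · subst h; simp [hb]
        · simp
      rw [e] at this
      refine this.congr fun T => ?_
      rw [intervalIntegral.integral_const_mul]; ring
    · filter_upwards [eventually_gt_atTop 0] with T hT m
      have := intervalIntegral.norm_integral_le_of_norm_le_const (a := 0) (b := T)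
        (f := fun t : ℝ => b m * cexp ((l n - l m : ℝ) * t * I)) (C := ‖b m‖)
        (fun t _ => (hnorm m t).le)
      rw [norm_mul, norm_div, norm_real, norm_one, Real.norm_eq_abs]
      rw [sub_zero] at this
      have hT' : 0 < |T| := abs_pos.mpr hT.ne'
      rw [one_div_mul_eq_div, div_le_iff₀ hT']
      exact this
  rw [tsum_ite_eq] at key
  refine key.congr fun T => ?_
  rw [tsum_mul_left, (hint T).tsum_eq]

lemma bms_rect (f : ℂ → ℂ) (C : ℝ)
    (hf : DifferentiableOn ℂ f {s : ℂ | 0 < s.re})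
    (hC : ∀ s : ℂ, 0 < s.re → ‖f s‖ ≤ C) (l : ℝ) (hl : 0 ≤ l) (ε σ T : ℝ) (hε : 0 < ε)
    (hσ : ε < σ) :
    ‖(∫ t in (0:ℝ)..T, f (ε + t * I) * cexp (l * (ε + t * I))) -
      ∫ t in (0:ℝ)..T, f (σ + t * I) * cexp (l * (σ + t * I))‖ ≤
      2 * (C * Real.exp (l * σ) * σ) := by
  have hCn : 0 ≤ C := (norm_nonneg _).trans (hC 1 (by simp))
  set g : ℂ → ℂ := fun s => f s * cexp (l * s) with hg
  have hgd : DifferentiableOn ℂ g {s : ℂ | 0 < s.re} := by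
    apply hf.mul; fun_prop
  have hR := Complex.integral_boundary_rect_eq_zero_of_differentiableOn g (ε : ℂ) (σ + T * I)
    (hgd.mono (by
      intro s hs
      rw [mem_reProdIm] at hs
      have := hs.1
      simp only [ofReal_re, add_re, mul_re, I_re, mul_zero, ofReal_im, I_im, mul_one, sub_self, add_zero] at this
      rw [Set.uIcc_of_le hσ.le] at this
      exact hε.trans_le this.1))
  simp only [ofReal_re, ofReal_im, add_re, add_im, mul_re, mul_im, I_re, I_im, mul_zero, mul_one,
    sub_self, add_zero, zero_add, ofReal_zero, zero_mul, smul_eq_mul] at hR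
  have hor : ∀ y : ℝ, ‖∫ x in ε..σ, g (x + y * I)‖ ≤ C * Real.exp (l * σ) * σ := by
    intro y
    have := intervalIntegral.norm_integral_le_of_norm_le_const (a := ε) (b := σ)
        (f := fun x : ℝ => g (x + y * I)) (C := C * Real.exp (l * σ)) (by
          intro x hx
          rw [Set.uIoc_of_le hσ.le] at hx
          rw [hg, norm_mul, Complex.norm_exp]
          have : ((l : ℂ) * (x + y * I)).re = l * x := by simp
          rw [this]
          gcongr
          · apply hC; simpa using hε.trans hx.1
          · exact hx.2)
    refine this.trans ?_
    rw [abs_of_pos (by linarith)]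
    gcongr
    linarith
  have h0 := hor 0
  have hT := hor T
  simp only [ofReal_zero, zero_mul, add_zero] at h0
  set A := ∫ x in ε..σ, g x
  set B := ∫ x in ε..σ, g (x + T * I)
  set D := ∫ t in (0:ℝ)..T, g (ε + t * I)
  set E := ∫ t in (0:ℝ)..T, g (σ + t * I)
  change ‖D - E‖ ≤ _
  have : A - B = I * (D - E) := by linear_combination hR
  have h2 : ‖D - E‖ = ‖A - B‖ := by rw [this, norm_mul, norm_I, one_mul]
  rw [h2]
  linarith [norm_sub_le A B]

lemma bms_line_cont (f : ℂ → ℂ)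
    (hf : DifferentiableOn ℂ f {s : ℂ | 0 < s.re}) (ε : ℝ) (hε : 0 < ε) :
    Continuous (fun t : ℝ => f (ε + t * I)) := by
  have := hf.continuousOn
  exact this.comp_continuous (by fun_prop) (fun t => by simpa using hε)

lemma bms_meas (f : ℂ → ℂ) (fb : ℝ → ℂ)
    (hf : DifferentiableOn ℂ f {s : ℂ | 0 < s.re})
    (hfb : ∀ᵐ t : ℝ ∂volume,
      Tendsto (fun σ : ℝ => f (σ + t * I)) (nhdsWithin 0 (Set.Ioi 0)) (nhds (fb t))) :
    AEStronglyMeasurable fb volume := by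
  have hu : Tendsto (fun k : ℕ => (1 / ((k : ℝ) + 1))) atTop (nhdsWithin 0 (Set.Ioi 0)) := by
    apply tendsto_nhdsWithin_of_tendsto_nhds_of_eventually_within
    · exact tendsto_one_div_add_atTop_nhds_zero_nat
    · exact Eventually.of_forall fun k => by simp only [Set.mem_Ioi]; positivity
  refine aestronglyMeasurable_of_tendsto_ae atTop
    (f := fun (k : ℕ) (t : ℝ) => f ((1 / ((k : ℝ) + 1) : ℝ) + t * I)) ?_ ?_
  · intro k
    exact (bms_line_cont f hf _ (by positivity)).aestronglyMeasurable
  · filter_upwards [hfb] with t ht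
    exact ht.comp hu

lemma bms_coeff (f : ℂ → ℂ) (a : ℕ → ℂ) (σ₀ : ℝ) (fb : ℝ → ℂ) (C : ℝ)
    (hf : DifferentiableOn ℂ f {s : ℂ | 0 < s.re})
    (hC : ∀ s : ℂ, 0 < s.re → ‖f s‖ ≤ C)
    (hrep : ∀ s : ℂ, σ₀ < s.re →
      HasSum (fun n : ℕ => a (n + 1) * ((n + 1 : ℕ) : ℂ) ^ (-s)) (f s))
    (hfb : ∀ᵐ t : ℝ ∂volume,
      Tendsto (fun σ : ℝ => f (σ + t * I)) (nhdsWithin 0 (Set.Ioi 0)) (nhds (fb t))) (n : ℕ) :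
    Tendsto (fun T : ℝ => (1 / T : ℂ) * ∫ t in (0:ℝ)..T,
      fb t * cexp ((Real.log (n + 1) : ℝ) * t * I)) atTop (nhds (a (n + 1))) := by
  have hCn : 0 ≤ C := (norm_nonneg _).trans (hC 1 (by simp))
  set l : ℝ := Real.log (n + 1) with hl
  have hl0 : 0 ≤ l := Real.log_nonneg (by linarith [n.cast_nonneg (α := ℝ)])
  set σ : ℝ := max σ₀ 0 + 1 with hσ
  have hσ0 : 0 < σ := by positivity
  have hσ1 : σ₀ < σ := by linarith [le_max_left σ₀ 0]
  have hR := bms_mean_right f a σ (fun s hs => hrep s (hs ▸ hσ1)) n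
  have hlim : ∀ T : ℝ, Tendsto (fun ε : ℝ => ∫ t in (0:ℝ)..T, f (ε + t * I) * cexp (l * (ε + t * I)))
      (nhdsWithin 0 (Set.Ioi 0)) (nhds (∫ t in (0:ℝ)..T, fb t * cexp (l * t * I))) := by
    intro T
    have hev : ∀ᶠ ε : ℝ in nhdsWithin 0 (Set.Ioi 0), 0 < ε ∧ ε < σ := by
      filter_upwards [Ioo_mem_nhdsGT hσ0] with ε h using h
    apply intervalIntegral.tendsto_integral_filter_of_dominated_convergence
      (fun _ => C * Real.exp (l * σ))
    · filter_upwards [hev] with ε h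
      exact ((bms_line_cont f hf _ h.1).mul (by fun_prop)).aestronglyMeasurable
    · filter_upwards [hev] with ε h
      refine ae_of_all _ fun t _ => ?_
      rw [norm_mul, Complex.norm_exp]
      have : ((l : ℂ) * (ε + t * I)).re = l * ε := by simp
      rw [this]
      gcongr
      · apply hC; simpa using h.1
      · exact h.2.le
    · exact intervalIntegrable_const
    · filter_upwards [hfb] with t ht _
      refine ht.mul ?_
      have hc : Continuous (fun ε : ℝ => cexp (l * (ε + t * I))) := by fun_prop
      have := hc.tendsto 0
      simp only [ofReal_zero, zero_add] at this
      rw [← mul_assoc] at this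
      exact this.mono_left nhdsWithin_le_nhds
  have hbd : ∀ T : ℝ, ‖(∫ t in (0:ℝ)..T, fb t * cexp (l * t * I)) -
      ∫ t in (0:ℝ)..T, f (σ + t * I) * cexp (l * (σ + t * I))‖ ≤
      2 * (C * Real.exp (l * σ) * σ) := by
    intro T
    refine le_of_tendsto ((hlim T).sub_const _).norm ?_
    filter_upwards [Ioo_mem_nhdsGT hσ0] with ε h
    exact bms_rect f C hf hC l hl0 ε σ T h.1 h.2
  have hdiff : Tendsto (fun T : ℝ => (1 / T : ℂ) * ((∫ t in (0:ℝ)..T, fb t * cexp (l * t * I)) -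
      ∫ t in (0:ℝ)..T, f (σ + t * I) * cexp (l * (σ + t * I)))) atTop (nhds 0) := by
    apply squeeze_zero_norm' (a := fun T : ℝ => T⁻¹ * (2 * (C * Real.exp (l * σ) * σ)))
    · filter_upwards [eventually_gt_atTop 0] with T hT
      rw [norm_mul, norm_div, norm_real, norm_one, Real.norm_eq_abs, abs_of_pos hT, one_div]
      gcongr
      exact hbd T
    · simpa using tendsto_inv_atTop_zero.mul_const (2 * (C * Real.exp (l * σ) * σ))
  have := hdiff.add hR
  rw [zero_add] at this
  refine this.congr fun T => ?_
  ring

/-- For a bounded analytic function on `Re s > 0` represented by a Dirichlet series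
`∑ aₙ n^{-s}` in some half-plane, with a.e. boundary values `fb` on the imaginary axis,
`liminf_{T→∞} (1/T) ∫_0^T |f(it)|² dt ≥ ∑ |aₙ|²`. -/
theorem liminf_boundary_mean_square_ge (f : ℂ → ℂ) (a : ℕ → ℂ) (σ₀ : ℝ) (fb : ℝ → ℂ)
    (hf : DifferentiableOn ℂ f {s : ℂ | 0 < s.re})
    (hbdd : ∃ C : ℝ, ∀ s : ℂ, 0 < s.re → ‖f s‖ ≤ C)
    (hrep : ∀ s : ℂ, σ₀ < s.re →
      HasSum (fun n : ℕ => a (n + 1) * ((n + 1 : ℕ) : ℂ) ^ (-s)) (f s))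
    (hfb : ∀ᵐ t : ℝ ∂volume,
      Tendsto (fun σ : ℝ => f (σ + t * I)) (nhdsWithin 0 (Set.Ioi 0)) (nhds (fb t))) :
    (∑' n : ℕ, ‖a (n + 1)‖ ^ 2) ≤
      Filter.liminf (fun T : ℝ => (1 / T) * ∫ t in (0:ℝ)..T, ‖fb t‖ ^ 2) atTop := by
  obtain ⟨C, hC⟩ := hbdd
  have hCn : 0 ≤ C := (norm_nonneg _).trans (hC 1 (by simp))
  have hmeas := bms_meas f fb hf hfb
  have hbC : ∀ᵐ t : ℝ ∂volume, ‖fb t‖ ≤ C := by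
    filter_upwards [hfb] with t ht
    refine le_of_tendsto ht.norm ?_
    filter_upwards [self_mem_nhdsWithin] with σ hσ
    exact hC _ (by simpa using hσ)
  have hcoef := bms_coeff f a σ₀ fb C hf hC hrep hfb
  set l : ℕ → ℝ := fun n => Real.log (n + 1) with hl
  have hfbint : ∀ T : ℝ, IntervalIntegrable fb volume 0 T := by
    intro T
    refine (intervalIntegrable_const (c := C)).mono_fun hmeas.restrict ?_
    filter_upwards [ae_restrict_of_ae hbC] with t ht
    rwa [Real.norm_of_nonneg hCn]
  have hsqint : ∀ T : ℝ, IntervalIntegrable (fun t => ‖fb t‖ ^ 2) volume 0 T := by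
    intro T
    refine (intervalIntegrable_const (c := C ^ 2)).mono_fun (hmeas.norm.pow 2).restrict ?_
    filter_upwards [ae_restrict_of_ae hbC] with t ht
    rw [Real.norm_of_nonneg (by positivity), Real.norm_of_nonneg (by positivity)]
    gcongr
  have hupper : ∀ᶠ T : ℝ in atTop, (1 / T) * (∫ t in (0:ℝ)..T, ‖fb t‖ ^ 2) ≤ C ^ 2 := by
    filter_upwards [eventually_gt_atTop 0] with T hT
    rw [one_div_mul_eq_div, div_le_iff₀ hT]
    have := intervalIntegral.integral_mono_ae (a := 0) (b := T) hT.le (hsqint T)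
      (intervalIntegrable_const (c := C ^ 2)) (by
        filter_upwards [hbC] with t ht
        gcongr)
    simpa [mul_comm] using this
  have hcob : IsCoboundedUnder (· ≥ ·) atTop
      (fun T : ℝ => (1 / T) * ∫ t in (0:ℝ)..T, ‖fb t‖ ^ 2) :=
    (isBoundedUnder_of_eventually_le hupper).isCoboundedUnder_ge
  have hpart : ∀ N : ℕ, ∑ n ∈ Finset.range N, ‖a (n + 1)‖ ^ 2 ≤
      Filter.liminf (fun T : ℝ => (1 / T) * ∫ t in (0:ℝ)..T, ‖fb t‖ ^ 2) atTop := by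
    intro N
    set P : ℝ → ℂ := fun t => ∑ m ∈ Finset.range N, a (m + 1) * cexp (-(l m : ℂ) * t * I) with hP
    have hPc : Continuous P := by fun_prop
    have hPmean : ∀ n ∈ Finset.range N, Tendsto (fun T : ℝ => (1 / T : ℂ) * ∫ t in (0:ℝ)..T,
        P t * cexp (l n * t * I)) atTop (nhds (a (n + 1))) := by
      intro n hn
      have h1 : Tendsto (fun T : ℝ => ∑ m ∈ Finset.range N, a (m + 1) *
          ((1 / T : ℂ) * ∫ t in (0:ℝ)..T, cexp ((l n - l m : ℝ) * t * I))) atTop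
          (nhds (∑ m ∈ Finset.range N, a (m + 1) * (if l n - l m = 0 then 1 else 0))) :=
        tendsto_finsetSum _ fun m _ => (bms_mean_exp (l n - l m)).const_mul _
      have h2 : (∑ m ∈ Finset.range N, a (m + 1) * (if l n - l m = 0 then 1 else 0))
          = a (n + 1) := by
        simp only [hl, bms_log_inj]
        rw [Finset.sum_eq_single n]
        · simp
        · intro b _ hb; simp [hb]
        · intro h; exact absurd hn h
      rw [h2] at h1
      refine h1.congr fun T => ?_
      have h3 : ∀ t : ℝ, P t * cexp (l n * t * I) =
          ∑ m ∈ Finset.range N, a (m + 1) * cexp ((l n - l m : ℝ) * t * I) := by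
        intro t
        rw [hP, Finset.sum_mul]
        refine Finset.sum_congr rfl fun m _ => ?_
        rw [mul_assoc, ← Complex.exp_add]
        congr 2; push_cast; ring
      simp_rw [h3]
      rw [intervalIntegral.integral_finsetSum, Finset.mul_sum]
      · refine Finset.sum_congr rfl fun m _ => ?_
        rw [intervalIntegral.integral_const_mul]; ring
      · intro m _
        exact Continuous.intervalIntegrable (by fun_prop) _ _
    set G : ℝ → ℂ := fun t => ∑ n ∈ Finset.range N, (starRingEnd ℂ (a (n + 1))) *
      (2 * (fb t * cexp (l n * t * I)) - P t * cexp (l n * t * I)) with hG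
    have hi1 : ∀ (n : ℕ) (T : ℝ), IntervalIntegrable (fun t => fb t * cexp (l n * t * I)) volume 0 T :=
      fun n T => (hfbint T).mul_continuousOn (by fun_prop)
    have hi2 : ∀ (n : ℕ) (T : ℝ), IntervalIntegrable (fun t => P t * cexp (l n * t * I)) volume 0 T :=
      fun n T => Continuous.intervalIntegrable (by fun_prop) _ _
    have hi3 : ∀ (n : ℕ) (T : ℝ), IntervalIntegrable (fun t : ℝ => (starRingEnd ℂ (a (n + 1))) *
      (2 * (fb t * cexp (l n * t * I)) - P t * cexp (l n * t * I))) volume 0 T :=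
      fun n T => (((hi1 n T).const_mul 2).sub (hi2 n T)).const_mul _
    have hGi : ∀ T : ℝ, IntervalIntegrable G volume 0 T := by
      intro T
      have := IntervalIntegrable.sum (Finset.range N) (fun n _ => hi3 n T)
      have e : G = ∑ n ∈ Finset.range N, fun t : ℝ => (starRingEnd ℂ (a (n + 1))) *
          (2 * (fb t * cexp (l n * t * I)) - P t * cexp (l n * t * I)) := by
        ext t; simp [hG]
      rw [e]; exact this
    have hGmean : Tendsto (fun T : ℝ => (1 / T : ℂ) * ∫ t in (0:ℝ)..T, G t) atTop
        (nhds (∑ n ∈ Finset.range N, (starRingEnd ℂ (a (n + 1))) * (2 * a (n + 1) - a (n + 1)))) := by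
      have := tendsto_finsetSum (Finset.range N) fun n hn =>
        (((hcoef n).const_mul 2).sub (hPmean n hn)).const_mul (starRingEnd ℂ (a (n + 1)))
      refine this.congr fun T => ?_
      simp only [hG]
      rw [intervalIntegral.integral_finsetSum (fun n _ => hi3 n T), Finset.mul_sum]
      refine Finset.sum_congr rfl fun n _ => ?_
      rw [intervalIntegral.integral_const_mul,
        intervalIntegral.integral_sub ((hi1 n T).const_mul 2) (hi2 n T),
        intervalIntegral.integral_const_mul]
      ring
    have hGre := (Complex.continuous_re.tendsto _).comp hGmean
    have hval : (∑ n ∈ Finset.range N, (starRingEnd ℂ (a (n + 1))) * (2 * a (n + 1) - a (n + 1))).re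
        = ∑ n ∈ Finset.range N, ‖a (n + 1)‖ ^ 2 := by
      rw [Complex.re_sum]
      refine Finset.sum_congr rfl fun n _ => ?_
      have : (starRingEnd ℂ (a (n + 1))) * (2 * a (n + 1) - a (n + 1)) =
        (starRingEnd ℂ (a (n + 1))) * a (n + 1) := by ring
      rw [this, Complex.conj_mul']
      norm_cast
    rw [hval] at hGre
    have hpt : ∀ t : ℝ, (G t).re ≤ ‖fb t‖ ^ 2 := by
      intro t
      have h1 : G t = (2 * fb t - P t) * starRingEnd ℂ (P t) := by
        simp only [hG]
        conv_rhs => rw [show starRingEnd ℂ (P t) = ∑ n ∈ Finset.range N,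
          (starRingEnd ℂ (a (n + 1))) * cexp (l n * t * I) by
            simp only [hP, map_sum, map_mul, ← Complex.exp_conj, map_neg, conj_ofReal, conj_I]
            refine Finset.sum_congr rfl fun m _ => ?_
            congr 2; ring]
        rw [Finset.mul_sum]
        refine Finset.sum_congr rfl fun m _ => ?_
        ring
      rw [h1, ← Complex.normSq_eq_norm_sq, Complex.normSq_apply]
      simp only [mul_re, sub_re, sub_im, mul_im, conj_re, conj_im, re_ofNat, im_ofNat]
      nlinarith [sq_nonneg ((fb t).re - (P t).re), sq_nonneg ((fb t).im - (P t).im)]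
    rw [← hGre.liminf_eq]
    refine liminf_le_liminf ?_ hGre.isBoundedUnder_ge hcob
    filter_upwards [eventually_gt_atTop 0] with T hT
    have h1 : (1 / T : ℂ) = ((1 / T : ℝ) : ℂ) := by push_cast; rfl
    have h2 : (∫ t in (0:ℝ)..T, G t).re = ∫ t in (0:ℝ)..T, (G t).re := by
      have := (Complex.reCLM.intervalIntegral_comp_comm (hGi T))
      simpa using this.symm
    simp only [Function.comp]
    rw [h1, Complex.re_ofReal_mul, h2]
    refine mul_le_mul_of_nonneg_left ?_ (by positivity)
    refine intervalIntegral.integral_mono hT.le ?_ (hsqint T) hpt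
    exact ⟨(hGi T).1.re, (hGi T).2.re⟩
  exact Real.tsum_le_of_sum_range_le (fun n => by positivity) hpart
end

section
/- Let (a_k)_{k≥1} be a summable sequence of nonnegative reals, let λ_k be the singular measures on T² with Fourier coefficients λ̂_k(m,n) = 1 if m = n and k | m, else 0, and suppose μ is a positive measure on T² with μ ≤ ∑_{k=1}^∞ a_k λ_k. Let L ⊂ T² be the image of the curve t ↦ (e^{-i t log 2}, e^{-i t log 3}). Then the radial Poisson extension satisfies lim_{r→1⁻} Pμ(rτ) = 0 for almost every τ ∈ L with respect to the linear (Hausdorff 1-) measure on L. -/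
open MeasureTheory Filter Complex Real

noncomputable def Pk (ρ : ℝ) (z : ℂ) : ℝ := (1 - ρ ^ 2) / ‖1 - ρ * z‖ ^ 2

lemma near_bound (N : Measure ℝ) (θ δ : ℝ) (ε : ENNReal) (hδ : 0 < δ)
    (hN : ∀ s, 0 < s → s ≤ δ → N (Metric.closedBall θ s) ≤ ε * ENNReal.ofReal s)
    (h : ℝ) (hh : 0 < h) :
    ∫⁻ φ in Metric.closedBall θ δ, ENNReal.ofReal (h / (h ^ 2 + (θ - φ) ^ 2)) ∂N ≤ 8 * ε := by
  set A : ℕ → Set ℝ := fun j => Metric.closedBall θ (min (2 ^ j * h) δ) with hA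
  set c : ℕ → ENNReal := fun j => ENNReal.ofReal (4 * (1 / 4) ^ j / h) with hc
  have hpt : ∀ φ ∈ Metric.closedBall θ δ, ENNReal.ofReal (h / (h ^ 2 + (θ - φ) ^ 2)) ≤
      ∑' j, (A j).indicator (fun _ => c j) φ := by
    intro φ hφ
    have hex : ∃ j : ℕ, |θ - φ| ≤ 2 ^ j * h := by
      obtain ⟨j, hj⟩ := pow_unbounded_of_one_lt (|θ - φ| / h) (one_lt_two)
      exact ⟨j, by rw [div_lt_iff₀ hh] at hj; exact hj.le⟩
    classical
    have hsp := Nat.find_spec hex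
    have hmin := fun m => Nat.find_min (m := m) hex
    set j := Nat.find hex
    have hmem : φ ∈ A j := by
      simp only [hA, Metric.mem_closedBall, le_min_iff]
      refine ⟨?_, by simpa using hφ⟩
      rw [Real.dist_eq, abs_sub_comm]; exact hsp
    refine le_trans ?_ (ENNReal.le_tsum j)
    rw [Set.indicator_of_mem hmem]
    apply ENNReal.ofReal_le_ofReal
    rw [div_le_div_iff₀ (by positivity) hh]
    rcases hj : j with _ | m
    · simp; nlinarith [sq_nonneg (θ - φ)]
    · have := hmin m (by omega)
      push Not at this
      have h2 : (2 ^ m * h) ^ 2 ≤ (θ - φ) ^ 2 := by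
        rw [← sq_abs (θ - φ)]; gcongr
      have h3 : (1 / 4 : ℝ) ^ (m + 1) * 4 * (2 ^ m) ^ 2 = 1 := by
        rw [← pow_mul, mul_comm m 2, pow_mul, pow_succ]; norm_num
        have : (1 / 4 : ℝ) ^ m * 4 ^ m = 1 := by rw [← mul_pow]; norm_num
        linear_combination this
      have h4 : 0 < (1 / 4 : ℝ) ^ (m + 1) := by positivity
      calc h * h = 4 * (1 / 4) ^ (m + 1) * (2 ^ m * h) ^ 2 := by
            linear_combination (-h ^ 2) * h3
        _ ≤ _ := by
            gcongr
            nlinarith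
  calc _ ≤ ∫⁻ φ in Metric.closedBall θ δ, ∑' j, (A j).indicator (fun _ => c j) φ ∂N :=
        setLIntegral_mono' Metric.isClosed_closedBall.measurableSet hpt
    _ ≤ ∫⁻ φ, ∑' j, (A j).indicator (fun _ => c j) φ ∂N := setLIntegral_le_lintegral _ _
    _ = ∑' j, c j * N (A j) := by
        rw [lintegral_tsum]
        · congr with j
          rw [lintegral_indicator_const Metric.isClosed_closedBall.measurableSet]
        · intro j
          exact (measurable_const.indicator Metric.isClosed_closedBall.measurableSet).aemeasurable
    _ ≤ ∑' j : ℕ, ε * ENNReal.ofReal (4 * (1 / 2) ^ j) := by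
        refine ENNReal.tsum_le_tsum fun j => ?_
        have h1 : N (A j) ≤ ε * ENNReal.ofReal (2 ^ j * h) := by
          refine (hN _ (by positivity) (min_le_right _ _)).trans ?_
          gcongr
          exact min_le_left _ _
        calc c j * N (A j) ≤ c j * (ε * ENNReal.ofReal (2 ^ j * h)) := by gcongr
          _ = ε * (c j * ENNReal.ofReal (2 ^ j * h)) := by ring
          _ = _ := by
            rw [hc, ← ENNReal.ofReal_mul (by positivity)]
            congr 2
            field_simp
            rw [← mul_pow]; norm_num
    _ = 8 * ε := by
        rw [ENNReal.tsum_mul_left, ← ENNReal.ofReal_tsum_of_nonneg (fun _ => by positivity)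
          (summable_geometric_two.mul_left 4), tsum_mul_left, tsum_geometric_two, mul_comm]
        norm_num

lemma norm_sq_eq (ρ x : ℝ) : ‖1 - ρ * Complex.exp (x * I)‖ ^ 2
    = (1 - ρ) ^ 2 + 2 * ρ * (1 - Real.cos x) := by
  rw [← Complex.normSq_eq_norm_sq, Complex.normSq_apply, Complex.exp_mul_I, ← Complex.ofReal_cos,
    ← Complex.ofReal_sin]
  simp only [Complex.sub_re, Complex.sub_im, Complex.mul_re, Complex.mul_im, Complex.add_re,
    Complex.add_im, Complex.ofReal_re, Complex.ofReal_im, Complex.I_re, Complex.I_im,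
    Complex.one_re, Complex.one_im]
  linear_combination ρ ^ 2 * Real.sin_sq_add_cos_sq x

lemma Pk_near (ρ x : ℝ) (h1 : 1 / 2 ≤ ρ) (h2 : ρ < 1) (hx : |x| ≤ π) :
    Pk ρ (Complex.exp (x * I)) ≤ 16 * ((1 - ρ) / ((1 - ρ) ^ 2 + x ^ 2)) := by
  rw [Pk, norm_sq_eq]
  have hc := Real.cos_le_one_sub_mul_cos_sq hx
  have hp : 2 / π ^ 2 ≥ 1 / 8 := by
    rw [ge_iff_le, div_le_div_iff₀ (by norm_num) (by positivity)]
    nlinarith [Real.pi_le_four, Real.pi_pos]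
  have h0 : 0 < (1 - ρ) ^ 2 := by nlinarith
  have h3 : x ^ 2 / 8 ≤ 1 - Real.cos x := by nlinarith [sq_nonneg x]
  have h4 : ((1 - ρ) ^ 2 + x ^ 2) / 8 ≤ (1 - ρ) ^ 2 + 2 * ρ * (1 - Real.cos x) := by
    nlinarith [sq_nonneg x]
  calc _ ≤ (2 * (1 - ρ)) / (((1 - ρ) ^ 2 + x ^ 2) / 8) := by
        gcongr
        nlinarith
    _ = _ := by field_simp; ring

lemma Pk_far (ρ x δ : ℝ) (h1 : 1 / 2 ≤ ρ) (h2 : ρ < 1) (hδ : 0 < δ) (hx : δ ≤ |x|)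
    (hx' : |x| ≤ 2 * π - δ) :
    Pk ρ (Complex.exp (x * I)) ≤ 2 * (1 - ρ) / (1 - Real.cos δ) := by
  rw [Pk, norm_sq_eq]
  have hc : Real.cos x ≤ Real.cos δ := by
    rw [← Real.cos_abs x]
    rcases le_total |x| π with h | h
    · exact Real.cos_le_cos_of_nonneg_of_le_pi hδ.le h hx
    · rw [← Real.cos_two_pi_sub |x|]
      exact Real.cos_le_cos_of_nonneg_of_le_pi hδ.le (by linarith) (by linarith)
  have hd : Real.cos δ < 1 := by
    rw [← Real.cos_zero]
    exact Real.cos_lt_cos_of_nonneg_of_le_pi le_rfl (by linarith) hδ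
  have : 0 < 1 - Real.cos δ := by linarith
  gcongr
  · nlinarith
  · nlinarith [sq_nonneg (1 - ρ)]

lemma fatou (N : Measure ℝ) [IsFiniteMeasure N] (hs : N.MutuallySingular volume)
    (hsup : ∀ᵐ φ ∂N, |φ| ≤ π) :
    ∀ᵐ θ : ℝ, |θ| < π → Tendsto (fun ρ : ℝ =>
      ∫⁻ φ, ENNReal.ofReal (Pk ρ (Complex.exp (((θ - φ : ℝ) : ℂ) * I))) ∂N)
      (nhdsWithin 1 (Set.Iio 1)) (nhds 0) := by
  have h0 := (Measure.rnDeriv_eq_zero N volume).2 hs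
  filter_upwards [Besicovitch.ae_tendsto_rnDeriv N volume, h0] with θ hθ h0 hlt
  rw [h0, Pi.zero_apply, ENNReal.tendsto_nhds_zero] at hθ
  rw [ENNReal.tendsto_nhds_zero]
  intro ε' hε'
  obtain ⟨ε, hε, hεε'⟩ : ∃ ε : ENNReal, 0 < ε ∧ 16 * (8 * (2 * ε)) ≤ ε' / 2 := by
    refine ⟨ε' / 2 / 256, ?_, ?_⟩
    · simp [ENNReal.div_pos_iff, hε'.ne']
    · rw [← mul_assoc, ← mul_assoc]
      norm_num
      rw [ENNReal.mul_div_cancel (by norm_num) (by norm_num)]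
  obtain ⟨δ0, hδ0, hb⟩ := mem_nhdsGT_iff_exists_Ioc_subset.1 (hθ ε hε)
  rw [Set.mem_Ioi] at hδ0
  set δ := min δ0 (π - |θ|) with hδdef
  have hδ : 0 < δ := lt_min hδ0 (by linarith)
  have hδπ : δ ≤ π := (min_le_right _ _).trans (by linarith [abs_nonneg θ])
  have hN : ∀ s, 0 < s → s ≤ δ → N (Metric.closedBall θ s) ≤ (2 * ε) * ENNReal.ofReal s := by
    intro s hs hsδ
    have := hb ⟨hs, hsδ.trans (min_le_left _ _)⟩
    simp only [Set.mem_ofPred_eq, Real.volume_closedBall] at this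
    rw [ENNReal.div_le_iff (by simpa using hs) ENNReal.ofReal_ne_top,
      ENNReal.ofReal_mul (by norm_num)] at this
    refine this.trans (le_of_eq ?_)
    rw [ENNReal.ofReal_ofNat]; ring
  have hfar : Tendsto (fun ρ : ℝ => ENNReal.ofReal (2 * (1 - ρ) / (1 - Real.cos δ)) * N Set.univ)
      (nhdsWithin 1 (Set.Iio 1)) (nhds 0) := by
    have h1 : Tendsto (fun ρ : ℝ => 2 * (1 - ρ) / (1 - Real.cos δ)) (nhdsWithin 1 (Set.Iio 1))
        (nhds 0) := by
      have : Continuous (fun ρ : ℝ => 2 * (1 - ρ) / (1 - Real.cos δ)) := by fun_prop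
      have := this.tendsto 1
      simp only [sub_self, mul_zero, zero_div] at this
      exact this.mono_left nhdsWithin_le_nhds
    have h2 := ENNReal.Tendsto.mul_const (ENNReal.tendsto_ofReal h1) (b := N Set.univ)
      (Or.inr (measure_ne_top _ _))
    simpa using h2
  have hfar' := ENNReal.tendsto_nhds_zero.1 hfar (ε' / 2) (by simpa using hε'.ne')
  filter_upwards [hfar', Ioo_mem_nhdsLT (show (1 / 2 : ℝ) < 1 by norm_num)] with ρ hρ1 hρ
  rw [← lintegral_add_compl _ (Metric.isClosed_closedBall (x := θ) (ε := δ)).measurableSet]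
  rw [← ENNReal.add_halves ε']
  refine add_le_add ?_ ?_
  · refine le_trans ?_ hεε'
    refine le_trans ?_ (mul_le_mul_right (near_bound N θ δ (2 * ε) hδ hN (1 - ρ)
      (by linarith [hρ.2])) 16)
    rw [← lintegral_const_mul' _ _ (by norm_num)]
    refine setLIntegral_mono' Metric.isClosed_closedBall.measurableSet fun φ hφ => ?_
    rw [← ENNReal.ofReal_ofNat 16, ← ENNReal.ofReal_mul (by norm_num)]
    refine ENNReal.ofReal_le_ofReal (Pk_near ρ _ hρ.1.le hρ.2 ?_)
    rw [Metric.mem_closedBall, Real.dist_eq, abs_sub_comm] at hφ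
    linarith
  · refine le_trans ?_ hρ1
    refine le_trans ?_ (mul_le_mul_right (measure_mono (Set.subset_univ (Metric.closedBall θ δ)ᶜ)) _)
    rw [← setLIntegral_const]
    refine setLIntegral_mono_ae' Metric.isClosed_closedBall.measurableSet.compl ?_
    filter_upwards [hsup] with φ hφ1 hφ
    refine ENNReal.ofReal_le_ofReal (Pk_far ρ _ δ hρ.1.le hρ.2 hδ ?_ ?_)
    · rw [Set.mem_compl_iff, Metric.mem_closedBall, Real.dist_eq, abs_sub_comm, not_le] at hφ
      exact hφ.le
    · have := abs_sub θ φ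
      have : δ ≤ π - |θ| := min_le_right _ _
      linarith [abs_sub θ φ]

lemma Pk_nonneg (ρ : ℝ) (z : ℂ) (h0 : 0 ≤ ρ) (h1 : ρ < 1) : 0 ≤ Pk ρ z := by
  have : 0 ≤ 1 - ρ ^ 2 := by nlinarith
  rw [Pk]; positivity

lemma Pk_le (ρ : ℝ) (z : ℂ) (h0 : 0 ≤ ρ) (h1 : ρ < 1) (hz : ‖z‖ = 1) :
    Pk ρ z ≤ 1 / (1 - ρ) ^ 2 := by
  have h2 : 1 - ρ ≤ ‖1 - ρ * z‖ := by
    have := norm_sub_norm_le (1 : ℂ) (ρ * z)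
    simpa [hz, abs_of_nonneg h0] using this
  have : 0 < 1 - ρ := by linarith
  rw [Pk]
  gcongr
  nlinarith

lemma measurable_Pk (ρ : ℝ) : Measurable (Pk ρ) := by
  unfold Pk; fun_prop

lemma Pk_hasSum (r : ℝ) (z : ℂ) (h0 : 0 ≤ r) (h1 : r < 1) (hz : ‖z‖ = 1) :
    HasSum (fun n : ℤ => (r : ℂ) ^ n.natAbs * z ^ n) (Pk r z : ℂ) := by
  have hz0 : z ≠ 0 := by rintro rfl; simp at hz
  have e1 : ‖(r : ℂ) * z‖ < 1 := by simpa [hz, abs_of_nonneg h0] using h1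
  have e2 : ‖(r : ℂ) * z⁻¹‖ < 1 := by simpa [hz, abs_of_nonneg h0] using h1
  have s1 := hasSum_geometric_of_norm_lt_one e1
  have s2 := (hasSum_geometric_of_norm_lt_one e2).mul_left ((r : ℂ) * z⁻¹)
  have f1 : (fun n : ℕ => (r : ℂ) ^ (n : ℤ).natAbs * z ^ (n : ℤ)) = fun n => (r * z) ^ n := by
    funext n; simp [mul_pow]
  have f2 : (fun n : ℕ => (r : ℂ) ^ (-((n : ℤ) + 1)).natAbs * z ^ (-((n : ℤ) + 1))) =
      fun n => (r * z⁻¹) * (r * z⁻¹) ^ n := by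
    funext n
    have : (-((n : ℤ) + 1)).natAbs = n + 1 := by omega
    rw [this, ← pow_succ', mul_pow, zpow_neg, inv_pow]
    norm_cast
  rw [← f1] at s1
  rw [← f2] at s2
  have := HasSum.of_nat_of_neg_add_one (f := fun n : ℤ => (r : ℂ) ^ n.natAbs * z ^ n) s1 s2
  convert this using 1
  have n1 : 1 - (r : ℂ) * z ≠ 0 := by
    intro h; rw [sub_eq_zero] at h; rw [← h] at e1; simp at e1
  have n2 : 1 - (r : ℂ) * z⁻¹ ≠ 0 := by
    intro h; rw [sub_eq_zero] at h; rw [← h] at e2; simp at e2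
  have hc : (starRingEnd ℂ) z = z⁻¹ := (Complex.inv_eq_conj hz).symm
  have : ((‖1 - (r : ℂ) * z‖ ^ 2 : ℝ) : ℂ) = (1 - r * z) * (1 - r * z⁻¹) := by
    rw [← Complex.normSq_eq_norm_sq, Complex.normSq_eq_conj_mul_self]
    simp [hc, mul_comm]
  rw [Pk, Complex.ofReal_div, this]
  rw [div_eq_iff (mul_ne_zero n1 n2)]
  have i1 := inv_mul_cancel₀ n1
  have i2 := inv_mul_cancel₀ n2
  have i3 := mul_inv_cancel₀ hz0
  push_cast
  generalize (1 - (r : ℂ) * z)⁻¹ = u at *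
  generalize (1 - (r : ℂ) * z⁻¹)⁻¹ = v at *
  generalize z⁻¹ = y at *
  linear_combination (-(1 - r * y)) * i1 - (r * y * (1 - r * z)) * i2 + r ^ 2 * i3

lemma sum_pow_natAbs (r : ℝ) (h0 : 0 ≤ r) (h1 : r < 1) :
    Summable (fun n : ℤ => r ^ n.natAbs) := by
  have := (Pk_hasSum r 1 h0 h1 (by simp)).summable.norm
  simpa [abs_of_nonneg h0] using this

lemma Pk_mul_tsum (r : ℝ) (z z' : ℂ) (h0 : 0 ≤ r) (h1 : r < 1) (hz : ‖z‖ = 1) (hz' : ‖z'‖ = 1) :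
    ∑' p : ℤ × ℤ, ((r : ℂ) ^ p.1.natAbs * z ^ p.1) * ((r : ℂ) ^ p.2.natAbs * z' ^ p.2)
      = ((Pk r z * Pk r z' : ℝ) : ℂ) := by
  have s1 := Pk_hasSum r z h0 h1 hz
  have s2 := Pk_hasSum r z' h0 h1 hz'
  rw [Complex.ofReal_mul, ← s1.tsum_eq, ← s2.tsum_eq]
  exact (tsum_mul_tsum_of_summable_norm s1.summable.norm s2.summable.norm).symm

lemma key_identity (lam : Measure (ℂ × ℂ)) [IsFiniteMeasure lam]
    (hs : ∀ᵐ w ∂lam, ‖w.1‖ = 1 ∧ ‖w.2‖ = 1)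
    (hf : ∀ m n : ℤ, m ≠ n → ∫ w : ℂ × ℂ, w.1 ^ m * w.2 ^ n ∂lam = 0)
    (r : ℝ) (h0 : 0 ≤ r) (h1 : r < 1) (τ₁ τ₂ : ℂ) (ht1 : ‖τ₁‖ = 1) (ht2 : ‖τ₂‖ = 1) :
    ∫ w, ((Pk r (τ₁ * (starRingEnd ℂ) w.1) * Pk r (τ₂ * (starRingEnd ℂ) w.2) : ℝ) : ℂ) ∂lam =
    ∫ w, ((Pk (r ^ 2) (τ₁ * τ₂ * (starRingEnd ℂ) (w.1 * w.2)) : ℝ) : ℂ) ∂lam := by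
  set F : ℤ × ℤ → ℂ × ℂ → ℂ := fun p w =>
    ((r : ℂ) ^ p.1.natAbs * (τ₁ * (starRingEnd ℂ) w.1) ^ p.1) *
    ((r : ℂ) ^ p.2.natAbs * (τ₂ * (starRingEnd ℂ) w.2) ^ p.2) with hF
  have hFm : ∀ p, Measurable (F p) := by
    intro p
    have hz : ∀ n : ℤ, Measurable (fun z : ℂ => z ^ n) := fun n => by fun_prop
    have hc : Measurable (fun z : ℂ => (starRingEnd ℂ) z) := Complex.continuous_conj.measurable
    have a1 : Measurable (fun w : ℂ × ℂ => (τ₁ * (starRingEnd ℂ) w.1) ^ p.1) :=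
      (hz p.1).comp ((hc.comp measurable_fst).const_mul τ₁)
    have a2 : Measurable (fun w : ℂ × ℂ => (τ₂ * (starRingEnd ℂ) w.2) ^ p.2) :=
      (hz p.2).comp ((hc.comp measurable_snd).const_mul τ₂)
    exact (a1.const_mul _).mul (a2.const_mul _)
  have hFn : ∀ p, ∀ᵐ w ∂lam, ‖F p w‖ = r ^ p.1.natAbs * r ^ p.2.natAbs := by
    intro p
    filter_upwards [hs] with w hw
    simp [hF, ht1, ht2, hw.1, hw.2, abs_of_nonneg h0]
  have hFi : ∀ p, Integrable (F p) lam := fun p =>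
    Integrable.of_bound (hFm p).aestronglyMeasurable _ ((hFn p).mono fun w hw => hw.le)
  have hFs : Summable (fun p => ∫ w, ‖F p w‖ ∂lam) := by
    have : (fun p => ∫ w, ‖F p w‖ ∂lam) =
        fun p : ℤ × ℤ => lam.real Set.univ * (r ^ p.1.natAbs * r ^ p.2.natAbs) := by
      funext p
      rw [integral_congr_ae (hFn p)]; simp
    rw [this]
    exact ((sum_pow_natAbs r h0 h1).mul_of_nonneg (sum_pow_natAbs r h0 h1)
      (fun _ => by positivity) (fun _ => by positivity)).mul_left _
  have A := hasSum_integral_of_summable_integral_norm hFi hFs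
  have B := hasSum_integral_of_summable_integral_norm (F := fun m : ℤ => F (m, m))
    (fun m => hFi _) (hFs.comp_injective (i := fun m : ℤ => (m, m))
      (fun x y h => (Prod.ext_iff.1 h).1))
  have A' : HasSum (fun p => ∫ w, F p w ∂lam) (∫ w, ∑' m : ℤ, F (m, m) w ∂lam) := by
    refine (Function.Injective.hasSum_iff (g := fun m : ℤ => (m, m))
      (fun x y h => (Prod.ext_iff.1 h).1) ?_).1 B
    rintro ⟨m, n⟩ hmn
    have hne : m ≠ n := by
      rintro rfl; exact hmn ⟨m, rfl⟩
    have : ∀ᵐ w ∂lam, F (m, n) w = ((r : ℂ) ^ m.natAbs * τ₁ ^ m * ((r : ℂ) ^ n.natAbs * τ₂ ^ n)) *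
        (w.1 ^ (-m) * w.2 ^ (-n)) := by
      filter_upwards [hs] with w hw
      simp only [hF]
      rw [← Complex.inv_eq_conj hw.1, ← Complex.inv_eq_conj hw.2, mul_zpow, mul_zpow, inv_zpow',
        inv_zpow']
      ring
    rw [integral_congr_ae this, integral_const_mul, hf _ _ (by simpa using hne), mul_zero]
  have E := A.unique A'
  have L : ∀ᵐ w ∂lam, ((Pk r (τ₁ * (starRingEnd ℂ) w.1) * Pk r (τ₂ * (starRingEnd ℂ) w.2) : ℝ) : ℂ)
      = ∑' p, F p w := by
    filter_upwards [hs] with w hw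
    have n1 : ‖τ₁ * (starRingEnd ℂ) w.1‖ = 1 := by simp [ht1, hw.1]
    have n2 : ‖τ₂ * (starRingEnd ℂ) w.2‖ = 1 := by simp [ht2, hw.2]
    exact (Pk_mul_tsum r _ _ h0 h1 n1 n2).symm
  have R : ∀ᵐ w ∂lam, ((Pk (r ^ 2) (τ₁ * τ₂ * (starRingEnd ℂ) (w.1 * w.2)) : ℝ) : ℂ)
      = ∑' m : ℤ, F (m, m) w := by
    filter_upwards [hs] with w hw
    have n1 : ‖τ₁ * τ₂ * (starRingEnd ℂ) (w.1 * w.2)‖ = 1 := by simp [ht1, hw.1, ht2, hw.2]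
    rw [← (Pk_hasSum (r ^ 2) _ (by positivity) (by nlinarith) n1).tsum_eq]
    congr 1 with m
    simp only [hF, map_mul, mul_zpow, Complex.ofReal_pow]
    ring
  rw [integral_congr_ae L, integral_congr_ae R, E]

lemma key_lintegral (lam : Measure (ℂ × ℂ)) [IsFiniteMeasure lam]
    (hs : ∀ᵐ w ∂lam, ‖w.1‖ = 1 ∧ ‖w.2‖ = 1)
    (hf : ∀ m n : ℤ, m ≠ n → ∫ w : ℂ × ℂ, w.1 ^ m * w.2 ^ n ∂lam = 0)
    (r : ℝ) (h0 : 0 ≤ r) (h1 : r < 1) (τ₁ τ₂ : ℂ) (ht1 : ‖τ₁‖ = 1) (ht2 : ‖τ₂‖ = 1) :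
    ∫⁻ w, ENNReal.ofReal (Pk r (τ₁ * (starRingEnd ℂ) w.1) * Pk r (τ₂ * (starRingEnd ℂ) w.2)) ∂lam =
    ∫⁻ w, ENNReal.ofReal (Pk (r ^ 2) (τ₁ * τ₂ * (starRingEnd ℂ) (w.1 * w.2))) ∂lam := by
  have K := key_identity lam hs hf r h0 h1 τ₁ τ₂ ht1 ht2
  rw [integral_complex_ofReal, integral_complex_ofReal, Complex.ofReal_inj] at K
  have hc : Measurable (fun z : ℂ => (starRingEnd ℂ) z) := Complex.continuous_conj.measurable
  have hr2 : r ^ 2 < 1 := by nlinarith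
  have p1 := fun z => Pk_nonneg r z h0 h1
  have p2 := fun z => Pk_nonneg (r ^ 2) z (by positivity) hr2
  rw [← ofReal_integral_eq_lintegral_ofReal, ← ofReal_integral_eq_lintegral_ofReal, K]
  · refine Integrable.of_bound (C := 1 / (1 - r ^ 2) ^ 2) ?_ ?_
    · exact ((measurable_Pk _).comp
        ((hc.comp (measurable_fst.mul measurable_snd)).const_mul _)).aestronglyMeasurable
    · filter_upwards [hs] with w hw
      rw [Real.norm_of_nonneg (p2 _)]
      exact Pk_le _ _ (by positivity) hr2 (by simp [ht1, hw.1, ht2, hw.2])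
  · exact ae_of_all _ fun w => p2 _
  · refine Integrable.of_bound (C := 1 / (1 - r) ^ 2 * (1 / (1 - r) ^ 2)) ?_ ?_
    · exact (((measurable_Pk _).comp ((hc.comp measurable_fst).const_mul _)).mul
        ((measurable_Pk _).comp ((hc.comp measurable_snd).const_mul _))).aestronglyMeasurable
    · filter_upwards [hs] with w hw
      rw [Real.norm_of_nonneg (mul_nonneg (p1 _) (p1 _))]
      exact mul_le_mul (Pk_le _ _ h0 h1 (by simp [ht1, hw.1]))
        (Pk_le _ _ h0 h1 (by simp [ht2, hw.2])) (p1 _) (by positivity)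
  · exact ae_of_all _ fun w => mul_nonneg (p1 _) (p1 _)

lemma fatou_all (N : Measure ℝ) [IsFiniteMeasure N] (hs : N.MutuallySingular volume)
    (hsup : ∀ᵐ φ ∂N, |φ| ≤ π) :
    ∀ᵐ θ : ℝ, Tendsto (fun ρ : ℝ =>
      ∫⁻ φ, ENNReal.ofReal (Pk ρ (Complex.exp (((θ - φ : ℝ) : ℂ) * I))) ∂N)
      (nhdsWithin 1 (Set.Iio 1)) (nhds 0) := by
  have h1 := fatou N hs hsup
  have h2 : ∀ᵐ θ : ℝ, ∀ n : ℤ, |θ + n * (2 * π)| < π → Tendsto (fun ρ : ℝ =>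
      ∫⁻ φ, ENNReal.ofReal (Pk ρ (Complex.exp (((θ + n * (2 * π) - φ : ℝ) : ℂ) * I))) ∂N)
      (nhdsWithin 1 (Set.Iio 1)) (nhds 0) := by
    rw [ae_all_iff]
    intro n
    exact (measurePreserving_add_right volume ((n : ℝ) * (2 * π))).quasiMeasurePreserving.ae h1
  have h3 : ∀ᵐ θ : ℝ, θ ∉ Set.range (fun n : ℤ => π - n * (2 * π)) := by
    exact measure_eq_zero_iff_ae_notMem.1 ((Set.countable_range (fun n : ℤ => π - n * (2 * π))).measure_zero volume)
  filter_upwards [h2, h3] with θ h2 h3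
  have hm := toIocMod_mem_Ioc Real.two_pi_pos (-π) θ
  set n := -toIocDiv Real.two_pi_pos (-π) θ with hn
  have he : toIocMod Real.two_pi_pos (-π) θ = θ + n * (2 * π) := by
    rw [toIocMod, hn, zsmul_eq_mul]; push_cast; ring
  rw [he] at hm
  have hlt : |θ + n * (2 * π)| < π := by
    rw [abs_lt]
    refine ⟨hm.1, lt_of_le_of_ne (by linarith [hm.2]) fun h => h3 ⟨n, ?_⟩⟩
    simp only; linarith
  have := h2 n hlt
  convert this using 6 with ρ φ
  rw [Complex.exp_eq_exp_iff_exists_int]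
  exact ⟨-n, by push_cast; ring⟩

/-- If `(a_k)` is a summable sequence of nonnegative reals, the `λ_k` are the Rudin
singular measures on `T²` (with Fourier coefficients `λ̂_k(m,n) = 1` iff `m = n` and
`k ∣ m`), and `0 ≤ μ ≤ ∑_k a_k λ_k`, then the radial Poisson extension of `μ` tends
to `0` at almost every point of the Kronecker line
`L = {(e^{-it log 2}, e^{-it log 3}) : t ∈ ℝ}` with respect to linear measure on `L`. -/
theorem poisson_limit_zero_on_kronecker_line
    (a : ℕ → ℝ) (ha : ∀ k, 0 ≤ a k) (hsum : Summable a)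
    (lam : ℕ → Measure (ℂ × ℂ))
    (hprob : ∀ k, 1 ≤ k → IsProbabilityMeasure (lam k))
    (hsupp : ∀ k, 1 ≤ k →
      lam k {w : ℂ × ℂ | ¬ (‖w.1‖ = 1 ∧ ‖w.2‖ = 1 ∧ (w.1 * w.2) ^ k = 1)} = 0)
    (hfour : ∀ k, 1 ≤ k → ∀ m n : ℤ,
      (∫ w : ℂ × ℂ, w.1 ^ m * w.2 ^ n ∂(lam k)) =
        if m = n ∧ (k : ℤ) ∣ m then 1 else 0)
    (μ : Measure (ℂ × ℂ))
    (hμ : μ ≤ Measure.sum (fun k : ℕ => ENNReal.ofReal (a (k + 1)) • lam (k + 1))) :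
    ∀ᵐ t : ℝ ∂volume,
      Tendsto (fun r : ℝ =>
          ∫ w, (1 - r ^ 2) ^ 2 /
            (‖1 - r * (Complex.exp (-(t * Real.log 2) * I) * (starRingEnd ℂ) w.1)‖ ^ 2 *
              ‖1 - r * (Complex.exp (-(t * Real.log 3) * I) * (starRingEnd ℂ) w.2)‖ ^ 2) ∂μ)
        (nhdsWithin 1 (Set.Iio 1)) (nhds 0) := by
  set Λ := Measure.sum (fun k : ℕ => ENNReal.ofReal (a (k + 1)) • lam (k + 1)) with hΛ
  have hfin : IsFiniteMeasure Λ := by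
    refine ⟨?_⟩
    rw [hΛ, Measure.sum_apply _ MeasurableSet.univ]
    have : ∀ k, (ENNReal.ofReal (a (k + 1)) • lam (k + 1)) Set.univ = ENNReal.ofReal (a (k + 1)) := by
      intro k
      have := hprob (k + 1) (by omega)
      simp
    simp_rw [this]
    exact ((summable_nat_add_iff 1).2 hsum).tsum_ofReal_lt_top
  have hk : ∀ k, ∀ᵐ w ∂(lam (k + 1)), ‖w.1‖ = 1 ∧ ‖w.2‖ = 1 ∧ (w.1 * w.2) ^ (k + 1) = 1 :=
    fun k => ae_iff.2 (hsupp (k + 1) (by omega))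
  have hae : ∀ᵐ w ∂Λ, ‖w.1‖ = 1 ∧ ‖w.2‖ = 1 ∧ ∃ k : ℕ, (w.1 * w.2) ^ (k + 1) = 1 := by
    rw [hΛ, ae_iff]
    refine Measure.sum_apply_eq_zero.2 fun k => ?_
    rw [Measure.smul_apply, smul_eq_mul]
    have : lam (k + 1) {w | ¬ (‖w.1‖ = 1 ∧ ‖w.2‖ = 1 ∧ ∃ k : ℕ, (w.1 * w.2) ^ (k + 1) = 1)} = 0 := by
      rw [← ae_iff]
      filter_upwards [hk k] with w hw
      exact ⟨hw.1, hw.2.1, k, hw.2.2⟩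
    rw [this, mul_zero]
  have hg : Measurable (fun w : ℂ × ℂ => Complex.arg (w.1 * w.2)) :=
    Complex.measurable_arg.comp (measurable_fst.mul measurable_snd)
  set N : Measure ℝ := Λ.map (fun w => Complex.arg (w.1 * w.2)) with hN
  have hNs : N.MutuallySingular volume := by
    set S : Set ℝ := ⋃ k : ℕ, Complex.arg '' {z : ℂ | z ^ (k + 1) = 1}
    have hS : S.Countable := by
      refine Set.countable_iUnion fun k => Set.Countable.image (Set.Finite.countable ?_) _
      refine ((Polynomial.nthRoots (k + 1) (1 : ℂ)).toFinset.finite_toSet).subset fun z hz => ?_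
      simpa [Polynomial.mem_nthRoots] using hz
    refine ⟨Sᶜ, hS.measurableSet.compl, ?_, ?_⟩
    · rw [hN, Measure.map_apply hg hS.measurableSet.compl, ← compl_compl (_ ⁻¹' _)]
      rw [← mem_ae_iff]
      filter_upwards [hae] with w hw
      obtain ⟨_, _, k, hw⟩ := hw
      simp only [Set.preimage_compl, compl_compl, Set.mem_preimage]
      exact Set.mem_iUnion.2 ⟨k, _, hw, rfl⟩
    · rw [compl_compl]; exact hS.measure_zero volume
  have hNsup : ∀ᵐ φ ∂N, |φ| ≤ π := by
    rw [hN, ae_map_iff hg.aemeasurable (measurableSet_le (by fun_prop) (by fun_prop))]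
    exact ae_of_all _ fun w => Complex.abs_arg_le_pi _
  have H := fatou_all N hNs hNsup
  have hc : -(Real.log 2 + Real.log 3) ≠ 0 := by
    have := Real.log_pos (show (1 : ℝ) < 2 by norm_num)
    have := Real.log_pos (show (1 : ℝ) < 3 by norm_num)
    linarith
  have hq : Measure.QuasiMeasurePreserving (fun t : ℝ => -(Real.log 2 + Real.log 3) * t) := by
    refine ⟨by fun_prop, ?_⟩
    rw [Real.map_volume_mul_left hc]
    exact Measure.smul_absolutelyContinuous
  filter_upwards [hq.ae H] with t ht
  have hsq : Tendsto (fun r : ℝ => r ^ 2) (nhdsWithin 1 (Set.Iio 1)) (nhdsWithin 1 (Set.Iio 1)) := by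
    refine tendsto_nhdsWithin_iff.2 ⟨?_, ?_⟩
    · have : Continuous (fun r : ℝ => r ^ 2) := by fun_prop
      have := this.tendsto 1
      rw [one_pow] at this
      exact this.mono_left nhdsWithin_le_nhds
    · filter_upwards [Ioo_mem_nhdsLT (show (0 : ℝ) < 1 by norm_num)] with r hr
      rw [Set.mem_Iio]; nlinarith [hr.1, hr.2]
  have ht2 := ht.comp hsq
  rw [tendsto_zero_iff_enorm_tendsto_zero]
  refine tendsto_of_tendsto_of_tendsto_of_le_of_le' tendsto_const_nhds ht2
    (Eventually.of_forall fun _ => zero_le) ?_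
  filter_upwards [Ioo_mem_nhdsLT (show (0 : ℝ) < 1 by norm_num)] with r hr
  refine (enorm_integral_le_lintegral_enorm _).trans ?_
  refine (lintegral_mono' hμ le_rfl).trans (le_of_eq ?_)
  set τ₁ := Complex.exp (-(t * Real.log 2) * I) with hτ₁
  set τ₂ := Complex.exp (-(t * Real.log 3) * I) with hτ₂
  have n1 : ‖τ₁‖ = 1 := by
    have := Complex.norm_exp_ofReal_mul_I (-(t * Real.log 2))
    rw [hτ₁, ← this]; push_cast; rfl
  have n2 : ‖τ₂‖ = 1 := by
    have := Complex.norm_exp_ofReal_mul_I (-(t * Real.log 3))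
    rw [hτ₂, ← this]; push_cast; rfl
  have e1 : ∀ w : ℂ × ℂ, ‖(1 - r ^ 2) ^ 2 / (‖1 - r * (τ₁ * (starRingEnd ℂ) w.1)‖ ^ 2 *
      ‖1 - r * (τ₂ * (starRingEnd ℂ) w.2)‖ ^ 2)‖ₑ =
      ENNReal.ofReal (Pk r (τ₁ * (starRingEnd ℂ) w.1) * Pk r (τ₂ * (starRingEnd ℂ) w.2)) := by
    intro w
    rw [Real.enorm_of_nonneg (by positivity), Pk, Pk, div_mul_div_comm, sq (1 - r ^ 2)]
  simp_rw [e1]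
  have e2 : ∫⁻ w, ENNReal.ofReal (Pk r (τ₁ * (starRingEnd ℂ) w.1) *
      Pk r (τ₂ * (starRingEnd ℂ) w.2)) ∂Λ =
      ∫⁻ w, ENNReal.ofReal (Pk (r ^ 2) (τ₁ * τ₂ * (starRingEnd ℂ) (w.1 * w.2))) ∂Λ := by
    rw [hΛ, lintegral_sum_measure, lintegral_sum_measure]
    congr 1 with k
    rw [lintegral_smul_measure, lintegral_smul_measure]
    have := hprob (k + 1) (by omega)
    rw [key_lintegral (lam (k + 1)) ((hk k).mono fun w hw => ⟨hw.1, hw.2.1⟩) ?_ r hr.1.le hr.2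
      τ₁ τ₂ n1 n2]
    intro m n hmn
    rw [hfour (k + 1) (by omega), if_neg (fun h => hmn h.1)]
  rw [e2]
  simp only [Function.comp]
  rw [hN, lintegral_map _ hg]
  · refine lintegral_congr_ae ?_
    filter_upwards [hae] with w hw
    have hn : ‖w.1 * w.2‖ = 1 := by rw [norm_mul, hw.1, hw.2.1, mul_one]
    have hw' : (starRingEnd ℂ) (w.1 * w.2) = Complex.exp (-(Complex.arg (w.1 * w.2) * I)) := by
      rw [← Complex.inv_eq_conj hn, Complex.exp_neg]
      congr 1
      have := Complex.norm_mul_exp_arg_mul_I (w.1 * w.2)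
      rw [hn] at this
      simpa using this.symm
    rw [hw', hτ₁, hτ₂, ← Complex.exp_add, ← Complex.exp_add]
    congr 4
    push_cast
    ring
  · exact ((measurable_Pk _).comp (by fun_prop)).ennreal_ofReal
end

section
/- There exists a bounded analytic function f on the right half-plane Re s > 0, represented by an ordinary Dirichlet series in some half-plane, such that the limit lim_{T→∞} (1/T) ∫_0^T |f(it)|² dt does not exist, where f(it) denotes the almost-everywhere nontangential boundary value. -/
open MeasureTheory Filter Complex Real

namespace HinfMean

lemma exists_poly (ε : ℝ) (hε : 0 < ε) :
    ∃ C : Polynomial ℂ, (∀ w : ℂ, ‖w‖ ≤ 1 → ‖C.eval w‖ ^ 2 ≤ (C.eval w).re) ∧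
      ‖1 - C.eval 1‖ ≤ ε ∧ (C.eval 0).re ≤ ε := by
  obtain ⟨δ, hδ0, hδ1, hδε⟩ : ∃ δ : ℝ, 0 < δ ∧ δ ≤ 1 / 2 ∧ 2 * δ ≤ ε :=
    ⟨min (1 / 2) (ε / 2), by positivity, min_le_left _ _, by
      have := min_le_right (1 / 2) (ε / 2); linarith⟩
  set r : ℝ := 1 - δ with hr
  have hr0 : 0 < r := by linarith
  have hr1 : r < 1 := by linarith
  obtain ⟨K, hK⟩ := exists_pow_lt_of_lt_one (show 0 < δ ^ 2 / 5 by positivity) hr1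
  set q : ℝ := r ^ K with hq
  have hq0 : 0 < q := by positivity
  have hq1 : q ≤ 1 := pow_le_one₀ hr0.le hr1.le
  have hK0 : K ≠ 0 := by
    rintro rfl
    simp only [hq, pow_zero] at hK
    nlinarith
  let C : Polynomial ℂ := Polynomial.C ((r * δ : ℝ) : ℂ) *
    ∑ m ∈ Finset.range K, (Polynomial.C (r : ℂ) * Polynomial.X) ^ m
  have hC : ∀ w : ℂ, C.eval w = ((r * δ : ℝ) : ℂ) * ∑ m ∈ Finset.range K, ((r : ℂ) * w) ^ m := by
    intro w
    simp [C, Polynomial.eval_finsetSum]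
  have hCu : ∀ w : ℂ, C.eval w * (1 - r * w) = ((r * δ : ℝ) : ℂ) * (1 - (r * w) ^ K) := by
    intro w
    rw [hC, mul_assoc, geom_sum_mul_neg]
  refine ⟨C, ?_, ?_, ?_⟩
  · intro w hw
    set u : ℂ := 1 - r * w with hu
    set E : ℂ := (r * w) ^ K with hE
    have hEn : ‖E‖ ≤ q := by
      rw [hE, norm_pow, norm_mul, Complex.norm_real, Real.norm_of_nonneg hr0.le, mul_pow]
      calc r ^ K * ‖w‖ ^ K ≤ r ^ K * 1 := by
            gcongr; exact pow_le_one₀ (norm_nonneg _) hw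
        _ = q := by simp [hq]
    have hrew : w.re ≤ 1 := (Complex.re_le_norm w).trans hw
    have hure : δ ≤ u.re := by
      simp [hu]
      nlinarith
    have hun : ‖u‖ ≤ 2 := by
      calc ‖u‖ ≤ ‖(1:ℂ)‖ + ‖(r:ℂ) * w‖ := norm_sub_le _ _
        _ ≤ 1 + 1 := by
          rw [norm_one, norm_mul, Complex.norm_real, Real.norm_of_nonneg hr0.le]
          have := norm_nonneg w
          nlinarith
        _ = 2 := by norm_num
    have hu0 : 0 < ‖u‖ := lt_of_lt_of_le hδ0 (hure.trans (Complex.re_le_norm u))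
    have h := hCu w
    rw [← hu, ← hE] at h
    set c := C.eval w with hc
    -- multiply by |u|^2
    have h1 : ‖c‖ * ‖u‖ = r * δ * ‖1 - E‖ := by
      rw [← norm_mul, h, norm_mul, Complex.norm_real, Real.norm_of_nonneg (by positivity)]
    have h2 : c.re * ‖u‖ ^ 2 = r * δ * ((1 - E) * (starRingEnd ℂ) u).re := by
      have : c * ((‖u‖ ^ 2 : ℝ) : ℂ) = ((r * δ : ℝ) : ℂ) * ((1 - E) * (starRingEnd ℂ) u) := by
        rw [← mul_assoc, ← h, mul_assoc, Complex.mul_conj, Complex.normSq_eq_norm_sq]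
      have := congrArg Complex.re this
      rwa [Complex.re_mul_ofReal, Complex.re_ofReal_mul] at this
    have h3 : u.re - q * 2 ≤ ((1 - E) * (starRingEnd ℂ) u).re := by
      have : ((1 - E) * (starRingEnd ℂ) u).re = u.re - (E * (starRingEnd ℂ) u).re := by
        rw [sub_mul, one_mul, Complex.sub_re, Complex.conj_re]
      rw [this]
      have : (E * (starRingEnd ℂ) u).re ≤ q * 2 := by
        refine (Complex.re_le_norm _).trans ?_
        rw [norm_mul, Complex.norm_conj]
        gcongr
      linarith
    have h4 : ‖1 - E‖ ≤ 1 + q := by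
      calc ‖1 - E‖ ≤ ‖(1:ℂ)‖ + ‖E‖ := norm_sub_le _ _
        _ ≤ 1 + q := by rw [norm_one]; linarith
    have h5 : ‖1 - E‖ ^ 2 ≤ 1 + 3 * q := by
      have := norm_nonneg (1 - E)
      nlinarith
    have h6 : r * δ * ‖1 - E‖ ^ 2 ≤ ((1 - E) * (starRingEnd ℂ) u).re := by
      have : r * δ * ‖1 - E‖ ^ 2 ≤ r * δ * (1 + 3 * q) := by gcongr
      have h7 : r * δ ≤ 1 := by nlinarith
      have h8 : r * δ * q ≤ q := by nlinarith
      have : r * δ = δ - δ ^ 2 := by rw [hr]; ring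
      nlinarith
    have h7 : ‖c‖ ^ 2 * ‖u‖ ^ 2 ≤ c.re * ‖u‖ ^ 2 := by
      rw [h2, ← mul_pow, h1]
      have : 0 < r * δ := by positivity
      calc (r * δ * ‖1 - E‖) ^ 2 = r * δ * (r * δ * ‖1 - E‖ ^ 2) := by ring
        _ ≤ _ := by gcongr
    exact le_of_mul_le_mul_right h7 (by positivity)
  · have h := hCu 1
    have hδc : (1 - (r:ℂ) * 1) = (δ : ℂ) := by rw [hr]; push_cast; ring
    rw [hδc] at h
    have hδn : (δ : ℂ) ≠ 0 := by exact_mod_cast hδ0.ne'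
    have h1 : C.eval 1 = ((r * (1 - q) : ℝ) : ℂ) := by
      apply mul_right_cancel₀ hδn
      rw [h, hq]; push_cast; ring
    rw [h1, ← Complex.ofReal_one, ← Complex.ofReal_sub, Complex.norm_real, Real.norm_eq_abs,
      abs_le]
    constructor <;> nlinarith
  · rw [hC]
    have : ∑ m ∈ Finset.range K, ((r : ℂ) * 0) ^ m = 1 := by
      obtain ⟨k, rfl⟩ := Nat.exists_eq_succ_of_ne_zero hK0
      simp [Finset.sum_range_succ']
    rw [this, mul_one, Complex.ofReal_re]
    nlinarith

/-- slow variable -/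
noncomputable def lam (N : ℕ) : ℝ := Real.log (1 + 1 / (N : ℝ))
noncomputable def W (N : ℕ) (s : ℂ) : ℂ := Complex.exp (-(lam N : ℂ) * s)
noncomputable def X (N : ℕ) (s : ℂ) : ℂ := Complex.exp (-(Real.log N : ℂ) * s)

lemma lam_pos {N : ℕ} (hN : 1 ≤ N) : 0 < lam N := by
  apply Real.log_pos
  have : (0:ℝ) < N := by exact_mod_cast hN
  have : 0 < 1 / (N:ℝ) := by positivity
  linarith

lemma lam_le {N : ℕ} (hN : 1 ≤ N) : lam N ≤ 1 / N := by
  have : (0:ℝ) < N := by exact_mod_cast hN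
  have h := Real.log_le_sub_one_of_pos (show 0 < 1 + 1 / (N:ℝ) by positivity)
  unfold lam
  linarith

lemma norm_W {N : ℕ} (s : ℂ) : ‖W N s‖ = Real.exp (-(lam N) * s.re) := by
  rw [W, Complex.norm_exp, ← Complex.ofReal_neg, Complex.re_ofReal_mul]

lemma norm_W_le {N : ℕ} (hN : 1 ≤ N) {s : ℂ} (hs : 0 ≤ s.re) : ‖W N s‖ ≤ 1 := by
  rw [norm_W, Real.exp_le_one_iff]
  have := lam_pos hN
  nlinarith

lemma norm_X {N : ℕ} (s : ℂ) : ‖X N s‖ = Real.exp (-(Real.log N) * s.re) := by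
  rw [X, Complex.norm_exp, ← Complex.ofReal_neg, Complex.re_ofReal_mul]

lemma norm_X_le {N : ℕ} {s : ℂ} (hs : 0 ≤ s.re) : ‖X N s‖ ≤ 1 := by
  rw [norm_X, Real.exp_le_one_iff]
  have : 0 ≤ Real.log N := Real.log_natCast_nonneg N
  nlinarith

lemma frozen (P : Polynomial ℂ) (η R : ℝ) (h : ‖1 - P.eval 1‖ < η) :
    ∃ N0 : ℕ, ∀ N ≥ N0, 1 ≤ N → ∀ s : ℂ, ‖s‖ ≤ R → ‖1 - P.eval (W N s)‖ ≤ η := by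
  have hc : ContinuousAt (fun w : ℂ => ‖1 - P.eval w‖) 1 := by
    apply Continuous.continuousAt
    have := P.continuous
    fun_prop
  have hev : ∀ᶠ w in nhds (1:ℂ), ‖1 - P.eval w‖ < η := hc.eventually_lt continuousAt_const h
  obtain ⟨d, hd, hball⟩ := Metric.eventually_nhds_iff.1 hev
  obtain ⟨N0, hN0⟩ := exists_nat_gt (max (|R|) (2 * |R| / d))
  refine ⟨N0, fun N hN hN1 s hs => (hball ?_).le⟩
  have hNpos : (0:ℝ) < N := by exact_mod_cast hN1
  have hNge : (N0:ℝ) ≤ N := by exact_mod_cast hN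
  have h1 : |R| < N := lt_of_le_of_lt (le_max_left _ _) (lt_of_lt_of_le hN0 hNge)
  have h2 : 2 * |R| / d < N := lt_of_le_of_lt (le_max_right _ _) (lt_of_lt_of_le hN0 hNge)
  have hsR : ‖s‖ ≤ |R| := hs.trans (le_abs_self _)
  have hz : ‖-(lam N : ℂ) * s‖ ≤ |R| / N := by
    rw [norm_mul, norm_neg, Complex.norm_real, Real.norm_of_nonneg (lam_pos hN1).le]
    calc lam N * ‖s‖ ≤ (1 / N) * |R| := by
          gcongr
          exact lam_le hN1
      _ = |R| / N := by ring
  have hz1 : ‖-(lam N : ℂ) * s‖ ≤ 1 := hz.trans (by rw [div_le_one hNpos]; exact h1.le)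
  rw [dist_eq_norm, W]
  refine (Complex.norm_exp_sub_one_le hz1).trans_lt ?_
  calc 2 * ‖-(lam N : ℂ) * s‖ ≤ 2 * (|R| / N) := by gcongr
    _ < d := by
      rw [div_lt_iff₀ hd] at h2
      rw [← mul_div_assoc, div_lt_iff₀ hNpos]
      linarith

lemma continuous_W (N : ℕ) : Continuous (W N) := by unfold W; fun_prop
lemma continuous_X (N : ℕ) : Continuous (X N) := by unfold X; fun_prop

lemma mean_aux {N : ℕ} (hN : 1 ≤ N) (P : Polynomial ℂ) :
    ∃ D : ℝ, ∀ T : ℝ, 0 ≤ T →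
      ‖(∫ t in (0:ℝ)..T, P.eval (W N (t * I))) - P.eval 0 * T‖ ≤ D := by
  have hcont : ∀ P : Polynomial ℂ, Continuous fun t : ℝ => P.eval (W N (t * I)) := by
    intro P
    have := P.continuous
    have := continuous_W N
    fun_prop
  induction P using Polynomial.induction_on' with
  | add p q hp hq =>
    obtain ⟨D1, h1⟩ := hp
    obtain ⟨D2, h2⟩ := hq
    refine ⟨D1 + D2, fun T hT => ?_⟩
    simp only [Polynomial.eval_add]
    rw [intervalIntegral.integral_add ((hcont p).intervalIntegrable _ _)
      ((hcont q).intervalIntegrable _ _), add_mul, add_sub_add_comm]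
    exact (norm_add_le _ _).trans (add_le_add (h1 T hT) (h2 T hT))
  | monomial n a =>
    rcases Nat.eq_zero_or_pos n with rfl | hn
    · refine ⟨0, fun T hT => ?_⟩
      simp [mul_comm]
    · have hl := lam_pos hN
      set c : ℂ := -(lam N : ℂ) * n * I with hc
      have hc0 : c ≠ 0 := by
        have : (lam N : ℂ) ≠ 0 := by exact_mod_cast hl.ne'
        have : (n : ℂ) ≠ 0 := by exact_mod_cast hn.ne'
        simp [*]
      refine ⟨‖a‖ * (2 / ‖c‖), fun T hT => ?_⟩
      have h1 : ∀ t : ℝ, (Polynomial.monomial n a).eval (W N (t * I)) = a * Complex.exp (c * t) := by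
        intro t
        rw [Polynomial.eval_monomial, W, ← Complex.exp_nat_mul]
        congr 2
        rw [hc]; ring
      simp only [h1]
      rw [intervalIntegral.integral_const_mul, integral_exp_mul_complex hc0]
      have h0 : (Polynomial.monomial n a).eval 0 = 0 := by
        simp [Polynomial.eval_monomial, hn.ne']
      rw [h0, zero_mul, sub_zero, norm_mul, norm_div]
      gcongr
      refine (norm_sub_le _ _).trans ?_
      have h2 : ∀ t : ℝ, ‖Complex.exp (c * t)‖ = 1 := by
        intro t
        rw [Complex.norm_exp]
        simp [hc]
      rw [h2, h2]; norm_num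

lemma mean_le {N : ℕ} (hN : 1 ≤ N) (P : Polynomial ℂ) (ε : ℝ) (hε : 0 < ε)
    (hP : (P.eval 0).re ≤ ε) :
    ∃ τ : ℝ, ∀ T : ℝ, τ ≤ T → 0 ≤ T →
      ∫ t in (0:ℝ)..T, (P.eval (W N (t * I))).re ≤ 2 * ε * T := by
  obtain ⟨D, hD⟩ := mean_aux hN P
  refine ⟨D / ε, fun T hT hT0 => ?_⟩
  have hcont : Continuous fun t : ℝ => P.eval (W N (t * I)) := by
    have := P.continuous
    have := continuous_W N
    fun_prop
  have h1 : ∫ t in (0:ℝ)..T, (P.eval (W N (t * I))).re =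
      (∫ t in (0:ℝ)..T, P.eval (W N (t * I))).re := by
    have := Complex.reCLM.intervalIntegral_comp_comm (hcont.intervalIntegrable 0 T (μ := volume))
    simpa using this
  rw [h1]
  have h2 := (Complex.re_le_norm _).trans (hD T hT0)
  rw [Complex.sub_re, Complex.re_mul_ofReal] at h2
  rw [div_le_iff₀ hε] at hT
  nlinarith

/-- `g` is a Dirichlet polynomial with coefficient sum at most `L` and frequencies at least `M`. -/
def DP (L : ℝ) (M : ℕ) (g : ℂ → ℂ) : Prop :=
  ∃ (ι : Type) (_ : Fintype ι) (c : ι → ℂ) (n : ι → ℕ), (∀ i, M ≤ n i) ∧ (∑ i, ‖c i‖ ≤ L) ∧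
    ∀ s, g s = ∑ i, c i * (n i : ℂ) ^ (-s)

lemma DP.mono {L L' : ℝ} {M M' : ℕ} {g : ℂ → ℂ} (h : DP L M g) (hL : L ≤ L') (hM : M' ≤ M) :
    DP L' M' g := by
  obtain ⟨ι, hι, c, n, h1, h2, h3⟩ := h
  exact ⟨ι, hι, c, n, fun i => hM.trans (h1 i), h2.trans hL, h3⟩

lemma DP.zero {L : ℝ} (hL : 0 ≤ L) (M : ℕ) : DP L M (fun _ => 0) :=
  ⟨Empty, inferInstance, fun _ => 0, fun _ => 0, fun i => i.elim, by simpa using hL, by simp⟩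

lemma DP.one : DP 1 1 (fun _ => 1) :=
  ⟨Unit, inferInstance, fun _ => 1, fun _ => 1, fun _ => le_rfl, by simp, by simp⟩

lemma DP.mul {L L' : ℝ} {M M' : ℕ} {g g' : ℂ → ℂ} (h : DP L M g) (h' : DP L' M' g') :
    DP (L * L') (M * M') (fun s => g s * g' s) := by
  obtain ⟨ι, hι, c, n, h1, h2, h3⟩ := h
  obtain ⟨ι', hι', c', n', h1', h2', h3'⟩ := h'
  refine ⟨ι × ι', inferInstance, fun p => c p.1 * c' p.2, fun p => n p.1 * n' p.2,
    fun p => Nat.mul_le_mul (h1 _) (h1' _), ?_, ?_⟩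
  · rw [Fintype.sum_prod_type]
    simp only [norm_mul]
    rw [← Fintype.sum_mul_sum]
    have hA : 0 ≤ ∑ i, ‖c i‖ := Finset.sum_nonneg fun _ _ => norm_nonneg _
    have hB : 0 ≤ ∑ i, ‖c' i‖ := Finset.sum_nonneg fun _ _ => norm_nonneg _
    exact mul_le_mul h2 h2' hB (hA.trans h2)
  · intro s
    beta_reduce
    rw [h3, h3', Fintype.sum_mul_sum, Fintype.sum_prod_type]
    refine Finset.sum_congr rfl fun i _ => Finset.sum_congr rfl fun j _ => ?_
    push_cast
    rw [Complex.natCast_mul_natCast_cpow]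
    ring

lemma DP.prod {L : ℕ → ℝ} {g : ℕ → ℂ → ℂ} (h : ∀ i, DP (L i) 1 (g i)) (n : ℕ) :
    DP (∏ i ∈ Finset.range n, L i) 1 (fun s => ∏ i ∈ Finset.range n, g i s) := by
  induction n with
  | zero => simpa using DP.one
  | succ n ih =>
    simp only [Finset.prod_range_succ]
    exact ih.mul (h n)

lemma X_eq {N : ℕ} (hN : 1 ≤ N) (s : ℂ) : X N s = (N : ℂ) ^ (-s) := by
  have : (N : ℂ) ≠ 0 := by exact_mod_cast (by omega : N ≠ 0)
  rw [Complex.cpow_def_of_ne_zero this, X, Complex.natCast_log]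
  congr 1; ring

lemma XW_eq {N : ℕ} (hN : 1 ≤ N) (s : ℂ) : X N s * W N s = X (N + 1) s := by
  have h0 : (0:ℝ) < N := by exact_mod_cast hN
  have : Real.log ((N + 1 : ℕ) : ℝ) = Real.log N + lam N := by
    rw [lam, ← Real.log_mul h0.ne' (by positivity)]
    congr 1
    push_cast
    field_simp
  rw [X, X, W, ← Complex.exp_add, this]
  congr 1
  push_cast
  ring

lemma natCast_pow_cpow (N m : ℕ) (s : ℂ) : ((N ^ m : ℕ) : ℂ) ^ s = ((N : ℂ) ^ s) ^ m := by
  induction m with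
  | zero => simp
  | succ m ih => rw [pow_succ, pow_succ, Nat.cast_mul, Complex.natCast_mul_natCast_cpow, ih]

noncomputable def Hm (N : ℕ) (P : Polynomial ℂ) (d : ℕ) (s : ℂ) : ℂ :=
  X N s ^ d * P.eval (W N s)

lemma DP_Hm {N : ℕ} (hN : 1 ≤ N) (P : Polynomial ℂ) (d : ℕ) (hd : P.natDegree < d) :
    DP (∑ m ∈ Finset.range d, ‖P.coeff m‖) N (Hm N P d) := by
  refine ⟨Fin d, inferInstance, fun m => P.coeff m, fun m => N ^ (d - m) * (N + 1) ^ (m : ℕ),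
    ?_, ?_, ?_⟩
  · intro m
    have h1 : N ≤ N ^ (d - m) := Nat.le_self_pow (by omega) N
    have h2 : 1 ≤ (N + 1) ^ (m : ℕ) := Nat.one_le_pow _ _ (by omega)
    nlinarith
  · rw [Finset.sum_range]
  · intro s
    rw [Hm, Polynomial.eval_eq_sum_range' hd, Finset.sum_range, Finset.mul_sum]
    refine Finset.sum_congr rfl fun m _ => ?_
    rw [Nat.cast_mul, Complex.natCast_mul_natCast_cpow, natCast_pow_cpow, natCast_pow_cpow,
      ← X_eq hN, ← X_eq (by omega : 1 ≤ N + 1), ← XW_eq hN, mul_pow]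
    have : X N s ^ d = X N s ^ (d - m) * X N s ^ (m : ℕ) := by
      rw [← pow_add]; congr 1; omega
    rw [this]; ring

lemma collect (g : ℕ → ℂ → ℂ) (L : ℕ → ℝ) (M : ℕ → ℕ) (h : ∀ j, DP (L j) (M j) (g j))
    (hM : ∀ j, 1 ≤ M j) (hL : ∀ j, L j ≤ M j * (1 / 2 : ℝ) ^ j) :
    ∃ a : ℕ → ℂ, ∀ s : ℂ, 1 < s.re →
      HasSum (fun n : ℕ => a (n + 1) * ((n + 1 : ℕ) : ℂ) ^ (-s)) (∑' j, g j s) := by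
  choose ι hι c n hn hc hg using h
  let e : (Σ j, ι j) → ℕ := fun k => n k.1 k.2 - 1
  have he : ∀ k : (Σ j, ι j), n k.1 k.2 = e k + 1 := by
    intro k
    have h1 := hM k.1
    have h2 := hn k.1 k.2
    simp only [e]
    omega
  refine ⟨fun m => ∑' k : {k : (Σ j, ι j) // e k = m - 1}, c k.1.1 k.1.2, fun s hs => ?_⟩
  let F : (Σ j, ι j) → ℂ := fun k => c k.1 k.2 * (n k.1 k.2 : ℂ) ^ (-s)
  have hFn : ∀ j (i : ι j), ‖F ⟨j, i⟩‖ ≤ ‖c j i‖ * (1 / (M j : ℝ)) := by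
    intro j i
    simp only [F, norm_mul]
    have h0 : 1 ≤ n j i := (hM j).trans (hn j i)
    have hM0 : (0:ℝ) < M j := by exact_mod_cast hM j
    have hMn : (M j : ℝ) ≤ n j i := by exact_mod_cast hn j i
    have h1 : (1:ℝ) ≤ n j i := by exact_mod_cast h0
    gcongr
    rw [Complex.norm_natCast_cpow_of_pos (by omega)]
    calc (n j i : ℝ) ^ (-s).re ≤ (n j i : ℝ) ^ (-1 : ℝ) :=
          Real.rpow_le_rpow_of_exponent_le h1 (by simp; linarith)
      _ = 1 / (n j i : ℝ) := by rw [Real.rpow_neg_one, one_div]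
      _ ≤ 1 / (M j : ℝ) := by gcongr
  have hFs : Summable F := by
    apply Summable.of_norm
    rw [summable_sigma_of_nonneg (fun _ => norm_nonneg _)]
    refine ⟨fun j => (hasSum_fintype _).summable, ?_⟩
    refine Summable.of_nonneg_of_le (fun j => tsum_nonneg fun _ => norm_nonneg _) (fun j => ?_)
      (summable_geometric_of_lt_one (by norm_num : (0:ℝ) ≤ 1 / 2) (by norm_num))
    rw [tsum_fintype]
    have hM0 : (0:ℝ) < M j := by exact_mod_cast hM j
    calc ∑ i, ‖F ⟨j, i⟩‖ ≤ ∑ i, ‖c j i‖ * (1 / (M j : ℝ)) := Finset.sum_le_sum fun i _ => hFn j i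
      _ = (∑ i, ‖c j i‖) * (1 / (M j : ℝ)) := by rw [Finset.sum_mul]
      _ ≤ (M j * (1 / 2 : ℝ) ^ j) * (1 / (M j : ℝ)) := by
        gcongr
        exact (hc j).trans (hL j)
      _ = (1 / 2 : ℝ) ^ j := by field_simp
  have hsum : ∑' k, F k = ∑' j, g j s := by
    rw [hFs.tsum_sigma]
    refine tsum_congr fun j => ?_
    rw [tsum_fintype, hg]
  have hF := hFs.hasSum
  rw [hsum] at hF
  have hF2 := (Equiv.sigmaFiberEquiv e).hasSum_iff.2 hF
  have hs2 := hF2.summable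
  refine hF2.sigma fun m => ?_
  have hfib := (hs2.sigma_factor m).hasSum
  have heq : (∑' k : {k : (Σ j, ι j) // e k = m}, c k.1.1 k.1.2) * ((m + 1 : ℕ) : ℂ) ^ (-s) =
      ∑' k : {k : (Σ j, ι j) // e k = m}, (F ∘ (Equiv.sigmaFiberEquiv e)) ⟨m, k⟩ := by
    rw [← tsum_mul_right]
    refine tsum_congr fun k => ?_
    have h1 := he k.1
    rw [k.2] at h1
    simp only [Function.comp, Equiv.sigmaFiberEquiv, Equiv.coe_fn_mk, F]
    rw [h1]
  rw [← heq] at hfib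
  exact hfib

lemma seq_bound (p q : ℕ → ℝ) (hq : ∀ i, 0 ≤ q i) (hpq : ∀ i, p i + q i ≤ 1) (m n : ℕ) :
    ∑ k ∈ Finset.range n, p (k + m) * ∏ i ∈ Finset.range (k + m), q i
      + ∏ i ∈ Finset.range (n + m), q i ≤ ∏ i ∈ Finset.range m, q i := by
  induction n with
  | zero => simp
  | succ n ih =>
    have h : n + 1 + m = n + m + 1 := by ring
    rw [Finset.sum_range_succ, h, Finset.prod_range_succ]
    have h0 : 0 ≤ ∏ i ∈ Finset.range (n + m), q i := Finset.prod_nonneg fun i _ => hq i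
    have := hpq (n + m)
    nlinarith

/-- weights -/
noncomputable def wt (C : ℕ → Polynomial ℂ) (i : ℕ) : ℝ :=
  (1 + ∑ m ∈ Finset.range ((C i).natDegree + 1), ‖(C i).coeff m‖
    + ∑ m ∈ Finset.range ((C i).natDegree + 1), ‖(1 - C i).coeff m‖) ^ 2

noncomputable def phi (C : ℕ → Polynomial ℂ) (N : ℕ → ℕ) (i : ℕ) (s : ℂ) : ℂ :=
  Hm (N i) (C i) ((C i).natDegree + 1) s * Hm (N i) (C i) ((C i).natDegree + 1) s

noncomputable def al (C : ℕ → Polynomial ℂ) (N : ℕ → ℕ) (i : ℕ) (s : ℂ) : ℂ :=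
  Hm (N i) (1 - C i) ((C i).natDegree + 1) s * Hm (N i) (1 - C i) ((C i).natDegree + 1) s

noncomputable def term (C : ℕ → Polynomial ℂ) (N : ℕ → ℕ) (j : ℕ) (s : ℂ) : ℂ :=
  if Even j then (∏ i ∈ Finset.range j, al C N i s) * phi C N j s else 0

noncomputable def F (C : ℕ → Polynomial ℂ) (N : ℕ → ℕ) (s : ℂ) : ℂ := ∑' j, term C N j s

lemma wt_one_le (C : ℕ → Polynomial ℂ) (i : ℕ) : 1 ≤ wt C i := by
  unfold wt
  apply one_le_pow₀
  have h1 : 0 ≤ ∑ m ∈ Finset.range ((C i).natDegree + 1), ‖(C i).coeff m‖ :=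
    Finset.sum_nonneg fun _ _ => norm_nonneg _
  have h2 : 0 ≤ ∑ m ∈ Finset.range ((C i).natDegree + 1), ‖(1 - C i).coeff m‖ :=
    Finset.sum_nonneg fun _ _ => norm_nonneg _
  linarith

lemma DP_phi (C : ℕ → Polynomial ℂ) (N : ℕ → ℕ) (i : ℕ) (hN : 1 ≤ N i) :
    DP (wt C i) (N i) (phi C N i) := by
  have h := DP_Hm hN (C i) ((C i).natDegree + 1) (by omega)
  refine (h.mul h).mono ?_ (by nlinarith)
  have h1 : 0 ≤ ∑ m ∈ Finset.range ((C i).natDegree + 1), ‖(C i).coeff m‖ :=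
    Finset.sum_nonneg fun _ _ => norm_nonneg _
  have h2 : 0 ≤ ∑ m ∈ Finset.range ((C i).natDegree + 1), ‖(1 - C i).coeff m‖ :=
    Finset.sum_nonneg fun _ _ => norm_nonneg _
  unfold wt
  nlinarith

lemma DP_al (C : ℕ → Polynomial ℂ) (N : ℕ → ℕ) (i : ℕ) (hN : 1 ≤ N i) :
    DP (wt C i) 1 (al C N i) := by
  have hdeg : (1 - C i).natDegree < (C i).natDegree + 1 := by
    have := Polynomial.natDegree_sub_le (1 : Polynomial ℂ) (C i)
    simp at this
    omega
  have h := DP_Hm hN (1 - C i) ((C i).natDegree + 1) hdeg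
  refine (h.mul h).mono ?_ (by nlinarith)
  have h1 : 0 ≤ ∑ m ∈ Finset.range ((C i).natDegree + 1), ‖(C i).coeff m‖ :=
    Finset.sum_nonneg fun _ _ => norm_nonneg _
  have h2 : 0 ≤ ∑ m ∈ Finset.range ((C i).natDegree + 1), ‖(1 - C i).coeff m‖ :=
    Finset.sum_nonneg fun _ _ => norm_nonneg _
  unfold wt
  nlinarith

lemma DP_term (C : ℕ → Polynomial ℂ) (N : ℕ → ℕ) (hN : ∀ i, 1 ≤ N i) (j : ℕ) :
    DP (∏ i ∈ Finset.range (j + 1), wt C i) (N j) (term C N j) := by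
  by_cases hj : Even j
  · have : term C N j = fun s => (∏ i ∈ Finset.range j, al C N i s) * phi C N j s := by
      funext s; simp [term, hj]
    rw [this, Finset.prod_range_succ]
    have := (DP.prod (fun i => DP_al C N i (hN i)) j).mul (DP_phi C N j (hN j))
    rwa [one_mul] at this
  · have : term C N j = fun s => 0 := by
      funext s; simp [term, hj]
    rw [this]
    exact DP.zero (Finset.prod_nonneg fun i _ => by have := wt_one_le C i; linarith) _

lemma exists_choice : ∃ (C : ℕ → Polynomial ℂ) (N : ℕ → ℕ) (U : ℕ → ℝ),
    (∀ i w, ‖w‖ ≤ 1 → ‖(C i).eval w‖ ^ 2 ≤ ((C i).eval w).re) ∧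
    (∀ i, 1 ≤ N i) ∧
    (∀ i, 2 ^ i * ∏ k ∈ Finset.range (i + 1), wt C k ≤ N i) ∧
    (∀ i : ℕ, (i : ℝ) ≤ U i) ∧
    (∀ i s, ‖s‖ ≤ U i → ‖1 - (C i).eval (W (N i) s)‖ ≤ 1 / 20) ∧
    (∀ i j, i < j → ∫ t in (0:ℝ)..U j, ((C i).eval (W (N i) (t * I))).re ≤
      2 * (1 / 200 * (1 / 2) ^ i) * U j) := by
  have hε : ∀ i : ℕ, (0:ℝ) < 1 / 200 * (1 / 2) ^ i := fun i => by positivity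
  choose C hC1 hC2 hC3 using fun i : ℕ => exists_poly (1 / 200 * (1 / 2) ^ i) (hε i)
  have hν : ∀ (i : ℕ) (R : ℝ), ∃ n : ℕ, 1 ≤ n ∧
      2 ^ i * ∏ k ∈ Finset.range (i + 1), wt C k ≤ n ∧
      ∀ s, ‖s‖ ≤ R → ‖1 - (C i).eval (W n s)‖ ≤ 1 / 20 := by
    intro i R
    have hlt : ‖1 - (C i).eval 1‖ < 1 / 20 := by
      refine (hC2 i).trans_lt ?_
      have : ((1:ℝ) / 2) ^ i ≤ 1 := pow_le_one₀ (by norm_num) (by norm_num)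
      linarith
    obtain ⟨N0, hN0⟩ := frozen (C i) (1 / 20) R hlt
    obtain ⟨N1, hN1⟩ := exists_nat_ge (2 ^ i * ∏ k ∈ Finset.range (i + 1), wt C k)
    refine ⟨N0 + N1 + 1, by omega, ?_, hN0 _ (by omega) (by omega)⟩
    push_cast
    have : (0:ℝ) ≤ N0 := by positivity
    linarith
  choose ν hν1 hν2 hν3 using hν
  have hτ : ∀ (i n : ℕ), ∃ τ : ℝ, 1 ≤ n → ∀ T : ℝ, τ ≤ T → 0 ≤ T →
      ∫ t in (0:ℝ)..T, ((C i).eval (W n (t * I))).re ≤ 2 * (1 / 200 * (1 / 2) ^ i) * T := by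
    intro i n
    by_cases hn : 1 ≤ n
    · obtain ⟨τ, h⟩ := mean_le hn (C i) _ (hε i) (hC3 i)
      exact ⟨τ, fun _ => h⟩
    · exact ⟨0, fun h => absurd h hn⟩
  choose τ hτ using hτ
  let U : ℕ → ℝ := fun i => Nat.rec 0 (fun i u => max (u + 1) (τ i (ν i u))) i
  have hU1 : ∀ i, U (i + 1) = max (U i + 1) (τ i (ν i (U i))) := fun i => rfl
  have hmono : Monotone U := monotone_nat_of_le_succ fun i => by
    rw [hU1]; exact le_max_of_le_left (by linarith)
  have hUi : ∀ i : ℕ, (i : ℝ) ≤ U i := by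
    intro i
    induction i with
    | zero => simp [U]
    | succ i ih => rw [hU1]; push_cast; exact le_max_of_le_left (by linarith)
  refine ⟨C, fun i => ν i (U i), U, hC1, fun i => hν1 _ _, fun i => hν2 _ _, hUi,
    fun i s hs => hν3 i _ s hs, fun i j hij => ?_⟩
  refine hτ i _ (hν1 _ _) _ ?_ ((Nat.cast_nonneg j).trans (hUi j))
  refine le_trans ?_ (hmono (show i + 1 ≤ j from hij))
  rw [hU1]; exact le_max_right _ _

section Main

variable {C : ℕ → Polynomial ℂ} {N : ℕ → ℕ}
  (hC : ∀ i w, ‖w‖ ≤ 1 → ‖(C i).eval w‖ ^ 2 ≤ ((C i).eval w).re) (hN : ∀ i, 1 ≤ N i)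

lemma norm_phi (i : ℕ) (s : ℂ) : ‖phi C N i s‖ =
    (‖X (N i) s‖ ^ ((C i).natDegree + 1)) ^ 2 * ‖(C i).eval (W (N i) s)‖ ^ 2 := by
  simp only [phi, Hm, norm_mul, norm_pow]; ring

lemma norm_al (i : ℕ) (s : ℂ) : ‖al C N i s‖ =
    (‖X (N i) s‖ ^ ((C i).natDegree + 1)) ^ 2 * ‖1 - (C i).eval (W (N i) s)‖ ^ 2 := by
  simp only [al, Hm, norm_mul, norm_pow, Polynomial.eval_sub, Polynomial.eval_one]; ring

lemma norm_one_sub_sq (z : ℂ) : ‖1 - z‖ ^ 2 = 1 - 2 * z.re + ‖z‖ ^ 2 := by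
  rw [← Complex.normSq_eq_norm_sq, ← Complex.normSq_eq_norm_sq, Complex.normSq_apply,
    Complex.normSq_apply]
  simp
  ring

include hC hN

lemma phi_add_al (i : ℕ) {s : ℂ} (hs : 0 ≤ s.re) : ‖phi C N i s‖ + ‖al C N i s‖ ≤ 1 := by
  rw [norm_phi, norm_al, norm_one_sub_sq]
  have h1 := hC i _ (norm_W_le (hN i) hs)
  have h2 : (‖X (N i) s‖ ^ ((C i).natDegree + 1)) ^ 2 ≤ 1 :=
    pow_le_one₀ (by positivity) (pow_le_one₀ (norm_nonneg _) (norm_X_le hs))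
  have h3 : 0 ≤ (‖X (N i) s‖ ^ ((C i).natDegree + 1)) ^ 2 := by positivity
  nlinarith

lemma al_le (i : ℕ) {s : ℂ} (hs : 0 ≤ s.re) : ‖al C N i s‖ ≤ 1 := by
  have := phi_add_al hC hN i hs
  have := norm_nonneg (phi C N i s)
  linarith

lemma phi_le (i : ℕ) {s : ℂ} (hs : 0 ≤ s.re) : ‖phi C N i s‖ ≤ ‖X (N i) s‖ := by
  rw [norm_phi]
  have h1 := hC i _ (norm_W_le (hN i) hs)
  have hx := norm_X_le (N := N i) hs
  have hx0 := norm_nonneg (X (N i) s)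
  have h2 : ‖(C i).eval (W (N i) s)‖ ^ 2 ≤ 1 := by
    have := Complex.re_le_norm ((C i).eval (W (N i) s))
    have h0 := norm_nonneg ((C i).eval (W (N i) s))
    nlinarith
  have h3 : (‖X (N i) s‖ ^ ((C i).natDegree + 1)) ^ 2 ≤ ‖X (N i) s‖ := by
    rw [← pow_mul]
    exact pow_le_of_le_one hx0 hx (by omega)
  calc _ ≤ ‖X (N i) s‖ * 1 := by gcongr
    _ = _ := mul_one _

lemma norm_term_le (j : ℕ) (s : ℂ) : ‖term C N j s‖ ≤
    ‖phi C N j s‖ * ∏ i ∈ Finset.range j, ‖al C N i s‖ := by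
  unfold term
  split_ifs
  · rw [norm_mul, norm_prod, mul_comm]
  · rw [norm_zero]
    exact mul_nonneg (norm_nonneg _) (Finset.prod_nonneg fun _ _ => norm_nonneg _)

lemma prod_al_le (j : ℕ) {s : ℂ} (hs : 0 ≤ s.re) : ∏ i ∈ Finset.range j, ‖al C N i s‖ ≤ 1 :=
  Finset.prod_le_one (fun _ _ => norm_nonneg _) fun i _ => al_le hC hN i hs

lemma term_le_phi (j : ℕ) {s : ℂ} (hs : 0 ≤ s.re) : ‖term C N j s‖ ≤ ‖phi C N j s‖ := by
  refine (norm_term_le hC hN j s).trans ?_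
  have := prod_al_le hC hN j hs
  have := norm_nonneg (phi C N j s)
  nlinarith

lemma tail_sum_le (m n : ℕ) {s : ℂ} (hs : 0 ≤ s.re) :
    ∑ k ∈ Finset.range n, ‖term C N (k + m) s‖ ≤ ∏ i ∈ Finset.range m, ‖al C N i s‖ := by
  have h := seq_bound (fun i => ‖phi C N i s‖) (fun i => ‖al C N i s‖) (fun _ => norm_nonneg _)
    (fun i => phi_add_al hC hN i hs) m n
  have h0 : 0 ≤ ∏ i ∈ Finset.range (n + m), ‖al C N i s‖ :=
    Finset.prod_nonneg fun _ _ => norm_nonneg _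
  have h1 : ∑ k ∈ Finset.range n, ‖term C N (k + m) s‖ ≤
    ∑ k ∈ Finset.range n, ‖phi C N (k + m) s‖ * ∏ i ∈ Finset.range (k + m), ‖al C N i s‖ :=
    Finset.sum_le_sum fun k _ => norm_term_le hC hN _ s
  linarith

lemma summable_norm_term (m : ℕ) {s : ℂ} (hs : 0 ≤ s.re) :
    Summable fun k => ‖term C N (k + m) s‖ :=
  summable_of_sum_range_le (fun _ => norm_nonneg _) fun n => tail_sum_le hC hN m n hs

lemma norm_tail_le (m : ℕ) {s : ℂ} (hs : 0 ≤ s.re) :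
    ‖∑' k, term C N (k + m) s‖ ≤ ∏ i ∈ Finset.range m, ‖al C N i s‖ :=
  (norm_tsum_le_tsum_norm (summable_norm_term hC hN m hs)).trans
    ((summable_norm_term hC hN m hs).tsum_le_of_sum_range_le fun n => tail_sum_le hC hN m n hs)

lemma norm_F_le {s : ℂ} (hs : 0 ≤ s.re) : ‖F C N s‖ ≤ 1 := by
  simpa [F] using norm_tail_le hC hN 0 hs

omit hC hN in
lemma differentiable_term (j : ℕ) : Differentiable ℂ (term C N j) := by
  have hH : ∀ n P d, Differentiable ℂ (Hm n P d) := by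
    intro n P d
    have : Differentiable ℂ fun z => P.eval z := P.differentiable
    unfold Hm X W
    fun_prop
  have hp : ∀ i, Differentiable ℂ (phi C N i) := fun i => by
    unfold phi; exact (hH _ _ _).mul (hH _ _ _)
  have ha : ∀ i, Differentiable ℂ (al C N i) := fun i => by
    unfold al; exact (hH _ _ _).mul (hH _ _ _)
  unfold term
  by_cases hj : Even j
  · simp only [hj, if_true]
    exact (Differentiable.fun_finsetProd fun i _ => ha i).mul (hp j)
  · simp only [hj, if_false]
    exact differentiable_const _

lemma differentiableOn_F (hN2 : ∀ i, (2:ℝ) ^ i ≤ N i) :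
    DifferentiableOn ℂ (F C N) {s : ℂ | 0 < s.re} := by
  intro s hs
  have hs : 0 < s.re := hs
  obtain ⟨δ, hδ0, hδs⟩ := exists_between hs
  have hopen : IsOpen {z : ℂ | δ < z.re} := isOpen_lt continuous_const Complex.continuous_re
  have hr1 : Real.exp (-Real.log 2 * δ) < 1 := by
    rw [Real.exp_lt_one_iff]
    have := Real.log_pos (by norm_num : (1:ℝ) < 2)
    nlinarith
  have hd : DifferentiableOn ℂ (F C N) {z : ℂ | δ < z.re} := by
    refine differentiableOn_tsum_of_summable_norm
      (summable_geometric_of_lt_one (Real.exp_pos _).le hr1)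
      (fun j => (differentiable_term j).differentiableOn) hopen ?_
    intro j z hz
    have hz : δ < z.re := hz
    have hz0 : 0 ≤ z.re := by linarith
    refine (term_le_phi hC hN j hz0).trans ((phi_le hC hN j hz0).trans ?_)
    rw [norm_X, ← Real.exp_nat_mul, Real.exp_le_exp]
    have h1 : j * Real.log 2 ≤ Real.log (N j) := by
      rw [← Real.log_pow]
      exact Real.log_le_log (by positivity) (hN2 j)
    have h2 : 0 ≤ j * Real.log 2 := by positivity
    nlinarith
  exact ((hd.differentiableAt (hopen.mem_nhds hδs))).differentiableWithinAt

variable {U : ℕ → ℝ} (hU : ∀ i : ℕ, (i : ℝ) ≤ U i)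
  (hfr : ∀ i s, ‖s‖ ≤ U i → ‖1 - (C i).eval (W (N i) s)‖ ≤ 1 / 20)

include hfr in
lemma al_frozen (i : ℕ) {s : ℂ} (hs : 0 ≤ s.re) (hsU : ‖s‖ ≤ U i) : ‖al C N i s‖ ≤ 1 / 400 := by
  rw [norm_al]
  have h2 : (‖X (N i) s‖ ^ ((C i).natDegree + 1)) ^ 2 ≤ 1 :=
    pow_le_one₀ (by positivity) (pow_le_one₀ (norm_nonneg _) (norm_X_le hs))
  calc _ ≤ 1 * (1 / 20 : ℝ) ^ 2 := by gcongr; exact hfr i s hsU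
    _ = 1 / 400 := by norm_num

include hU hfr in
lemma continuousOn_F : ContinuousOn (F C N) {s : ℂ | 0 ≤ s.re} := by
  intro s hs
  obtain ⟨m, hm⟩ := exists_nat_gt (‖s‖)
  have hopen : IsOpen {z : ℂ | ‖z‖ < m} := isOpen_lt continuous_norm continuous_const
  have hc : ContinuousOn (F C N) ({z : ℂ | 0 ≤ z.re} ∩ {z : ℂ | ‖z‖ < m}) := by
    have hsum : Summable fun j : ℕ => (2:ℝ) ^ m * (1 / 2 : ℝ) ^ j :=
      (summable_geometric_of_lt_one (by norm_num) (by norm_num)).mul_left _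
    refine continuousOn_tsum (fun j => (differentiable_term j).continuous.continuousOn) hsum ?_
    rintro j z ⟨hz0, hzm⟩
    have hz0 : 0 ≤ z.re := hz0
    have hzm : ‖z‖ < m := hzm
    have hp1 : ‖phi C N j z‖ ≤ 1 := (phi_le hC hN j hz0).trans (norm_X_le hz0)
    have hprod : ∏ i ∈ Finset.range j, ‖al C N i z‖ ≤ (2:ℝ) ^ m * (1 / 2 : ℝ) ^ j := by
      clear hp1
      induction j with
      | zero => simpa using one_le_pow₀ (by norm_num : (1:ℝ) ≤ 2)
      | succ j ih =>
        have h0 : 0 ≤ ∏ i ∈ Finset.range j, ‖al C N i z‖ :=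
          Finset.prod_nonneg fun _ _ => norm_nonneg _
        by_cases hj : m ≤ j
        · have hz : ‖z‖ ≤ U j := by
            have : (m:ℝ) ≤ j := by exact_mod_cast hj
            linarith [hU j]
          have h1 := al_frozen hC hN hfr j hz0 hz
          rw [Finset.prod_range_succ, pow_succ]
          calc _ ≤ ((2:ℝ) ^ m * (1 / 2 : ℝ) ^ j) * (1 / 2) := by
                gcongr; linarith
            _ = _ := by ring
        · refine (prod_al_le hC hN _ hz0).trans ?_
          have hle : j + 1 ≤ m := by omega
          calc (1:ℝ) = 2 ^ (j + 1) * (1 / 2) ^ (j + 1) := by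
                rw [← mul_pow]; norm_num
            _ ≤ 2 ^ m * (1 / 2) ^ (j + 1) := by
                gcongr
                norm_num
    refine (norm_term_le hC hN j z).trans ?_
    have h0 : 0 ≤ ∏ i ∈ Finset.range j, ‖al C N i z‖ :=
      Finset.prod_nonneg fun _ _ => norm_nonneg _
    nlinarith
  have := hc s ⟨hs, hm⟩
  exact (continuousWithinAt_inter (hopen.mem_nhds hm)).1 this

/-- error function -/
noncomputable def er (C : ℕ → Polynomial ℂ) (N : ℕ → ℕ) (i : ℕ) (t : ℝ) : ℝ :=
  ((C i).eval (W (N i) (t * I))).re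

omit hC hN in
lemma norm_X_I (i : ℕ) (t : ℝ) : ‖X (N i) (t * I)‖ = 1 := by
  rw [norm_X]; simp

lemma phi_er (i : ℕ) (t : ℝ) : ‖phi C N i (t * I)‖ ≤ er C N i t := by
  rw [norm_phi, norm_X_I, one_pow, one_pow, one_mul]
  exact hC i _ (norm_W_le (hN i) (by simp))

lemma al_er (i : ℕ) (t : ℝ) : 1 - 2 * er C N i t ≤ ‖al C N i (t * I)‖ := by
  rw [norm_al, norm_X_I, one_pow, one_pow, one_mul, norm_one_sub_sq, er]
  nlinarith [sq_nonneg ‖(C i).eval (W (N i) (t * I))‖]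

lemma er_nonneg (i : ℕ) (t : ℝ) : 0 ≤ er C N i t :=
  (norm_nonneg _).trans (phi_er hC hN i t)

lemma F_split (j : ℕ) {s : ℂ} (hs : 0 ≤ s.re) : F C N s =
    ∑ k ∈ Finset.range j, term C N k s + term C N j s + ∑' k, term C N (k + (j + 1)) s := by
  have h : Summable fun k => term C N k s :=
    (summable_norm_term hC hN 0 hs).of_norm
  rw [F, ← h.sum_add_tsum_nat_add (j + 1), Finset.sum_range_succ]

lemma first_le (j : ℕ) (t : ℝ) :
    ‖∑ k ∈ Finset.range j, term C N k (t * I)‖ ≤ ∑ k ∈ Finset.range j, er C N k t := by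
  refine (norm_sum_le _ _).trans (Finset.sum_le_sum fun k _ => ?_)
  exact (term_le_phi hC hN k (by simp)).trans (phi_er hC hN k t)

include hfr in
lemma last_le (j : ℕ) (t : ℝ) (ht : |t| ≤ U j) :
    ‖∑' k, term C N (k + (j + 1)) (t * I)‖ ≤ 1 / 400 := by
  have hs : 0 ≤ ((t:ℂ) * I).re := by simp
  refine (norm_tail_le hC hN (j + 1) hs).trans ?_
  rw [Finset.prod_range_succ]
  have h1 := prod_al_le hC hN j hs
  have h2 := al_frozen hC hN hfr j hs (by simpa using ht)
  have h3 := norm_nonneg (al C N j (t * I))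
  nlinarith

include hfr in
lemma low (j : ℕ) (hj : ¬ Even j) (t : ℝ) (ht : |t| ≤ U j) :
    ‖F C N (t * I)‖ ^ 2 ≤ 1 / 400 + ∑ k ∈ Finset.range j, er C N k t := by
  have hs : 0 ≤ ((t:ℂ) * I).re := by simp
  have h1 : ‖F C N (t * I)‖ ≤ 1 / 400 + ∑ k ∈ Finset.range j, er C N k t := by
    rw [F_split hC hN j hs]
    have h0 : term C N j (t * I) = 0 := by simp [term, hj]
    rw [h0, add_zero]
    refine (norm_add_le _ _).trans ?_
    linarith [first_le hC hN j t, last_le hC hN hfr j t ht]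
  have h2 := norm_F_le hC hN hs
  have h3 := norm_nonneg (F C N (t * I))
  nlinarith

lemma prod_ge (j : ℕ) (t : ℝ) :
    1 - 2 * ∑ k ∈ Finset.range j, er C N k t ≤ ∏ i ∈ Finset.range j, ‖al C N i (t * I)‖ := by
  induction j with
  | zero => simp
  | succ j ih =>
    rw [Finset.sum_range_succ, Finset.prod_range_succ]
    have h1 := al_er hC hN j t
    have hs : 0 ≤ ((t:ℂ) * I).re := by simp
    have h2 := al_le hC hN j hs
    have h3 := prod_al_le hC hN j hs
    have h4 := norm_nonneg (al C N j (t * I))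
    have h5 : 0 ≤ ∏ i ∈ Finset.range j, ‖al C N i (t * I)‖ :=
      Finset.prod_nonneg fun _ _ => norm_nonneg _
    nlinarith

include hfr in
lemma high (j : ℕ) (hj : Even j) (t : ℝ) (ht : |t| ≤ U j) :
    3 / 4 - 6 * ∑ k ∈ Finset.range j, er C N k t ≤ ‖F C N (t * I)‖ ^ 2 := by
  have hs : 0 ≤ ((t:ℂ) * I).re := by simp
  have h1 := first_le hC hN j t
  have h2 := last_le hC hN hfr j t ht
  have hphi : 9 / 10 ≤ ‖phi C N j (t * I)‖ := by
    rw [norm_phi, norm_X_I, one_pow, one_pow, one_mul]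
    have h := hfr j (t * I) (by simpa using ht)
    have h' : 1 - ‖(C j).eval (W (N j) (t * I))‖ ≤ ‖1 - (C j).eval (W (N j) (t * I))‖ := by
      simpa using norm_sub_norm_le (1:ℂ) ((C j).eval (W (N j) (t * I)))
    nlinarith
  have hS : 0 ≤ ∑ k ∈ Finset.range j, er C N k t :=
    Finset.sum_nonneg fun k _ => er_nonneg hC hN k t
  have hphi1 : ‖phi C N j (t * I)‖ ≤ 1 := (phi_le hC hN j hs).trans (norm_X_le hs)
  have hterm : 9 / 10 - 2 * ∑ k ∈ Finset.range j, er C N k t ≤ ‖term C N j (t * I)‖ := by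
    have : ‖term C N j (t * I)‖ =
        (∏ i ∈ Finset.range j, ‖al C N i (t * I)‖) * ‖phi C N j (t * I)‖ := by
      simp [term, hj]
    rw [this]
    have hp := prod_ge hC hN j t
    nlinarith [norm_nonneg (phi C N j (t * I)), prod_al_le hC hN j hs]
  have hF : ‖term C N j (t * I)‖ ≤ ‖F C N (t * I)‖ +
      ‖∑ k ∈ Finset.range j, term C N k (t * I)‖ + ‖∑' k, term C N (k + (j + 1)) (t * I)‖ := by
    have he : term C N j (t * I) = F C N (t * I) - ∑ k ∈ Finset.range j, term C N k (t * I)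
        - ∑' k, term C N (k + (j + 1)) (t * I) := by
      rw [F_split hC hN j hs]; ring
    conv_lhs => rw [he]
    exact (norm_sub_le _ _).trans (by gcongr; exact norm_sub_le _ _)
  nlinarith [sq_nonneg (‖F C N (t * I)‖ - 1)]

end Main

end HinfMean

open HinfMean in
theorem exists_Hinfty_mean_square_limit_fails :
    ∃ (f : ℂ → ℂ) (a : ℕ → ℂ) (σ₀ : ℝ) (fb : ℝ → ℂ),
      DifferentiableOn ℂ f {s : ℂ | 0 < s.re} ∧
      (∃ C : ℝ, ∀ s : ℂ, 0 < s.re → ‖f s‖ ≤ C) ∧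
      (∀ s : ℂ, σ₀ < s.re →
        HasSum (fun n : ℕ => a (n + 1) * ((n + 1 : ℕ) : ℂ) ^ (-s)) (f s)) ∧
      (∀ᵐ t : ℝ ∂volume,
        Tendsto (fun σ : ℝ => f (σ + t * I)) (nhdsWithin 0 (Set.Ioi 0)) (nhds (fb t))) ∧
      ¬ ∃ l : ℝ,
        Tendsto (fun T : ℝ => (1 / T) * ∫ t in (0:ℝ)..T, ‖fb t‖ ^ 2) atTop (nhds l) := by
  obtain ⟨C, N, U, hC, hN, hNw, hU, hfr, hmean⟩ := exists_choice
  have hprod1 : ∀ i, 1 ≤ ∏ k ∈ Finset.range (i + 1), wt C k := fun i =>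
    by
      induction i with
      | zero => simpa using wt_one_le C 0
      | succ i ih =>
        rw [Finset.prod_range_succ]
        nlinarith [wt_one_le C (i + 1)]
  have hN2 : ∀ i, (2:ℝ) ^ i ≤ N i := fun i => by
    refine le_trans ?_ (hNw i)
    have : (0:ℝ) < 2 ^ i := by positivity
    nlinarith [hprod1 i]
  obtain ⟨a, ha⟩ := collect (term C N) _ N (DP_term C N hN) hN (fun j => by
    have h := hNw j
    have h2 : (0:ℝ) < 2 ^ j := by positivity
    rw [one_div, inv_pow, ← div_eq_mul_inv, le_div_iff₀ h2]
    linarith)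
  have hcF := continuousOn_F hC hN hU hfr
  refine ⟨F C N, a, 1, fun t => F C N (t * I), differentiableOn_F hC hN hN2,
    ⟨1, fun s hs => norm_F_le hC hN hs.le⟩, ha, ?_, ?_⟩
  · refine Eventually.of_forall fun t => ?_
    have h0 : ContinuousWithinAt (F C N) {s : ℂ | 0 ≤ s.re} (t * I) := hcF _ (by simp)
    refine h0.tendsto.comp ?_
    refine tendsto_nhdsWithin_iff.2 ⟨?_, ?_⟩
    · have hc : Continuous fun σ : ℝ => (σ : ℂ) + t * I := by fun_prop
      have := (hc.tendsto 0).mono_left (nhdsWithin_le_nhds (s := Set.Ioi 0))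
      simpa using this
    · filter_upwards [self_mem_nhdsWithin] with σ hσ
      have : (0:ℝ) < σ := hσ
      simp [this.le]
  · rintro ⟨l, hl⟩
    have hcb : Continuous fun t : ℝ => ‖F C N (t * I)‖ ^ 2 := by
      have : Continuous fun t : ℝ => F C N (t * I) :=
        hcF.comp_continuous (by fun_prop) (by intro t; simp)
      fun_prop
    have hce : ∀ k, Continuous fun t : ℝ => er C N k t := by
      intro k
      have := (C k).continuous
      have := continuous_W (N k)
      unfold er
      fun_prop
    have hces : ∀ j, Continuous fun t : ℝ => ∑ k ∈ Finset.range j, er C N k t :=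
      fun j => continuous_finsetSum _ fun k _ => hce k
    have hgeo : ∀ j : ℕ, ∑ k ∈ Finset.range j, (1 / 2 : ℝ) ^ k ≤ 2 := by
      intro j
      have := (summable_geometric_of_lt_one (by norm_num : (0:ℝ) ≤ 1 / 2)
        (by norm_num)).sum_le_tsum (Finset.range j) (fun i _ => by positivity)
      rw [tsum_geometric_of_lt_one (by norm_num) (by norm_num)] at this
      norm_num at this ⊢
      exact this
    have hErInt : ∀ j, ∫ t in (0:ℝ)..U j, ∑ k ∈ Finset.range j, er C N k t ≤ 1 / 50 * U j := by
      intro j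
      have hU0 : 0 ≤ U j := (Nat.cast_nonneg j).trans (hU j)
      rw [intervalIntegral.integral_finsetSum fun k _ => (hce k).intervalIntegrable _ _]
      calc _ ≤ ∑ k ∈ Finset.range j, 2 * (1 / 200 * (1 / 2) ^ k) * U j :=
            Finset.sum_le_sum fun k hk => hmean k j (Finset.mem_range.1 hk)
        _ = (1 / 100) * U j * ∑ k ∈ Finset.range j, (1 / 2 : ℝ) ^ k := by
            rw [Finset.mul_sum]; refine Finset.sum_congr rfl fun k _ => ?_; ring
        _ ≤ (1 / 100) * U j * 2 := by gcongr; exact hgeo j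
        _ = _ := by ring
    have hUt : Tendsto U atTop atTop := tendsto_atTop_mono hU tendsto_natCast_atTop_atTop
    have habs : ∀ j, ∀ t ∈ Set.Icc 0 (U j), |t| ≤ U j := fun j t ht => by
      rw [abs_of_nonneg ht.1]; exact ht.2
    have hlow : l ≤ 1 / 10 := by
      have hodd : Tendsto (fun k : ℕ => 2 * k + 1) atTop atTop :=
        tendsto_atTop_mono (fun k => by simp only [id]; omega) tendsto_id
      refine le_of_tendsto (hl.comp (hUt.comp hodd)) ?_
      refine Eventually.of_forall fun k => ?_
      simp only [Function.comp]
      set j := 2 * k + 1 with hj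
      have hUj : 0 < U j := lt_of_lt_of_le (by rw [hj]; positivity) (hU j)
      have hno : ¬ Even j := by rw [Nat.not_even_iff_odd]; exact ⟨k, hj⟩
      rw [one_div_mul_eq_div, div_le_iff₀ hUj]
      have h1 : ∫ t in (0:ℝ)..U j, ‖F C N (t * I)‖ ^ 2 ≤
          ∫ t in (0:ℝ)..U j, (1 / 400 + ∑ k ∈ Finset.range j, er C N k t) :=
        intervalIntegral.integral_mono_on hUj.le (hcb.intervalIntegrable _ _)
          ((continuous_const.add (hces j)).intervalIntegrable _ _)
          fun t ht => low hC hN hfr j hno t (habs j t ht)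
      rw [intervalIntegral.integral_add intervalIntegrable_const
        ((hces j).intervalIntegrable _ _), intervalIntegral.integral_const, smul_eq_mul] at h1
      linarith [hErInt j]
    have hhigh : 1 / 2 ≤ l := by
      have heven : Tendsto (fun k : ℕ => 2 * (k + 1)) atTop atTop :=
        tendsto_atTop_mono (fun k => by simp only [id]; omega) tendsto_id
      refine ge_of_tendsto (hl.comp (hUt.comp heven)) ?_
      refine Eventually.of_forall fun k => ?_
      simp only [Function.comp]
      set j := 2 * (k + 1) with hj
      have hUj : 0 < U j := lt_of_lt_of_le (by rw [hj]; positivity) (hU j)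
      have hno : Even j := by rw [hj]; exact even_two_mul _
      rw [one_div_mul_eq_div, le_div_iff₀ hUj]
      have h1 : ∫ t in (0:ℝ)..U j, (3 / 4 - 6 * ∑ k ∈ Finset.range j, er C N k t) ≤
          ∫ t in (0:ℝ)..U j, ‖F C N (t * I)‖ ^ 2 :=
        intervalIntegral.integral_mono_on hUj.le
          ((continuous_const.sub (continuous_const.mul (hces j))).intervalIntegrable _ _)
          (hcb.intervalIntegrable _ _)
          fun t ht => high hC hN hfr j hno t (habs j t ht)
      rw [intervalIntegral.integral_sub intervalIntegrable_const
        (((hces j).const_mul 6).intervalIntegrable _ _), intervalIntegral.integral_const,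
        intervalIntegral.integral_const_mul, smul_eq_mul] at h1
      linarith [hErInt j]
    linarith
end

section
/- For every ε > 0 there exists a singular inner function g in the class 𝓗^∞ (bounded analytic on Re s > 0, representable by a Dirichlet series ∑ a_n n^{-s}) such that |g(it)| = 1 for almost every t, while ∑_{n=1}^∞ |a_n|² ≤ ε². -/
open Filter Topology

lemma hasSum_congr_ptw {ι : Type} {f g : ι → ℂ} {x : ℂ} (h : ∀ i, f i = g i) :
    HasSum f x ↔ HasSum g x := by
  rw [funext h]

lemma hasSum_mul_prod {u v : ℕ → ℂ} {x y : ℂ} (hu : HasSum u x) (hv : HasSum v y)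
    (h : Summable (fun p : ℕ × ℕ => u p.1 * v p.2)) :
    HasSum (fun p : ℕ × ℕ => u p.1 * v p.2) (x * y) := by
  have := hu.tsum_eq
  have := hv.tsum_eq
  subst x y
  rw [hu.summable.tsum_mul_tsum hv.summable h]
  exact h.hasSum

/-- Absolutely convergent Dirichlet series on the closed right half-plane, norm at most `C`. -/
def DRep (F : ℂ → ℂ) (C : ℝ) : Prop :=
  ∃ a : ℕ → ℂ, Summable (fun n => ‖a n‖) ∧ ∑' n, ‖a n‖ ≤ C ∧
    ∀ s : ℂ, 0 ≤ s.re → HasSum (fun n : ℕ => a n * ((n + 1 : ℕ) : ℂ) ^ (-s)) (F s)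

lemma norm_npow_le {n : ℕ} (hn : 1 ≤ n) {s : ℂ} (hs : 0 ≤ s.re) : ‖((n : ℕ) : ℂ) ^ (-s)‖ ≤ 1 := by
  rw [Complex.norm_natCast_cpow_of_pos (by omega)]
  apply Real.rpow_le_one_of_one_le_of_nonpos
  · exact_mod_cast hn
  · simpa using hs

lemma rep_of_index {ι : Type} {F : ℂ → ℂ} {C : ℝ} (c : ι → ℂ) (N : ι → ℕ) (hN : ∀ i, 1 ≤ N i)
    (hc : Summable (fun i => ‖c i‖)) (hC : ∑' i, ‖c i‖ ≤ C)
    (hF : ∀ s : ℂ, 0 ≤ s.re → HasSum (fun i => c i * ((N i : ℕ) : ℂ) ^ (-s)) (F s)) :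
    DRep F C := by
  let e := Equiv.sigmaFiberEquiv (fun i => N i - 1)
  have hsn : Summable (fun x => ‖c (e x)‖) := (e.summable_iff (f := fun i => ‖c i‖)).2 hc
  have hfib : ∀ n, Summable (fun i : {i // N i - 1 = n} => ‖c i‖) := fun n => hsn.sigma_factor n
  have hle : ∀ n, ‖∑' i : {i // N i - 1 = n}, c i‖ ≤ ∑' i : {i // N i - 1 = n}, ‖c i‖ :=
    fun n => norm_tsum_le_tsum_norm (hfib n)
  have hsum : Summable (fun n => ∑' i : {i // N i - 1 = n}, ‖c i‖) := hsn.sigma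
  have h2 : ∑' n, ∑' i : {i // N i - 1 = n}, ‖c i‖ = ∑' i, ‖c i‖ := by
    rw [← e.tsum_eq (fun i => ‖c i‖), hsn.tsum_sigma]
    rfl
  have hs1 : Summable (fun n => ‖∑' i : {i // N i - 1 = n}, c i‖) :=
    Summable.of_nonneg_of_le (fun _ => norm_nonneg _) hle hsum
  refine ⟨fun n => ∑' i : {i // N i - 1 = n}, c i, hs1, ?_, ?_⟩
  · refine le_trans (hs1.tsum_le_tsum hle hsum) (by rw [h2]; exact hC)
  · intro s hs
    have h3 := (e.hasSum_iff (f := fun i => c i * ((N i : ℕ) : ℂ) ^ (-s))).2 (hF s hs)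
    refine h3.sigma (fun n => ?_)
    have h4 : HasSum (fun i : {i // N i - 1 = n} => c i) (∑' i : {i // N i - 1 = n}, c i) :=
      (hfib n).of_norm.hasSum
    have h5 := h4.mul_right (((n + 1 : ℕ) : ℂ) ^ (-s))
    refine (hasSum_congr_ptw fun i => ?_).2 h5
    have : N i = n + 1 := by have := hN i; have := i.2; omega
    show c i * ((N i : ℕ) : ℂ) ^ (-s) = c i * ((n + 1 : ℕ) : ℂ) ^ (-s)
    rw [this]

lemma DRep.norm_le {F : ℂ → ℂ} {C : ℝ} (h : DRep F C) {s : ℂ} (hs : 0 ≤ s.re) : ‖F s‖ ≤ C := by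
  obtain ⟨a, ha, hC, hF⟩ := h
  rw [← (hF s hs).tsum_eq]
  refine le_trans (tsum_of_norm_bounded ha.hasSum (fun n => ?_)) hC
  rw [norm_mul]
  exact mul_le_of_le_one_right (norm_nonneg _) (norm_npow_le (by omega) hs)

lemma DRep.congr {F G : ℂ → ℂ} {C : ℝ} (h : DRep F C) (hG : ∀ s : ℂ, 0 ≤ s.re → G s = F s) :
    DRep G C := by
  obtain ⟨a, ha, hC, hF⟩ := h
  exact ⟨a, ha, hC, fun s hs => by rw [hG s hs]; exact hF s hs⟩

lemma DRep.add {F G : ℂ → ℂ} {C D : ℝ} (hF : DRep F C) (hG : DRep G D) :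
    DRep (fun s => F s + G s) (C + D) := by
  obtain ⟨a, ha, hC, hF⟩ := hF
  obtain ⟨b, hb, hD, hG⟩ := hG
  have hle : ∀ n, ‖a n + b n‖ ≤ ‖a n‖ + ‖b n‖ := fun n => norm_add_le _ _
  have hs : Summable (fun n => ‖a n + b n‖) :=
    Summable.of_nonneg_of_le (fun _ => norm_nonneg _) hle (ha.add hb)
  refine ⟨fun n => a n + b n, hs, ?_, fun s hs => ?_⟩
  · refine (hs.tsum_le_tsum hle (ha.add hb)).trans ?_
    rw [ha.tsum_add hb]; linarith
  · simpa only [add_mul] using (hF s hs).add (hG s hs)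

lemma DRep.smul {F : ℂ → ℂ} {C : ℝ} (hF : DRep F C) (c : ℂ) :
    DRep (fun s => c * F s) (‖c‖ * C) := by
  obtain ⟨a, ha, hC, hF⟩ := hF
  refine ⟨fun n => c * a n, ?_, ?_, fun s hs => ?_⟩
  · simpa only [norm_mul] using ha.mul_left _
  · simp only [norm_mul]
    rw [tsum_mul_left]
    exact mul_le_mul_of_nonneg_left hC (norm_nonneg _)
  · simpa only [mul_assoc] using (hF s hs).mul_left c

lemma rep_npow {n : ℕ} (hn : 1 ≤ n) : DRep (fun s => (n : ℂ) ^ (-s)) 1 := by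
  refine rep_of_index (ι := Unit) (fun _ => 1) (fun _ => n) (fun _ => hn) ?_ ?_ ?_
  · exact Summable.of_finite
  · simp
  · intro s _
    simp

lemma rep_const (c : ℂ) : DRep (fun _ => c) ‖c‖ := by
  have := (rep_npow (n := 1) le_rfl).smul c
  simpa using this

lemma DRep.mul {F G : ℂ → ℂ} {C D : ℝ} (hF : DRep F C) (hG : DRep G D) :
    DRep (fun s => F s * G s) (C * D) := by
  obtain ⟨a, ha, hC, hF⟩ := hF
  obtain ⟨b, hb, hD, hG⟩ := hG
  have hab : Summable (fun x : ℕ × ℕ => ‖a x.1 * b x.2‖) := ha.mul_norm hb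
  refine rep_of_index (ι := ℕ × ℕ) (fun x => a x.1 * b x.2) (fun x => (x.1 + 1) * (x.2 + 1))
    (fun x => Nat.succ_le_of_lt (by positivity)) hab ?_ ?_
  · have hab' : Summable (fun x : ℕ × ℕ => ‖a x.1‖ * ‖b x.2‖) := by simpa only [norm_mul] using hab
    simp only [norm_mul]
    rw [← ha.tsum_mul_tsum hb hab']
    exact mul_le_mul hC hD (tsum_nonneg fun _ => norm_nonneg _)
      ((tsum_nonneg fun _ => norm_nonneg _).trans hC)
  · intro s hs
    have h1 := hF s hs
    have h2 := hG s hs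
    have e : ∀ x : ℕ × ℕ, a x.1 * b x.2 * (((x.1 + 1) * (x.2 + 1) : ℕ) : ℂ) ^ (-s) =
        (a x.1 * ((x.1 + 1 : ℕ) : ℂ) ^ (-s)) * (b x.2 * ((x.2 + 1 : ℕ) : ℂ) ^ (-s)) := by
      intro x
      rw [Nat.cast_mul, Complex.natCast_mul_natCast_cpow]
      ring
    have h3 : Summable (fun x : ℕ × ℕ => (a x.1 * ((x.1 + 1 : ℕ) : ℂ) ^ (-s)) *
        (b x.2 * ((x.2 + 1 : ℕ) : ℂ) ^ (-s))) := by
      refine Summable.of_norm_bounded hab fun x => ?_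
      rw [← e, norm_mul]
      exact mul_le_of_le_one_right (norm_nonneg _)
        (norm_npow_le (Nat.succ_le_of_lt (by positivity)) hs)
    exact (hasSum_congr_ptw e).2 (hasSum_mul_prod
      (u := fun n => a n * ((n + 1 : ℕ) : ℂ) ^ (-s))
      (v := fun n => b n * ((n + 1 : ℕ) : ℂ) ^ (-s)) h1 h2 h3)

lemma DRep.pow {F : ℂ → ℂ} {C : ℝ} (hF : DRep F C) (k : ℕ) : DRep (fun s => F s ^ k) (C ^ k) := by
  induction k with
  | zero => simpa using rep_const 1
  | succ k ih => simpa only [pow_succ] using ih.mul hF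

lemma rep_tsum {F : ℕ → ℂ → ℂ} {G : ℂ → ℂ} {C : ℕ → ℝ} (hF : ∀ k, DRep (F k) (C k))
    (hC : Summable C) (hG : ∀ s : ℂ, 0 ≤ s.re → HasSum (fun k => F k s) (G s)) :
    DRep G (∑' k, C k) := by
  choose a ha haC hF using hF
  have hs : Summable (fun x : ℕ × ℕ => ‖a x.1 x.2‖) := by
    rw [summable_prod_of_nonneg (fun _ => norm_nonneg _)]
    exact ⟨fun k => ha k, Summable.of_nonneg_of_le (fun k => tsum_nonneg fun _ => norm_nonneg _)
      haC hC⟩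
  refine rep_of_index (ι := ℕ × ℕ) (fun x => a x.1 x.2) (fun x => x.2 + 1) (fun x => by omega)
    hs ?_ ?_
  · rw [hs.tsum_prod]
    exact Summable.tsum_le_tsum haC (hs.prod) hC
  · intro s hs0
    have h1 : Summable (fun x : ℕ × ℕ => a x.1 x.2 * ((x.2 + 1 : ℕ) : ℂ) ^ (-s)) := by
      refine Summable.of_norm_bounded hs fun x => ?_
      rw [norm_mul]
      exact mul_le_of_le_one_right (norm_nonneg _) (norm_npow_le (by omega) hs0)
    have h2 := h1.hasSum.prod_fiberwise (fun k => hF k s hs0)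
    rw [(hG s hs0).unique h2]
    exact h1.hasSum

lemma DRep.exp {F : ℂ → ℂ} {C : ℝ} (hF : DRep F C) :
    ∃ D, DRep (fun s => Complex.exp (F s)) D := by
  refine ⟨_, rep_tsum (F := fun k s => (↑k.factorial)⁻¹ * F s ^ k)
    (fun k => (hF.pow k).smul _) ?_ ?_⟩
  · have := Real.summable_pow_div_factorial C
    refine this.congr fun k => ?_
    simp [div_eq_inv_mul]
  · intro s _
    have := NormedSpace.expSeries_div_hasSum_exp (F s)
    rw [Complex.exp_eq_exp_ℂ]
    simpa [div_eq_inv_mul] using this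

lemma DRep.geom {F : ℂ → ℂ} {C : ℝ} (hF : DRep F C) (hC0 : 0 ≤ C) (hC : C < 1) :
    ∃ D, DRep (fun s => (1 - F s)⁻¹) D := by
  refine ⟨_, rep_tsum (F := fun k s => F s ^ k) (fun k => (hF.pow k)) ?_ ?_⟩
  · exact summable_geometric_of_lt_one hC0 hC
  · intro s hs
    exact hasSum_geometric_of_norm_lt_one ((hF.norm_le hs).trans_lt hC)

lemma rep_finset_sum {ι : Type} (S : Finset ι) (F : ι → ℂ → ℂ)
    (hF : ∀ k ∈ S, ∃ C, DRep (F k) C) : ∃ C, DRep (fun s => ∑ k ∈ S, F k s) C := by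
  classical
  induction S using Finset.induction_on with
  | empty => exact ⟨_, by simpa using rep_const 0⟩
  | insert k S hk ih =>
    obtain ⟨C, hC⟩ := ih fun j hj => hF j (by simp [hj])
    obtain ⟨D, hD⟩ := hF k (by simp)
    exact ⟨_, (hD.add hC).congr fun s _ => by rw [Finset.sum_insert hk]⟩

lemma rep_finset_prod {ι : Type} (S : Finset ι) (F : ι → ℂ → ℂ)
    (hF : ∀ k ∈ S, ∃ C, DRep (F k) C) : ∃ C, DRep (fun s => ∏ k ∈ S, F k s) C := by
  classical
  induction S using Finset.induction_on with
  | empty => exact ⟨_, by simpa using rep_const 1⟩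
  | insert k S hk ih =>
    obtain ⟨C, hC⟩ := ih fun j hj => hF j (by simp [hj])
    obtain ⟨D, hD⟩ := hF k (by simp)
    exact ⟨_, (hD.mul hC).congr fun s _ => by rw [Finset.prod_insert hk]⟩

lemma norm_expI (x : ℝ) : ‖Complex.exp (Complex.I * x)‖ = 1 := by
  rw [mul_comm]; exact Complex.norm_exp_ofReal_mul_I x

lemma mean_char_bound (ω T : ℝ) (hT : 0 < T) :
    ‖(((2 * T)⁻¹ : ℝ) : ℂ) * ∫ t in (-T)..T, Complex.exp (Complex.I * (ω * t : ℝ))‖ ≤ 1 := by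
  have h := intervalIntegral.norm_integral_le_of_norm_le_const (a := -T) (b := T) (C := 1)
    (f := fun t : ℝ => Complex.exp (Complex.I * (ω * t : ℝ))) (fun t _ => (norm_expI _).le)
  have h2 : |T - -T| = 2 * T := by rw [abs_of_pos] <;> linarith
  rw [h2, one_mul] at h
  rw [norm_mul, Complex.norm_real, Real.norm_of_nonneg (by positivity)]
  calc _ ≤ (2 * T)⁻¹ * (2 * T) := by gcongr
    _ = 1 := by field_simp

lemma mean_char (ω : ℝ) :
    Tendsto (fun T : ℝ => (((2 * T)⁻¹ : ℝ) : ℂ) *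
      ∫ t in (-T)..T, Complex.exp (Complex.I * (ω * t : ℝ))) atTop
      (𝓝 (if ω = 0 then 1 else 0)) := by
  split_ifs with h
  · refine tendsto_const_nhds.congr' ?_
    filter_upwards [eventually_gt_atTop 0] with T hT
    have : (T : ℂ) ≠ 0 := by exact_mod_cast hT.ne'
    simp [h]
    field_simp
    norm_num
  · have hω : Complex.I * (ω : ℂ) ≠ 0 := by simp [h]
    have hb : ∀ T : ℝ, ‖∫ t in (-T)..T, Complex.exp (Complex.I * (ω * t : ℝ))‖ ≤ 2 / |ω| := by
      intro T
      have : ∀ t : ℝ, Complex.exp (Complex.I * (ω * t : ℝ)) = Complex.exp ((Complex.I * ω) * t) := by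
        intro t; congr 1; push_cast; ring
      simp only [this]
      rw [integral_exp_mul_complex hω, norm_div]
      have e : ‖Complex.I * (ω : ℂ)‖ = |ω| := by simp
      rw [e]
      gcongr
      refine (norm_sub_le _ _).trans ?_
      rw [← this, ← this, norm_expI, norm_expI]
      norm_num
    rw [tendsto_zero_iff_norm_tendsto_zero]
    have h0 : Tendsto (fun T : ℝ => (2 * T)⁻¹ * (2 / |ω|)) atTop (𝓝 0) := by
      have : Tendsto (fun T : ℝ => (2 * T)⁻¹) atTop (𝓝 0) :=
        tendsto_inv_atTop_zero.comp (tendsto_id.const_mul_atTop (by norm_num))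
      simpa using this.mul_const (2 / |ω|)
    refine squeeze_zero' (Eventually.of_forall fun _ => norm_nonneg _) ?_ h0
    filter_upwards [eventually_gt_atTop 0] with T hT
    rw [norm_mul, Complex.norm_real, Real.norm_of_nonneg (by positivity)]
    gcongr
    exact hb T

lemma mean_series {κ : Type} [Countable κ] (d : κ → ℂ) (ν : κ → ℝ)
    (hd : Summable (fun i => ‖d i‖)) :
    Tendsto (fun T : ℝ => (((2 * T)⁻¹ : ℝ) : ℂ) *
      ∫ t in (-T)..T, ∑' p, d p * Complex.exp (Complex.I * (ν p * t : ℝ))) atTop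
      (𝓝 (∑' p, d p * (if ν p = 0 then 1 else 0))) := by
  have h1 : ∀ T : ℝ, (((2 * T)⁻¹ : ℝ) : ℂ) *
      ∫ t in (-T)..T, ∑' p, d p * Complex.exp (Complex.I * (ν p * t : ℝ)) =
      ∑' p, d p * ((((2 * T)⁻¹ : ℝ) : ℂ) *
        ∫ t in (-T)..T, Complex.exp (Complex.I * (ν p * t : ℝ))) := by
    intro T
    have h2 : HasSum (fun p => ∫ t in (-T)..T, d p * Complex.exp (Complex.I * (ν p * t : ℝ)))
        (∫ t in (-T)..T, ∑' p, d p * Complex.exp (Complex.I * (ν p * t : ℝ))) := by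
      refine intervalIntegral.hasSum_integral_of_dominated_convergence
        (fun p _ => ‖d p‖) ?_ ?_ ?_ ?_ ?_
      · intro p
        refine Continuous.aestronglyMeasurable ?_
        fun_prop
      · intro p
        refine Eventually.of_forall fun t _ => ?_
        rw [norm_mul, norm_expI, mul_one]
      · exact Eventually.of_forall fun t _ => hd
      · exact intervalIntegrable_const
      · refine Eventually.of_forall fun t _ => Summable.hasSum ?_
        refine Summable.of_norm_bounded hd fun p => ?_
        rw [norm_mul, norm_expI, mul_one]
    rw [← h2.tsum_eq, ← tsum_mul_left]
    congr 1
    ext p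
    rw [intervalIntegral.integral_const_mul]
    ring
  simp only [h1]
  refine tendsto_tsum_of_dominated_convergence hd (fun p => (mean_char (ν p)).const_mul _) ?_
  filter_upwards [eventually_gt_atTop 0] with T hT p
  rw [norm_mul]
  exact mul_le_of_le_one_right (norm_nonneg _) (mean_char_bound _ _ hT)

lemma mean_parseval {ι : Type} [Countable ι] (c : ι → ℂ) (ω : ι → ℝ) (hω : Function.Injective ω)
    (hc : Summable (fun i => ‖c i‖)) :
    Tendsto (fun T : ℝ => (2 * T)⁻¹ *
      ∫ t in (-T)..T, ‖∑' i, c i * Complex.exp (Complex.I * (ω i * t : ℝ))‖ ^ 2) atTop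
      (𝓝 (∑' i, ‖c i‖ ^ 2)) := by
  have hd : Summable (fun p : ι × ι => ‖c p.1 * (starRingEnd ℂ) (c p.2)‖) := by
    have := Summable.mul_of_nonneg hc hc (fun _ => norm_nonneg _) (fun _ => norm_nonneg _)
    simpa using this
  have h := mean_series (fun p : ι × ι => c p.1 * (starRingEnd ℂ) (c p.2))
    (fun p => ω p.1 - ω p.2) hd
  have e1 : ∑' p : ι × ι, c p.1 * (starRingEnd ℂ) (c p.2) *
      (if ω p.1 - ω p.2 = 0 then 1 else 0) = ((∑' i, ‖c i‖ ^ 2 : ℝ) : ℂ) := by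
    have hinj : Function.Injective (fun i : ι => (i, i)) := fun i j h => (Prod.mk.inj h).1
    rw [← hinj.tsum_eq, Complex.ofReal_tsum]
    · congr 1
      ext i
      simp [Complex.mul_conj, Complex.normSq_eq_norm_sq]
    · intro p hp
      by_contra hne
      apply hp
      have : ω p.1 - ω p.2 ≠ 0 := by
        intro h0
        have := hω (sub_eq_zero.1 h0)
        exact hne ⟨p.1, by ext <;> simp [this]⟩
      simp [this]
  have e2 : ∀ t : ℝ, ∑' p : ι × ι, c p.1 * (starRingEnd ℂ) (c p.2) *
      Complex.exp (Complex.I * ((ω p.1 - ω p.2) * t : ℝ)) =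
      ((‖∑' i, c i * Complex.exp (Complex.I * (ω i * t : ℝ))‖ ^ 2 : ℝ) : ℂ) := by
    intro t
    have hs : Summable (fun i => ‖c i * Complex.exp (Complex.I * (ω i * t : ℝ))‖) := by
      refine hc.congr fun i => ?_
      rw [norm_mul, norm_expI, mul_one]
    have hs' : Summable (fun i => ‖(starRingEnd ℂ) (c i * Complex.exp (Complex.I * (ω i * t : ℝ)))‖) := by
      simpa only [RCLike.norm_conj] using hs
    rw [← Complex.normSq_eq_norm_sq, ← Complex.mul_conj, Complex.conj_tsum,
      tsum_mul_tsum_of_summable_norm hs hs']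
    congr 1
    ext p
    rw [map_mul, ← Complex.exp_conj]
    have : Complex.exp (Complex.I * ((ω p.1 - ω p.2) * t : ℝ)) =
      Complex.exp (Complex.I * (ω p.1 * t : ℝ)) *
      Complex.exp ((starRingEnd ℂ) (Complex.I * (ω p.2 * t : ℝ))) := by
      rw [← Complex.exp_add]
      congr 1
      rw [map_mul, Complex.conj_I, Complex.conj_ofReal]
      push_cast
      ring
    rw [this]
    ring
  rw [e1] at h
  simp only [e2] at h
  have h3 := (Complex.continuous_re.tendsto _).comp h
  refine h3.congr fun T => ?_
  simp only [Function.comp]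
  rw [intervalIntegral.integral_ofReal, ← Complex.ofReal_mul, Complex.ofReal_re]

lemma natpow_eq {n : ℕ} (hn : 1 ≤ n) (s : ℂ) :
    (n : ℂ) ^ (-s) = Complex.exp (-(s * (Real.log n : ℂ))) := by
  rw [Complex.cpow_def_of_ne_zero (by exact_mod_cast (by omega : n ≠ 0)), Complex.natCast_log]
  congr 1; ring

lemma exists_block (δ R : ℝ) (hδ : 0 < δ) :
    ∃ (H : ℂ → ℂ) (W : ℕ), 2 ≤ W ∧ Differentiable ℂ H ∧ (∀ s : ℂ, ‖s‖ ≤ R → ‖1 - H s‖ ≤ 1 / 2) ∧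
      (∀ t : ℝ, ∃ x : ℝ, 0 ≤ x ∧ x ≤ 1 ∧ H (t * Complex.I) = x) ∧
      (∃ c, c ≤ δ ∧ Tendsto (fun T : ℝ => (2 * T)⁻¹ * ∫ t in (-T)..T, (H (t * Complex.I)).re)
        atTop (𝓝 c)) ∧
      ∃ C, DRep (fun s => (W : ℂ) ^ (-s) * H s) C := by
  obtain ⟨N, hN⟩ := exists_nat_gt (1 / δ)
  have hN0 : 0 < N := by
    have : (0 : ℝ) < N := lt_trans (by positivity) hN
    exact_mod_cast this
  obtain ⟨m, hm⟩ := exists_nat_gt (4 * |R| * N + 2)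
  have hm2 : 2 < m := by
    have : (2 : ℝ) < m := lt_of_le_of_lt (by have : 0 ≤ 4 * |R| * N := by positivity
                                             linarith) hm
    exact_mod_cast this
  have hNc : (N : ℂ) ≠ 0 := by exact_mod_cast hN0.ne'
  set A : ℂ → ℂ := fun s => ∑ j : Fin N, (N : ℂ)⁻¹ * ((m + j : ℕ) : ℂ) ^ (-s) with hA
  set W : ℕ := ∏ j : Fin N, (m + j) with hW
  have hAt : ∀ t : ℝ, A (t * Complex.I) =
      ∑ j : Fin N, (N : ℂ)⁻¹ * Complex.exp (Complex.I * ((-Real.log (m + j : ℕ)) * t : ℝ)) := by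
    intro t
    refine Finset.sum_congr rfl fun j _ => ?_
    rw [natpow_eq (by omega)]
    congr 2
    push_cast; ring
  have hAt' : ∀ t : ℝ, A (-(t * Complex.I)) = (starRingEnd ℂ) (A (t * Complex.I)) := by
    intro t
    rw [hA]
    simp only [map_sum, map_mul, map_inv₀, Complex.conj_natCast]
    refine Finset.sum_congr rfl fun j _ => ?_
    rw [natpow_eq (by omega), natpow_eq (by omega), ← Complex.exp_conj]
    simp
  have hH : ∀ t : ℝ, A (t * Complex.I) * A (-(t * Complex.I)) = ((‖A (t * Complex.I)‖ ^ 2 : ℝ) : ℂ) := by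
    intro t
    rw [hAt', Complex.mul_conj, Complex.normSq_eq_norm_sq]
  have hA1 : ∀ t : ℝ, ‖A (t * Complex.I)‖ ≤ 1 := by
    intro t
    rw [hAt]
    refine (norm_sum_le _ _).trans ?_
    simp only [norm_mul, norm_expI]
    simp
    rw [mul_inv_cancel₀ (by exact_mod_cast hN0.ne')]
  refine ⟨fun s => A s * A (-s), W, ?_, ?_, ?_, ?_, ?_, ?_⟩
  · calc 2 ≤ m + ((⟨0, hN0⟩ : Fin N) : ℕ) := by simp; omega
      _ ≤ W := by
        refine Nat.le_of_dvd (Finset.prod_pos fun j _ => by omega) ?_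
        exact Finset.dvd_prod_of_mem (fun j : Fin N => m + (j : ℕ)) (Finset.mem_univ _)
  · have hAd : Differentiable ℂ A := by
      have : A = fun s => ∑ j : Fin N, (N : ℂ)⁻¹ *
          Complex.exp (-(s * (Real.log (m + j : ℕ) : ℂ))) := by
        ext s
        exact Finset.sum_congr rfl fun j _ => by rw [natpow_eq (by omega)]
      rw [this]
      fun_prop
    exact hAd.mul (hAd.comp differentiable_neg)
  · intro s hs
    have e : 1 - A s * A (-s) = ∑ i : Fin N, ∑ j : Fin N, ((N : ℂ)⁻¹ * (N : ℂ)⁻¹) *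
        (1 - Complex.exp (s * ((Real.log (m + j : ℕ) - Real.log (m + i : ℕ) : ℝ) : ℂ))) := by
      simp only [mul_sub, Finset.sum_sub_distrib]
      congr 1
      · simp; field_simp
      · rw [hA]
        simp only
        rw [Finset.sum_mul_sum]
        refine Finset.sum_congr rfl fun i _ => Finset.sum_congr rfl fun j _ => ?_
        rw [natpow_eq (by omega), natpow_eq (by omega)]
        have : Complex.exp (s * ((Real.log (m + j : ℕ) - Real.log (m + i : ℕ) : ℝ) : ℂ)) =
          Complex.exp (-(s * (Real.log (m + i : ℕ) : ℂ))) *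
          Complex.exp (-(-s * (Real.log (m + j : ℕ) : ℂ))) := by
          rw [← Complex.exp_add]; congr 1; push_cast; ring
        rw [← this.symm]
        ring
    have hlog : ∀ i j : Fin N, |Real.log (m + j : ℕ) - Real.log (m + i : ℕ)| ≤ N / m := by
      have key : ∀ i j : Fin N, Real.log (m + j : ℕ) - Real.log (m + i : ℕ) ≤ N / m := by
        intro i j
        have hm0 : (0 : ℝ) < m := by exact_mod_cast (by omega : 0 < m)
        have h1 : Real.log m ≤ Real.log (m + i : ℕ) :=
          Real.log_le_log hm0 (by push_cast; linarith [Nat.cast_nonneg (α := ℝ) (i : ℕ)])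
        have h2 : Real.log (m + j : ℕ) - Real.log m ≤ (j : ℕ) / m := by
          rw [← Real.log_div (by push_cast; positivity) hm0.ne']
          refine (Real.log_le_sub_one_of_pos (by push_cast; positivity)).trans (le_of_eq ?_)
          push_cast
          field_simp
          ring
        have h3 : ((j : ℕ) : ℝ) / m ≤ N / m := by
          gcongr
          exact j.2.le
        linarith
      intro i j
      rw [abs_le]
      constructor
      · have := key j i; linarith
      · exact key i j
    have hterm : ∀ i j : Fin N, ‖1 - Complex.exp (s * ((Real.log (m + j : ℕ) - Real.log (m + i : ℕ) : ℝ) : ℂ))‖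
        ≤ 1 / 2 := by
      intro i j
      set z := s * ((Real.log (m + j : ℕ) - Real.log (m + i : ℕ) : ℝ) : ℂ) with hz
      have hz1 : ‖z‖ ≤ 1 / 4 := by
        rw [hz, norm_mul, Complex.norm_real, Real.norm_eq_abs]
        have hm0 : (0 : ℝ) < m := by exact_mod_cast (by omega : 0 < m)
        calc _ ≤ |R| * (N / m) := by
              gcongr
              · exact hs.trans (le_abs_self R)
              · exact hlog i j
          _ ≤ 1 / 4 := by
              rw [mul_div_assoc', div_le_iff₀ hm0]
              linarith
      rw [norm_sub_rev]
      refine (Complex.norm_exp_sub_one_le (by linarith)).trans ?_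
      linarith
    rw [e]
    refine (norm_sum_le _ _).trans ?_
    calc _ ≤ ∑ i : Fin N, ∑ j : Fin N, ((N : ℝ)⁻¹ * (N : ℝ)⁻¹) * (1 / 2) := by
          refine Finset.sum_le_sum fun i _ => (norm_sum_le _ _).trans ?_
          refine Finset.sum_le_sum fun j _ => ?_
          rw [norm_mul]
          have : ‖(N : ℂ)⁻¹ * (N : ℂ)⁻¹‖ = (N : ℝ)⁻¹ * (N : ℝ)⁻¹ := by simp
          rw [this]
          gcongr
          exact hterm i j
      _ = 1 / 2 := by
        have : (N : ℝ) ≠ 0 := by exact_mod_cast hN0.ne'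
        simp
        field_simp
  · intro t
    refine ⟨‖A (t * Complex.I)‖ ^ 2, by positivity, ?_, hH t⟩
    exact pow_le_one₀ (norm_nonneg _) (hA1 t)
  · refine ⟨(N : ℝ)⁻¹, ?_, ?_⟩
    · rw [inv_le_comm₀ (by exact_mod_cast hN0) hδ]
      rw [← one_div]
      exact hN.le
    · have h := mean_parseval (ι := Fin N) (fun _ => (N : ℂ)⁻¹)
        (fun j => -Real.log (m + j : ℕ)) ?_ Summable.of_finite
      · have e : ∑' i : Fin N, ‖(N : ℂ)⁻¹‖ ^ 2 = (N : ℝ)⁻¹ := by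
          have : (N : ℝ) ≠ 0 := by exact_mod_cast hN0.ne'
          simp [tsum_fintype]
          field_simp
        rw [e] at h
        refine h.congr fun T => ?_
        congr 1
        refine intervalIntegral.integral_congr fun t _ => ?_
        simp only
        rw [hH, Complex.ofReal_re, hAt, tsum_fintype]
      · intro i j hij
        simp only [neg_inj] at hij
        have := Real.log_injOn_pos
          (Set.mem_Ioi.2 (by exact_mod_cast (by omega : 0 < m + (i : ℕ))))
          (Set.mem_Ioi.2 (by exact_mod_cast (by omega : 0 < m + (j : ℕ)))) hij
        ext
        have h2 : m + (i : ℕ) = m + j := by exact_mod_cast this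
        omega
  · have h1 : ∃ C, DRep A C := rep_finset_sum Finset.univ _ fun j _ =>
      ⟨_, (rep_npow (by omega : 1 ≤ m + (j : ℕ))).smul _⟩
    have h2 : ∃ C, DRep (fun s => (W : ℂ) ^ (-s) * A (-s)) C := by
      have hV : ∀ j : Fin N, ∃ V : ℕ, 1 ≤ V ∧ W = (m + (j : ℕ)) * V := by
        intro j
        refine ⟨∏ i ∈ Finset.univ.erase j, (m + (i : ℕ)), Nat.succ_le_of_lt
          (Finset.prod_pos fun i _ => (by omega : 0 < m + (i : ℕ))), ?_⟩
        rw [hW, Finset.mul_prod_erase Finset.univ (fun i : Fin N => m + (i : ℕ)) (Finset.mem_univ j)]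
      choose V hV1 hWj using hV
      have h3 := rep_finset_sum (Finset.univ : Finset (Fin N))
        (fun j s => (N : ℂ)⁻¹ * (V j : ℂ) ^ (-s))
        fun j _ => ⟨_, (rep_npow (hV1 j)).smul _⟩
      obtain ⟨C, hC⟩ := h3
      refine ⟨C, hC.congr fun s _ => ?_⟩
      rw [hA]
      simp only
      rw [Finset.mul_sum]
      refine Finset.sum_congr rfl fun j _ => ?_
      rw [hWj j, Nat.cast_mul, Complex.natCast_mul_natCast_cpow]
      have : ((m + j : ℕ) : ℂ) ^ (-s) * ((m + j : ℕ) : ℂ) ^ (- -s) = 1 := by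
        rw [natpow_eq (by omega), natpow_eq (by omega), ← Complex.exp_add]
        rw [show -(s * (Real.log (m + j : ℕ) : ℂ)) + -(-s * (Real.log (m + j : ℕ) : ℂ)) = 0 by ring,
          Complex.exp_zero]
      linear_combination (N : ℂ)⁻¹ * (V j : ℂ) ^ (-s) * this
    obtain ⟨C1, h1⟩ := h1
    obtain ⟨C2, h2⟩ := h2
    exact ⟨_, (h1.mul h2).congr fun s _ => by ring⟩

lemma meas_bad (L T η : ℝ) (hL : Real.log 2 ≤ L) (hT : 0 < T) (hη : 0 < η) :
    MeasureTheory.volume {t : ℝ | |t| ≤ T ∧ ‖1 - Complex.exp (Complex.I * (L * t : ℝ))‖ < η} ≤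
      ENNReal.ofReal ((8 * T + 40) * η) := by
  have hlog2 : (1 / 2 : ℝ) < Real.log 2 := by linarith [Real.log_two_gt_d9]
  have hL0 : 0 < L := by linarith
  set J : ℕ := ⌈L * T⌉₊ + 1 with hJ
  have hJ1 : L * T + 1 ≤ J := by push_cast [hJ]; linarith [Nat.le_ceil (L * T)]
  have hJ2 : (J : ℝ) ≤ L * T + 2 := by
    push_cast [hJ]; linarith [Nat.ceil_lt_add_one (show 0 ≤ L * T by positivity)]
  have hsub : {t : ℝ | |t| ≤ T ∧ ‖1 - Complex.exp (Complex.I * (L * t : ℝ))‖ < η} ⊆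
      ⋃ j ∈ Finset.Icc (-(J : ℤ)) J, Metric.closedBall (2 * Real.pi * j / L) (2 * η / L) := by
    rintro t ⟨ht, hlt⟩
    have hpi := Real.pi_pos
    set j : ℤ := round (L * t / (2 * Real.pi)) with hj
    set y : ℝ := L * t - j * (2 * Real.pi) with hy
    have hr := abs_sub_round (L * t / (2 * Real.pi))
    rw [← hj] at hr
    have hyb : |y| ≤ Real.pi := by
      have : y = (L * t / (2 * Real.pi) - j) * (2 * Real.pi) := by rw [hy]; field_simp
      rw [this, abs_mul, abs_of_pos (show 0 < 2 * Real.pi by positivity)]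
      nlinarith
    have he : Complex.exp (Complex.I * (L * t : ℝ)) = Complex.exp (Complex.I * y) := by
      rw [hy]
      rw [Complex.exp_eq_exp_iff_exists_int]
      exact ⟨j, by push_cast; ring⟩
    have h2 : 2 / Real.pi * |y| < η := by
      rw [he, norm_sub_rev, Complex.norm_exp_I_mul_ofReal_sub_one] at hlt
      have := Real.mul_abs_le_abs_sin (x := y / 2) (by rw [abs_div]; norm_num; linarith)
      rw [norm_mul, Real.norm_eq_abs, Real.norm_eq_abs] at hlt
      rw [abs_div, abs_two] at this
      rw [abs_two] at hlt
      linarith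
    have h3 : |y| ≤ 2 * η := by
      have : |y| < η * (Real.pi / 2) := by
        have := mul_lt_mul_of_pos_right h2 (show 0 < Real.pi / 2 by positivity)
        have e : 2 / Real.pi * |y| * (Real.pi / 2) = |y| := by field_simp
        linarith
      nlinarith [Real.pi_le_four]
    simp only [Set.mem_iUnion, Metric.mem_closedBall, Real.dist_eq]
    refine ⟨j, ?_, ?_⟩
    · have hjb : |(j : ℝ)| ≤ J := by
        have h4 : |L * t / (2 * Real.pi)| ≤ L * T := by
          rw [abs_div, abs_mul, abs_of_pos hL0, abs_of_pos (show 0 < 2 * Real.pi by positivity)]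
          rw [div_le_iff₀ (by positivity)]
          have h5 : L * |t| ≤ L * T := by gcongr
          nlinarith [Real.pi_gt_three, abs_nonneg t, mul_pos hL0 hT]
        have h6 : |(j : ℝ)| ≤ |L * t / (2 * Real.pi)| + |L * t / (2 * Real.pi) - j| := by
          have := abs_sub (L * t / (2 * Real.pi)) (L * t / (2 * Real.pi) - j)
          simpa using this
        linarith
      rw [Finset.mem_Icc]
      rw [abs_le] at hjb
      exact ⟨by exact_mod_cast hjb.1, by exact_mod_cast hjb.2⟩
    · have : t - 2 * Real.pi * j / L = y / L := by rw [hy]; field_simp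
      rw [this, abs_div, abs_of_pos hL0]
      gcongr
  refine (MeasureTheory.measure_mono hsub).trans ?_
  refine (MeasureTheory.measure_biUnion_finset_le _ _).trans ?_
  simp only [Real.volume_closedBall]
  rw [Finset.sum_const, Int.card_Icc, nsmul_eq_mul]
  have e : (((J : ℤ) + 1 - -(J : ℤ)).toNat : ℝ) = 2 * J + 1 := by
    have : ((J : ℤ) + 1 - -(J : ℤ)).toNat = 2 * J + 1 := by omega
    rw [this]; push_cast; ring
  rw [← ENNReal.ofReal_natCast, ← ENNReal.ofReal_mul (by positivity), e]
  apply ENNReal.ofReal_le_ofReal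
  rw [show (2 * (J : ℝ) + 1) * (2 * (2 * η / L)) = ((2 * J + 1) * 4 / L) * η by ring]
  gcongr
  rw [div_le_iff₀ hL0]
  nlinarith

lemma ae_lower (n : ℕ → ℕ) (hn : ∀ k, 2 ≤ n k) :
    ∀ᵐ t : ℝ, (∀ k, 0 < ‖1 - (n k : ℂ) ^ (-(t * Complex.I))‖) ∧
      ∀ᶠ k in atTop, (3 / 4 : ℝ) ^ k ≤ ‖1 - (n k : ℂ) ^ (-(t * Complex.I))‖ := by
  have hconv : ∀ k (t : ℝ), ‖1 - (n k : ℂ) ^ (-(t * Complex.I))‖ =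
      ‖1 - Complex.exp (Complex.I * (Real.log (n k) * t : ℝ))‖ := by
    intro k t
    rw [natpow_eq (by have := hn k; omega)]
    rw [← RCLike.norm_conj, map_sub, ← Complex.exp_conj, map_one, map_neg, map_mul, map_mul,
      Complex.conj_I, Complex.conj_ofReal, Complex.conj_ofReal]
    congr 3
    push_cast
    ring
  have hlog : ∀ k, Real.log 2 ≤ Real.log (n k) := fun k =>
    Real.log_le_log (by norm_num) (by exact_mod_cast hn k)
  simp only [hconv]
  have hT : ∀ T : ℕ, ∀ᵐ t : ℝ, |t| ≤ T + 1 →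
      (∀ k, 0 < ‖1 - Complex.exp (Complex.I * (Real.log (n k) * t : ℝ))‖) ∧
      ∀ᶠ k in atTop, (3 / 4 : ℝ) ^ k ≤ ‖1 - Complex.exp (Complex.I * (Real.log (n k) * t : ℝ))‖ := by
    intro T
    have hT0 : (0 : ℝ) < T + 1 := by positivity
    have h1 : ∀ᵐ t : ℝ, ∀ k, |t| ≤ T + 1 →
        0 < ‖1 - Complex.exp (Complex.I * (Real.log (n k) * t : ℝ))‖ := by
      rw [MeasureTheory.ae_all_iff]
      intro k
      rw [MeasureTheory.ae_iff]
      have hb : ∀ η : ℝ, 0 < η → MeasureTheory.volume {t : ℝ | ¬(|t| ≤ T + 1 →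
        0 < ‖1 - Complex.exp (Complex.I * (Real.log (n k) * t : ℝ))‖)} ≤
          ENNReal.ofReal ((8 * (T + 1) + 40) * η) := by
        intro η hη
        refine (MeasureTheory.measure_mono ?_).trans (meas_bad _ _ η (hlog k) hT0 hη)
        intro t ht
        simp only [Set.mem_ofPred_eq, not_forall, not_lt] at ht
        obtain ⟨h, h'⟩ := ht
        exact ⟨h, h'.trans_lt hη⟩
      have hlim : Tendsto (fun η : ℝ => ENNReal.ofReal ((8 * (T + 1) + 40) * η)) (𝓝[>] 0) (𝓝 0) := by
        have : Tendsto (fun η : ℝ => ENNReal.ofReal ((8 * (T + 1) + 40) * η)) (𝓝 0)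
            (𝓝 (ENNReal.ofReal ((8 * (T + 1) + 40) * 0))) :=
          (ENNReal.continuous_ofReal.comp (continuous_const.mul continuous_id)).tendsto 0
        simp only [mul_zero, ENNReal.ofReal_zero] at this
        exact this.mono_left nhdsWithin_le_nhds
      refine le_antisymm (ge_of_tendsto hlim ?_) (zero_le)
      filter_upwards [self_mem_nhdsWithin] with η hη using hb η hη
    have h2 : ∀ᵐ t : ℝ, ∀ᶠ k in atTop, t ∉ {t : ℝ | |t| ≤ (T : ℝ) + 1 ∧
        ‖1 - Complex.exp (Complex.I * (Real.log (n k) * t : ℝ))‖ < (3 / 4 : ℝ) ^ k} := by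
      refine MeasureTheory.ae_eventually_notMem ?_
      have hs : Summable (fun k : ℕ => (8 * ((T : ℝ) + 1) + 40) * (3 / 4 : ℝ) ^ k) :=
        (summable_geometric_of_lt_one (by norm_num) (by norm_num)).mul_left _
      refine ne_top_of_le_ne_top ?_ (ENNReal.tsum_le_tsum fun k =>
        meas_bad _ _ ((3 / 4 : ℝ) ^ k) (hlog k) hT0 (by positivity))
      rw [← ENNReal.ofReal_tsum_of_nonneg (fun k => by positivity) hs]
      exact ENNReal.ofReal_ne_top
    filter_upwards [h1, h2] with t h1 h2 ht
    refine ⟨fun k => h1 k ht, ?_⟩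
    filter_upwards [h2] with k hk
    by_contra hlt
    exact hk ⟨ht, not_le.1 hlt⟩
  rw [← MeasureTheory.ae_all_iff] at hT
  filter_upwards [hT] with t ht
  obtain ⟨T, hTt⟩ := exists_nat_gt |t|
  exact ht T (by linarith)

structure Blocks (H : ℕ → ℂ → ℂ) (W : ℕ → ℕ) (δ : ℝ) : Prop where
  hW : ∀ k, 2 ≤ W k
  hd : ∀ k, Differentiable ℂ (H k)
  hsmall : ∀ (k : ℕ) (s : ℂ), ‖s‖ ≤ k → ‖1 - H k s‖ ≤ 1 / 2
  hreal : ∀ (k : ℕ) (t : ℝ), ∃ x : ℝ, 0 ≤ x ∧ x ≤ 1 ∧ H k (t * Complex.I) = x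
  hmean : ∀ k, ∃ c, c ≤ δ * (1 / 2) ^ (k + 1) ∧
    Tendsto (fun T : ℝ => (2 * T)⁻¹ * ∫ t in (-T)..T, (H k (t * Complex.I)).re) atTop (𝓝 c)
  hrep : ∀ k, ∃ C, DRep (fun s => (W k : ℂ) ^ (-s) * H k s) C

lemma exists_blocks (δ : ℝ) (hδ : 0 < δ) : ∃ H W, Blocks H W δ := by
  have h := fun k : ℕ => exists_block (δ * (1 / 2) ^ (k + 1)) k (by positivity)
  choose H W h1 h2 h3 h4 h5 h6 using h
  exact ⟨H, W, h1, h2, h3, h4, h5, h6⟩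

noncomputable def PP (H : ℕ → ℂ → ℂ) (k : ℕ) (s : ℂ) : ℂ := ∏ j ∈ Finset.range k, (1 - H j s)
noncomputable def qq (H : ℕ → ℂ → ℂ) (k : ℕ) (s : ℂ) : ℂ := H k s * PP H k s
def nn (W : ℕ → ℕ) (k : ℕ) : ℕ := ∏ j ∈ Finset.range (k + 1), W j
noncomputable def ZZ (W : ℕ → ℕ) (k : ℕ) (s : ℂ) : ℂ := (nn W k : ℂ) ^ (-s)
noncomputable def term (H : ℕ → ℂ → ℂ) (W : ℕ → ℕ) (r : ℝ) (k : ℕ) (s : ℂ) : ℂ :=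
  2 * (qq H k s * ZZ W k s) * r * (1 - r * ZZ W k s)⁻¹
noncomputable def fK (H : ℕ → ℂ → ℂ) (W : ℕ → ℕ) (r : ℝ) (K : ℕ) (s : ℂ) : ℂ :=
  1 + ∑ k ∈ Finset.range K, term H W r k s
noncomputable def ff (H : ℕ → ℂ → ℂ) (W : ℕ → ℕ) (s : ℂ) : ℂ := 1 + ∑' k, term H W 1 k s

lemma qq_eq (H : ℕ → ℂ → ℂ) (k : ℕ) (s : ℂ) : qq H k s = PP H k s - PP H (k + 1) s := by
  simp only [qq, PP, Finset.prod_range_succ]; ring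

lemma sum_qq (H : ℕ → ℂ → ℂ) (K : ℕ) (s : ℂ) :
    ∑ k ∈ Finset.range K, qq H k s = 1 - PP H K s := by
  simp only [qq_eq]
  rw [Finset.sum_range_sub']
  simp [PP]

namespace Blocks

variable {H : ℕ → ℂ → ℂ} {W : ℕ → ℕ} {δ : ℝ}

lemma PP_diff (hB : Blocks H W δ) (k : ℕ) : Differentiable ℂ (PP H k) := by
  unfold PP
  have := hB.hd
  refine Differentiable.fun_finsetProd fun j _ => ?_
  exact (differentiable_const _).sub (this j)

lemma qq_diff (hB : Blocks H W δ) (k : ℕ) : Differentiable ℂ (qq H k) :=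
  (hB.hd k).mul (hB.PP_diff k)

lemma PP_bound (hB : Blocks H W δ) (R : ℝ) :
    ∃ C : ℝ, 0 ≤ C ∧ ∀ k s, ‖s‖ ≤ R → ‖PP H k s‖ ≤ C * (1 / 2) ^ k := by
  obtain ⟨K, hK⟩ := exists_nat_ge R
  have h1 : ∀ k, ∃ D : ℝ, 0 ≤ D ∧ ∀ s : ℂ, ‖s‖ ≤ R → ‖PP H k s‖ ≤ D := by
    intro k
    obtain ⟨D, hD⟩ := (isCompact_closedBall (0 : ℂ) R).exists_bound_of_continuousOn
      (hB.PP_diff k).continuous.continuousOn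
    exact ⟨|D|, abs_nonneg _, fun s hs => (hD s (by simpa using hs)).trans (le_abs_self _)⟩
  choose D hD0 hD using h1
  have hle : ∀ k, k ≤ K → D k ≤ (∑ i ∈ Finset.range (K + 1), 2 ^ i * D i) * (1 / 2) ^ k := by
    intro k hk
    have : 2 ^ k * D k ≤ ∑ i ∈ Finset.range (K + 1), 2 ^ i * D i :=
      Finset.single_le_sum (f := fun i => 2 ^ i * D i)
        (fun i _ => mul_nonneg (by positivity) (hD0 i)) (Finset.mem_range.2 (by omega))
    calc D k = (2 ^ k * D k) * (1 / 2) ^ k := by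
          rw [mul_right_comm, ← mul_pow]; norm_num
      _ ≤ _ := by gcongr
  refine ⟨∑ i ∈ Finset.range (K + 1), 2 ^ i * D i,
    Finset.sum_nonneg fun i _ => mul_nonneg (by positivity) (hD0 i), fun k s hs => ?_⟩
  rcases le_total k K with hk | hk
  · exact (hD k s hs).trans (hle k hk)
  · induction k, hk using Nat.le_induction with
    | base => exact (hD K s hs).trans (hle K le_rfl)
    | succ k hk ih =>
      have e : PP H (k + 1) s = PP H k s * (1 - H k s) := by
        simp only [PP, Finset.prod_range_succ]
      rw [e, norm_mul, pow_succ, ← mul_assoc]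
      have h3 : ‖1 - H k s‖ ≤ 1 / 2 := hB.hsmall k s (by
        have : (K : ℝ) ≤ k := by exact_mod_cast hk
        linarith)
      exact mul_le_mul ih h3 (norm_nonneg _) (le_trans (norm_nonneg _) ih)

lemma qq_bound (hB : Blocks H W δ) (R : ℝ) :
    ∃ C : ℝ, 0 ≤ C ∧ ∀ k s, ‖s‖ ≤ R → ‖qq H k s‖ ≤ C * (1 / 2) ^ k := by
  obtain ⟨C, hC0, hC⟩ := hB.PP_bound R
  refine ⟨2 * C, by positivity, fun k s hs => ?_⟩
  rw [qq_eq]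
  refine (norm_sub_le _ _).trans ?_
  have h1 := hC k s hs
  have h2 := hC (k + 1) s hs
  rw [pow_succ] at h2
  have : 0 ≤ C * (1 / 2) ^ k := by positivity
  linarith

lemma PP_real (hB : Blocks H W δ) (k : ℕ) (t : ℝ) :
    ∃ x : ℝ, 0 ≤ x ∧ x ≤ 1 ∧ PP H k (t * Complex.I) = x := by
  induction k with
  | zero => exact ⟨1, by simp, by simp, by simp [PP]⟩
  | succ k ih =>
    obtain ⟨x, h0, h1, hx⟩ := ih
    obtain ⟨y, g0, g1, hy⟩ := hB.hreal k t
    refine ⟨x * (1 - y), mul_nonneg h0 (by linarith), by nlinarith, ?_⟩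
    have e : PP H (k + 1) (t * Complex.I) = PP H k (t * Complex.I) * (1 - H k (t * Complex.I)) := by
      simp only [PP, Finset.prod_range_succ]
    rw [e, hx, hy]; push_cast; ring

lemma qq_real (hB : Blocks H W δ) (k : ℕ) (t : ℝ) :
    ∃ x : ℝ, 0 ≤ x ∧ x ≤ (H k (t * Complex.I)).re ∧ qq H k (t * Complex.I) = x := by
  obtain ⟨x, h0, h1, hx⟩ := hB.PP_real k t
  obtain ⟨y, g0, g1, hy⟩ := hB.hreal k t
  refine ⟨y * x, by positivity, ?_, ?_⟩
  · rw [hy, Complex.ofReal_re]; nlinarith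
  · rw [qq, hx, hy]; push_cast; ring

lemma nn_two (hB : Blocks H W δ) (k : ℕ) : 2 ≤ nn W k := by
  unfold nn
  calc 2 ≤ W 0 := hB.hW 0
    _ ≤ _ := Nat.le_of_dvd (Finset.prod_pos fun j _ => by have := hB.hW j; omega)
      (Finset.dvd_prod_of_mem _ (by simp))

lemma ZZ_norm (hB : Blocks H W δ) (k : ℕ) (s : ℂ) : ‖ZZ W k s‖ = (nn W k : ℝ) ^ (-s.re) := by
  have := hB.nn_two k
  rw [ZZ, Complex.norm_natCast_cpow_of_pos (by omega)]
  simp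

lemma ZZ_le_one (hB : Blocks H W δ) (k : ℕ) {s : ℂ} (hs : 0 ≤ s.re) : ‖ZZ W k s‖ ≤ 1 :=
  norm_npow_le (by have := hB.nn_two k; omega) hs

lemma ZZ_le_two (hB : Blocks H W δ) (k : ℕ) {s : ℂ} {a : ℝ} (ha : 0 ≤ a) (hs : a ≤ s.re) :
    ‖ZZ W k s‖ ≤ (2 : ℝ) ^ (-a) := by
  rw [hB.ZZ_norm]
  have h2 : (2 : ℝ) ≤ nn W k := by exact_mod_cast hB.nn_two k
  calc (nn W k : ℝ) ^ (-s.re) ≤ (2 : ℝ) ^ (-s.re) :=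
        Real.rpow_le_rpow_of_nonpos (by norm_num) h2 (by linarith)
    _ ≤ _ := Real.rpow_le_rpow_of_exponent_le (by norm_num) (by linarith)

lemma ZZ_diff (hB : Blocks H W δ) (k : ℕ) : Differentiable ℂ (ZZ W k) := by
  have : ZZ W k = fun s => Complex.exp (-(s * (Real.log (nn W k) : ℂ))) := by
    ext s
    exact natpow_eq (by have := hB.nn_two k; omega) s
  rw [this]
  fun_prop

lemma qZ_rep (hB : Blocks H W δ) (k : ℕ) : ∃ C, DRep (fun s => qq H k s * ZZ W k s) C := by
  have e1 : ∀ s, ZZ W k s = ∏ j ∈ Finset.range (k + 1), (W j : ℂ) ^ (-s) := by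
    intro s
    have : ∀ m, ((∏ j ∈ Finset.range m, W j : ℕ) : ℂ) ^ (-s) =
        ∏ j ∈ Finset.range m, (W j : ℂ) ^ (-s) := by
      intro m
      induction m with
      | zero => simp
      | succ m ih =>
        rw [Finset.prod_range_succ, Finset.prod_range_succ, Nat.cast_mul,
          Complex.natCast_mul_natCast_cpow, ih]
    exact this (k + 1)
  obtain ⟨C1, h1⟩ := rep_finset_prod (Finset.range k)
    (fun j s => (W j : ℂ) ^ (-s) + (-1) * ((W j : ℂ) ^ (-s) * H j s)) fun j _ => by
      obtain ⟨C, hC⟩ := hB.hrep j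
      exact ⟨_, (rep_npow (by have := hB.hW j; omega)).add (hC.smul (-1))⟩
  obtain ⟨C2, h2⟩ := hB.hrep k
  refine ⟨_, (h2.mul h1).congr fun s _ => ?_⟩
  rw [e1, qq, PP, Finset.prod_range_succ]
  have : ∏ j ∈ Finset.range k, ((W j : ℂ) ^ (-s) + (-1) * ((W j : ℂ) ^ (-s) * H j s)) =
      (∏ j ∈ Finset.range k, (W j : ℂ) ^ (-s)) * ∏ j ∈ Finset.range k, (1 - H j s) := by
    rw [← Finset.prod_mul_distrib]
    exact Finset.prod_congr rfl fun j _ => by ring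
  rw [this]
  ring

lemma gK_rep (hB : Blocks H W δ) (l r : ℝ) (hr0 : 0 ≤ r) (hr : r < 1) (K : ℕ) :
    ∃ C, DRep (fun s => Complex.exp (-l * fK H W r K s)) C := by
  have h1 : ∃ C, DRep (fun s => ∑ k ∈ Finset.range K, term H W r k s) C := by
    refine rep_finset_sum _ _ fun k _ => ?_
    obtain ⟨C1, h1⟩ := hB.qZ_rep k
    have h2 : DRep (fun s => (r : ℂ) * ZZ W k s) (‖(r : ℂ)‖ * 1) :=
      (rep_npow (by have := hB.nn_two k; omega)).smul (r : ℂ)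
    have hn : ‖(r : ℂ)‖ = r := by rw [Complex.norm_real, Real.norm_of_nonneg hr0]
    obtain ⟨C2, h3⟩ := h2.geom (by positivity) (by rw [hn]; linarith)
    refine ⟨_, ((h1.smul (2 * r)).mul h3).congr fun s _ => ?_⟩
    rw [term]; ring
  obtain ⟨C, h1⟩ := h1
  exact (((rep_const 1).add h1).smul (-l)).exp

lemma one_sub_ne (hB : Blocks H W δ) {r : ℝ} (hr0 : 0 ≤ r) (hr : r < 1) (k : ℕ) {s : ℂ}
    (hs : 0 ≤ s.re) : 1 - r * ZZ W k s ≠ 0 := by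
  intro h
  have h1 : ‖(r : ℂ) * ZZ W k s‖ < 1 := by
    rw [norm_mul, Complex.norm_real, Real.norm_of_nonneg hr0]
    have := hB.ZZ_le_one k hs
    nlinarith [norm_nonneg (ZZ W k s)]
  rw [← sub_eq_zero.1 h] at h1
  simp at h1

lemma gK_diff (hB : Blocks H W δ) (l : ℝ) {r : ℝ} (hr0 : 0 ≤ r) (hr : r < 1) (K : ℕ) {s : ℂ}
    (hs : 0 ≤ s.re) : DifferentiableAt ℂ (fun s => Complex.exp (-l * fK H W r K s)) s := by
  refine DifferentiableAt.cexp (DifferentiableAt.const_mul ?_ _)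
  unfold fK term
  refine DifferentiableAt.const_add _ (DifferentiableAt.fun_sum fun k _ => ?_)
  have h1 := (hB.qq_diff k) s
  have h2 := (hB.ZZ_diff k) s
  exact (((h1.mul h2).const_mul 2).mul_const _).mul
    ((h2.const_mul _).const_sub _ |>.inv (hB.one_sub_ne hr0 hr k hs))

lemma re_aux (w : ℂ) (hw : ‖w‖ ≤ 1) (hw1 : 1 - w ≠ 0) : -1 ≤ (2 * w * (1 - w)⁻¹).re := by
  have e : 2 * w * (1 - w)⁻¹ = (1 + w) * (1 - w)⁻¹ - 1 := by field_simp; ring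
  rw [e, Complex.sub_re, Complex.one_re]
  have : 0 ≤ ((1 + w) * (1 - w)⁻¹).re := by
    rw [← div_eq_mul_inv, Complex.div_re, ← add_div]
    refine div_nonneg ?_ (Complex.normSq_nonneg _)
    have h2 : Complex.normSq w ≤ 1 := by
      rw [Complex.normSq_eq_norm_sq]; exact pow_le_one₀ (norm_nonneg _) hw
    rw [Complex.normSq_apply] at h2
    simp
    nlinarith
  linarith

lemma fK_re (hB : Blocks H W δ) {r : ℝ} (hr0 : 0 ≤ r) (hr : r < 1) (K : ℕ) (t : ℝ) :
    (PP H K (t * Complex.I)).re ≤ (fK H W r K (t * Complex.I)).re := by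
  have h := sum_qq H K (t * Complex.I)
  have h' : PP H K (t * Complex.I) = 1 - ∑ k ∈ Finset.range K, qq H k (t * Complex.I) := by
    rw [h]; ring
  rw [h', fK, Complex.sub_re, Complex.add_re, sub_eq_add_neg, Complex.re_sum, Complex.re_sum,
    ← Finset.sum_neg_distrib]
  gcongr with k _
  obtain ⟨x, hx0, _, hx⟩ := hB.qq_real k t
  have hs : 0 ≤ ((t : ℂ) * Complex.I).re := by simp
  have e : term H W r k (t * Complex.I) = x * (2 * (r * ZZ W k (t * Complex.I)) *
      (1 - r * ZZ W k (t * Complex.I))⁻¹) := by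
    rw [term, hx]; ring
  rw [e, hx, Complex.ofReal_re, Complex.re_ofReal_mul]
  have h1 := re_aux (r * ZZ W k (t * Complex.I)) (by
    rw [norm_mul, Complex.norm_real, Real.norm_of_nonneg hr0]
    have := hB.ZZ_le_one k hs
    nlinarith [norm_nonneg (ZZ W k (t * Complex.I))]) (hB.one_sub_ne hr0 hr k hs)
  nlinarith

lemma norm_exp_neg (l : ℝ) (z : ℂ) : ‖Complex.exp (-l * z)‖ = Real.exp (-l * z.re) := by
  rw [Complex.norm_exp]
  congr 1
  rw [← Complex.ofReal_neg, Complex.re_ofReal_mul]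

lemma gK_le_one (hB : Blocks H W δ) {l : ℝ} (hl : 0 ≤ l) {r : ℝ} (hr0 : 0 ≤ r) (hr : r < 1) (K : ℕ)
    {s : ℂ} (hs : 0 ≤ s.re) : ‖Complex.exp (-l * fK H W r K s)‖ ≤ 1 := by
  obtain ⟨C, hC⟩ := hB.gK_rep l r hr0 hr K
  have hbd : ∀ z : ℂ, 0 ≤ z.re → ‖Complex.exp (-l * fK H W r K z)‖ ≤ C := fun z hz => hC.norm_le hz
  refine PhragmenLindelof.right_half_plane_of_bounded_on_real
    (f := fun s => Complex.exp (-l * fK H W r K s)) (C := 1) ?_ ?_ ?_ ?_ hs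
  · refine DifferentiableOn.diffContOnCl fun z hz => ?_
    rw [Complex.closure_setOfPred_lt_re] at hz
    exact (hB.gK_diff l hr0 hr K hz).differentiableWithinAt
  · refine ⟨0, by norm_num, 0, ?_⟩
    refine Asymptotics.IsBigO.of_bound C ?_
    have : ∀ᶠ z : ℂ in Bornology.cobounded ℂ ⊓ 𝓟 {z | 0 < z.re}, 0 < z.re :=
      mem_inf_of_right (mem_principal_self _)
    filter_upwards [this] with z hz
    simpa using hbd z hz.le
  · refine ⟨C, ?_⟩
    rw [eventually_map]
    filter_upwards [eventually_ge_atTop 0] with x hx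
    exact hbd x (by simpa using hx)
  · intro x
    rw [norm_exp_neg]
    have h := hB.fK_re hr0 hr K x
    obtain ⟨y, h0, _, hy⟩ := hB.PP_real K x
    rw [hy, Complex.ofReal_re] at h
    rw [Real.exp_le_one_iff]
    nlinarith

end Blocks

namespace Blocks

variable {H : ℕ → ℂ → ℂ} {W : ℕ → ℕ} {δ : ℝ}

lemma coeff_bound (hB : Blocks H W δ) (hδ : 0 < δ) {l : ℝ} (hl : 0 ≤ l) {r : ℝ} (hr0 : 0 ≤ r)
    (hr : r < 1) (K : ℕ) : ∃ a : ℕ → ℂ, Summable (fun n => ‖a n‖ ^ 2) ∧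
      ∑' n, ‖a n‖ ^ 2 ≤ Real.exp (-2 * l) + δ ∧
      ∀ s : ℂ, 0 ≤ s.re → HasSum (fun n : ℕ => a n * ((n + 1 : ℕ) : ℂ) ^ (-s))
        (Complex.exp (-l * fK H W r K s)) := by
  obtain ⟨C, a, ha, _, hF⟩ := hB.gK_rep l r hr0 hr K
  have hsq : Summable (fun n => ‖a n‖ ^ 2) := by
    have := Summable.mul_of_nonneg ha ha (fun _ => norm_nonneg _) (fun _ => norm_nonneg _)
    have h2 := this.comp_injective (i := fun n : ℕ => (n, n)) (fun i j h => (Prod.mk.inj h).1)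
    refine h2.congr fun n => ?_
    simp [pow_two]
  refine ⟨a, hsq, ?_, hF⟩
  have hpars := mean_parseval a (fun n : ℕ => -Real.log (n + 1 : ℕ)) (by
    intro i j hij
    simp only [neg_inj] at hij
    have := Real.log_injOn_pos
          (Set.mem_Ioi.2 (by exact_mod_cast (by omega : 0 < i + 1)))
          (Set.mem_Ioi.2 (by exact_mod_cast (by omega : 0 < j + 1))) hij
    have h2 : i + 1 = j + 1 := by exact_mod_cast this
    omega) ha
  have hG : ∀ t : ℝ, ∑' n, a n * Complex.exp (Complex.I * (-Real.log (n + 1 : ℕ) * t : ℝ)) =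
      Complex.exp (-l * fK H W r K (t * Complex.I)) := by
    intro t
    refine Eq.trans ?_ (hF (t * Complex.I) (by simp)).tsum_eq
    congr 1
    ext n
    rw [natpow_eq (by omega)]
    congr 2
    push_cast; ring
  simp only [hG] at hpars
  choose c hc hct using hB.hmean
  have hlim : Tendsto (fun T : ℝ => Real.exp (-2 * l) + ∑ k ∈ Finset.range K,
      (2 * T)⁻¹ * ∫ t in (-T)..T, (H k (t * Complex.I)).re) atTop
      (𝓝 (Real.exp (-2 * l) + ∑ k ∈ Finset.range K, c k)) :=
    tendsto_const_nhds.add (tendsto_finsetSum _ fun k _ => hct k)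
  have hptw : ∀ t : ℝ, ‖Complex.exp (-l * fK H W r K (t * Complex.I))‖ ^ 2 ≤
      Real.exp (-2 * l) + ∑ k ∈ Finset.range K, (H k (t * Complex.I)).re := by
    intro t
    have h1 := hB.fK_re hr0 hr K t
    obtain ⟨x, hx0, hx1, hx⟩ := hB.PP_real K t
    rw [hx, Complex.ofReal_re] at h1
    have h2 : 1 - x ≤ ∑ k ∈ Finset.range K, (H k (t * Complex.I)).re := by
      have h3 := sum_qq H K (t * Complex.I)
      rw [hx] at h3
      have h4 := congrArg Complex.re h3
      rw [Complex.re_sum, Complex.sub_re, Complex.ofReal_re, Complex.one_re] at h4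
      rw [← h4]
      refine Finset.sum_le_sum fun k _ => ?_
      obtain ⟨y, _, hy1, hy⟩ := hB.qq_real k t
      rw [hy, Complex.ofReal_re]; exact hy1
    have h5 : ‖Complex.exp (-l * fK H W r K (t * Complex.I))‖ ^ 2 ≤ Real.exp (x * (-2 * l)) := by
      rw [norm_exp_neg, ← Real.exp_nat_mul]
      apply Real.exp_le_exp.2
      push_cast
      nlinarith
    have h6 : Real.exp (x * (-2 * l)) ≤ x * Real.exp (-2 * l) + (1 - x) * 1 := by
      have := convexOn_exp.2 (Set.mem_univ (-2 * l)) (Set.mem_univ 0) hx0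
        (by linarith : 0 ≤ 1 - x) (by ring)
      simpa using this
    have h7 : x * Real.exp (-2 * l) ≤ Real.exp (-2 * l) :=
      mul_le_of_le_one_left (Real.exp_pos _).le hx1
    linarith
  have hHc : ∀ k, Continuous (fun t : ℝ => (H k (t * Complex.I)).re) := fun k =>
    Complex.continuous_re.comp ((hB.hd k).continuous.comp (by fun_prop))
  have hgc : Continuous (fun t : ℝ => ‖Complex.exp (-l * fK H W r K (t * Complex.I))‖ ^ 2) := by
    refine (Continuous.norm ?_).pow 2
    rw [continuous_iff_continuousAt]
    intro t
    have h1 : ContinuousAt (fun s => Complex.exp (-l * fK H W r K s)) (t * Complex.I) :=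
      (hB.gK_diff l hr0 hr K (by simp)).continuousAt
    have h2 : ContinuousAt (fun t : ℝ => (t : ℂ) * Complex.I) t := by fun_prop
    exact ContinuousAt.comp (f := fun t : ℝ => (t : ℂ) * Complex.I)
      (g := fun s => Complex.exp (-l * fK H W r K s)) h1 h2
  have hle := le_of_tendsto_of_tendsto hpars hlim (by
    filter_upwards [eventually_gt_atTop 0] with T hT
    have h1 : ∫ t in (-T)..T, ‖Complex.exp (-l * fK H W r K (t * Complex.I))‖ ^ 2 ≤
        ∫ t in (-T)..T, (Real.exp (-2 * l) + ∑ k ∈ Finset.range K, (H k (t * Complex.I)).re) := by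
      refine intervalIntegral.integral_mono_on (by linarith) (hgc.intervalIntegrable _ _) ?_
        (fun t _ => hptw t)
      exact (continuous_const.add (continuous_finsetSum _ fun k _ => hHc k)).intervalIntegrable _ _
    rw [intervalIntegral.integral_add (by simp)
      ((continuous_finsetSum _ fun k _ => hHc k).intervalIntegrable _ _),
      intervalIntegral.integral_finsetSum (fun k _ => (hHc k).intervalIntegrable _ _),
      intervalIntegral.integral_const] at h1
    have h2 := mul_le_mul_of_nonneg_left h1 (show 0 ≤ (2 * T)⁻¹ by positivity)
    refine h2.trans (le_of_eq ?_)
    rw [mul_add, Finset.mul_sum, smul_eq_mul]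
    congr 1
    field_simp
    ring)
  have hgeo : ∑ k ∈ Finset.range K, c k ≤ δ := by
    calc ∑ k ∈ Finset.range K, c k ≤ ∑ k ∈ Finset.range K, δ * (1 / 2) ^ (k + 1) :=
          Finset.sum_le_sum fun k _ => hc k
      _ = δ * (1 - (1 / 2) ^ K) := by
          clear hle hlim hptw hpars hG hF hgc
          induction K with
          | zero => simp
          | succ K ih => rw [Finset.sum_range_succ, ih]; ring
      _ ≤ δ := by
          have : (0 : ℝ) ≤ (1 / 2) ^ K := by positivity
          nlinarith
  linarith

/-- bound for terms in the open half plane -/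
lemma term_bound (hB : Blocks H W δ) (R a : ℝ) (ha : 0 < a) :
    ∃ C : ℝ, 0 ≤ C ∧ ∀ (r : ℝ) k s, 0 ≤ r → r ≤ 1 → ‖s‖ ≤ R → a ≤ s.re →
      1 - r * ZZ W k s ≠ 0 ∧ ‖term H W r k s‖ ≤ C * (1 / 2) ^ k := by
  obtain ⟨C, hC0, hC⟩ := hB.qq_bound R
  have h2 : (2 : ℝ) ^ (-a) < 1 := Real.rpow_lt_one_of_one_lt_of_neg (by norm_num) (by linarith)
  have h20 : 0 < 1 - (2 : ℝ) ^ (-a) := by linarith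
  refine ⟨2 * C * (1 - (2 : ℝ) ^ (-a))⁻¹, by positivity, fun r k s hr0 hr1 hs hsa => ?_⟩
  have hZ := hB.ZZ_le_two k ha.le hsa
  have hrn : ‖(r : ℂ)‖ = r := by rw [Complex.norm_real, Real.norm_of_nonneg hr0]
  have hlow : 1 - (2 : ℝ) ^ (-a) ≤ ‖1 - r * ZZ W k s‖ := by
    have h3 := norm_sub_norm_le (1 : ℂ) (r * ZZ W k s)
    rw [norm_one, norm_mul, hrn] at h3
    have : r * ‖ZZ W k s‖ ≤ 1 * ‖ZZ W k s‖ := by gcongr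
    linarith
  refine ⟨fun h => ?_, ?_⟩
  · rw [h, norm_zero] at hlow; linarith
  · rw [term, norm_mul, norm_mul, norm_mul, norm_mul, hrn, norm_inv]
    have hq := hC k s hs
    have hZ1 := hB.ZZ_le_one k (by linarith : 0 ≤ s.re)
    calc ‖(2 : ℂ)‖ * (‖qq H k s‖ * ‖ZZ W k s‖) * r * ‖1 - r * ZZ W k s‖⁻¹
        ≤ 2 * ((C * (1 / 2) ^ k) * 1) * 1 * (1 - (2 : ℝ) ^ (-a))⁻¹ := by
          rw [Complex.norm_ofNat]
          gcongr
      _ = _ := by ring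

lemma sum_geo (C : ℝ) : Summable (fun k : ℕ => C * (1 / 2 : ℝ) ^ k) :=
  (summable_geometric_of_lt_one (by norm_num) (by norm_num)).mul_left _

lemma fK_tendsto (hB : Blocks H W δ) (r : ℕ → ℝ) (hr0 : ∀ K, 0 ≤ r K) (hr1 : ∀ K, r K ≤ 1)
    (hr : Tendsto r atTop (𝓝 1)) {s : ℂ} (hs : 0 < s.re) :
    Tendsto (fun K => fK H W (r K) K s) atTop (𝓝 (ff H W s)) := by
  obtain ⟨C, hC0, hC⟩ := hB.term_bound ‖s‖ s.re hs
  unfold fK ff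
  refine tendsto_const_nhds.add ?_
  have e : ∀ K, ∑ k ∈ Finset.range K, term H W (r K) k s =
      ∑' k, if k < K then term H W (r K) k s else 0 := by
    intro K
    rw [tsum_eq_sum (s := Finset.range K)]
    · refine Finset.sum_congr rfl fun k hk => ?_
      rw [if_pos (Finset.mem_range.1 hk)]
    · intro k hk
      rw [if_neg (by simpa using hk)]
  simp only [e]
  refine tendsto_tsum_of_dominated_convergence (sum_geo C) (fun k => ?_) ?_
  · have hrc : Tendsto (fun K => (r K : ℂ)) atTop (𝓝 ((1 : ℝ) : ℂ)) :=
      (Complex.continuous_ofReal.tendsto _).comp hr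
    have h1 : Tendsto (fun K => term H W (r K) k s) atTop (𝓝 (term H W 1 k s)) := by
      unfold term
      refine (hrc.const_mul _).mul (Tendsto.inv₀ ((hrc.mul_const _).const_sub _) ?_)
      exact (hC 1 k s zero_le_one le_rfl le_rfl le_rfl).1
    refine h1.congr' ?_
    filter_upwards [eventually_gt_atTop k] with K hK
    rw [if_pos hK]
  · refine Eventually.of_forall fun K k => ?_
    split_ifs
    · exact (hC (r K) k s (hr0 K) (hr1 K) le_rfl le_rfl).2
    · rw [norm_zero]; positivity

lemma ff_diff (hB : Blocks H W δ) : DifferentiableOn ℂ (ff H W) {s : ℂ | 0 < s.re} := by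
  intro s hs
  have hs : 0 < s.re := hs
  obtain ⟨C, hC0, hC⟩ := hB.term_bound (‖s‖ + 1) (s.re / 2) (by linarith)
  have hopen : IsOpen ({z : ℂ | s.re / 2 < z.re} ∩ Metric.ball 0 (‖s‖ + 1)) :=
    (isOpen_lt continuous_const Complex.continuous_re).inter Metric.isOpen_ball
  have hd : DifferentiableOn ℂ (fun z => ∑' k, term H W 1 k z)
      ({z : ℂ | s.re / 2 < z.re} ∩ Metric.ball 0 (‖s‖ + 1)) := by
    refine Complex.differentiableOn_tsum_of_summable_norm (sum_geo C) (fun k z hz => ?_) hopen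
      (fun k z hz => ?_)
    · have hz1 : s.re / 2 < z.re := hz.1
      have hz2 : ‖z‖ < ‖s‖ + 1 := by simpa using hz.2
      have hne := (hC 1 k z zero_le_one le_rfl hz2.le hz1.le).1
      unfold term
      have h1 := (hB.qq_diff k) z
      have h2 := (hB.ZZ_diff k) z
      exact ((((h1.mul h2).const_mul 2).mul_const _).mul
        ((h2.const_mul _).const_sub _ |>.inv hne)).differentiableWithinAt
    · have hz1 : s.re / 2 < z.re := hz.1
      have hz2 : ‖z‖ < ‖s‖ + 1 := by simpa using hz.2
      exact (hC 1 k z zero_le_one le_rfl hz2.le hz1.le).2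
  have hmem : s ∈ {z : ℂ | s.re / 2 < z.re} ∩ Metric.ball 0 (‖s‖ + 1) := by
    refine ⟨?_, by simp⟩
    show s.re / 2 < s.re
    linarith
  exact ((hd.differentiableAt (hopen.mem_nhds hmem)).const_add 1).differentiableWithinAt

lemma ff_boundary (hB : Blocks H W δ) :
    ∀ᵐ t : ℝ, ∃ b : ℂ, b.re = 0 ∧
      Tendsto (fun σ : ℝ => ff H W (σ + t * Complex.I)) (𝓝[>] 0) (𝓝 b) := by
  filter_upwards [ae_lower (nn W) hB.nn_two] with t ⟨hpos, hev⟩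
  set w : ℕ → ℝ := fun k => ‖1 - ZZ W k (t * Complex.I)‖ with hw
  have hpos' : ∀ k, 0 < w k := hpos
  obtain ⟨C, hC0, hC⟩ := hB.qq_bound (1 + |t|)
  have hsum : Summable (fun k => 2 * (C * (1 / 2) ^ k) * (2 * (w k)⁻¹)) := by
    have hg : Summable (fun k : ℕ => (4 * C) * (2 / 3 : ℝ) ^ k) :=
      (summable_geometric_of_lt_one (by norm_num) (by norm_num)).mul_left _
    refine Summable.of_norm_bounded_eventually_nat hg ?_
    filter_upwards [hev] with k hk
    have hk' : (3 / 4 : ℝ) ^ k ≤ w k := hk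
    rw [Real.norm_of_nonneg (by have := hpos' k; positivity)]
    calc 2 * (C * (1 / 2) ^ k) * (2 * (w k)⁻¹) ≤
          2 * (C * (1 / 2) ^ k) * (2 * ((3 / 4 : ℝ) ^ k)⁻¹) := by gcongr
      _ = 4 * C * ((1 / 2) ^ k * ((3 / 4 : ℝ) ^ k)⁻¹) := by ring
      _ = 4 * C * (2 / 3 : ℝ) ^ k := by
          rw [← inv_pow, ← mul_pow]; norm_num
  have hZs : ∀ k (σ : ℝ), ZZ W k (σ + t * Complex.I) =
      (((nn W k : ℝ) ^ (-σ) : ℝ) : ℂ) * ZZ W k (t * Complex.I) := by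
    intro k σ
    have hn : (nn W k : ℂ) ≠ 0 := by
      have := hB.nn_two k
      exact_mod_cast (by omega : nn W k ≠ 0)
    rw [ZZ, ZZ, neg_add, Complex.cpow_add _ _ hn, Complex.ofReal_cpow (by positivity)]
    push_cast
    rfl
  have hnorm : ∀ k (σ : ℝ), 0 ≤ σ → w k ≤ 2 * ‖1 - ZZ W k (σ + t * Complex.I)‖ := by
    intro k σ hσ
    set ρ : ℝ := (nn W k : ℝ) ^ (-σ) with hρ
    have hρ0 : 0 ≤ ρ := by positivity
    have hρ1 : ρ ≤ 1 := Real.rpow_le_one_of_one_le_of_nonpos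
      (by have := hB.nn_two k; exact_mod_cast (by omega : 1 ≤ nn W k)) (by linarith)
    set z := ZZ W k (t * Complex.I) with hz
    have hz1 : ‖z‖ ≤ 1 := hB.ZZ_le_one k (by simp)
    rw [hZs, hw]
    simp only
    rw [← hz, ← hρ]
    have hρz : ‖(ρ : ℂ) * z‖ = ρ * ‖z‖ := by
      rw [norm_mul, Complex.norm_real, Real.norm_of_nonneg hρ0]
    have h1 : 1 - ρ ≤ ‖1 - ρ * z‖ := by
      have := norm_sub_norm_le (1 : ℂ) (ρ * z)
      rw [norm_one, hρz] at this
      nlinarith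
    have h2 : ‖1 - z‖ ≤ ‖1 - ρ * z‖ + (1 - ρ) := by
      have e : 1 - z = (1 - ρ * z) - ((1 - ρ : ℝ) : ℂ) * z := by push_cast; ring
      rw [e]
      refine (norm_sub_le _ _).trans ?_
      gcongr
      rw [norm_mul, Complex.norm_real, Real.norm_of_nonneg (by linarith)]
      nlinarith
    linarith
  have hbd : ∀ k (σ : ℝ), 0 ≤ σ → σ ≤ 1 →
      ‖term H W 1 k (σ + t * Complex.I)‖ ≤ 2 * (C * (1 / 2) ^ k) * (2 * (w k)⁻¹) := by
    intro k σ hσ hσ1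
    have hs0 : 0 ≤ ((σ : ℂ) + t * Complex.I).re := by simpa using hσ
    have hsR : ‖(σ : ℂ) + t * Complex.I‖ ≤ 1 + |t| := by
      refine (norm_add_le _ _).trans ?_
      rw [norm_mul, Complex.norm_real, Complex.norm_real, Complex.norm_I, mul_one,
        Real.norm_of_nonneg hσ, Real.norm_eq_abs]
      linarith
    have hq := hC k _ hsR
    have hZ1 := hB.ZZ_le_one k hs0
    have hwk := hpos' k
    have hinv : ‖1 - ZZ W k (σ + t * Complex.I)‖⁻¹ ≤ 2 * (w k)⁻¹ := by
      have h1 := hnorm k σ hσ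
      have h2 : 0 < ‖1 - ZZ W k (σ + t * Complex.I)‖ := by linarith
      rw [inv_le_comm₀ h2 (by positivity), mul_inv, inv_inv]
      linarith
    rw [term, Complex.ofReal_one, mul_one, one_mul, norm_mul, norm_mul, norm_mul, norm_inv,
      Complex.norm_ofNat]
    calc 2 * (‖qq H k (σ + t * Complex.I)‖ * ‖ZZ W k (σ + t * Complex.I)‖) *
          ‖1 - ZZ W k (σ + t * Complex.I)‖⁻¹ ≤ 2 * ((C * (1 / 2) ^ k) * 1) * (2 * (w k)⁻¹) := by
          gcongr
      _ = _ := by ring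
  refine ⟨1 + ∑' k, term H W 1 k (t * Complex.I), ?_, ?_⟩
  · have hs : Summable (fun k => term H W 1 k (t * Complex.I)) := by
      refine Summable.of_norm_bounded hsum fun k => ?_
      simpa using hbd k 0 le_rfl zero_le_one
    have hre : ∀ k, (term H W 1 k (t * Complex.I)).re = - (qq H k (t * Complex.I)).re := by
      intro k
      obtain ⟨x, _, _, hx⟩ := hB.qq_real k t
      set z := ZZ W k (t * Complex.I) with hz
      have hzn : ‖z‖ = 1 := by rw [hz, hB.ZZ_norm]; simp
      have hz1 : 1 - z ≠ 0 := norm_pos_iff.1 (hpos' k)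
      have e : term H W 1 k (t * Complex.I) = x * (2 * (z * (1 - z)⁻¹)) := by
        rw [term, ← hz, hx]; push_cast; ring
      rw [e, hx, Complex.ofReal_re, Complex.re_ofReal_mul]
      have h2 : (2 * (z * (1 - z)⁻¹)).re = -1 := by
        have e2 : 2 * (z * (1 - z)⁻¹) = (1 + z) * (1 - z)⁻¹ - 1 := by field_simp; ring
        rw [e2, Complex.sub_re, Complex.one_re]
        have : ((1 + z) * (1 - z)⁻¹).re = 0 := by
          rw [← div_eq_mul_inv, Complex.div_re, ← add_div]
          have h3 : Complex.normSq z = 1 := by rw [Complex.normSq_eq_norm_sq, hzn]; norm_num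
          rw [Complex.normSq_apply] at h3
          have : (1 + z).re * (1 - z).re + (1 + z).im * (1 - z).im = 0 := by
            simp; nlinarith
          rw [this, zero_div]
        rw [this]; norm_num
      rw [h2]; ring
    rw [Complex.add_re, Complex.one_re, Complex.re_tsum hs]
    simp only [hre]
    have hq : HasSum (fun k => - (qq H k (t * Complex.I)).re) (-1) := by
      have hsr : Summable (fun k => - (qq H k (t * Complex.I)).re) := by
        have := Complex.hasSum_re hs.hasSum
        simpa only [hre] using this.summable
      have h1 := hsr.hasSum.tendsto_sum_nat
      have h2 : Tendsto (fun K => ∑ k ∈ Finset.range K, - (qq H k (t * Complex.I)).re) atTop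
          (𝓝 (-1)) := by
        obtain ⟨D, hD0, hD⟩ := hB.PP_bound (1 + |t|)
        have hP : Tendsto (fun K => PP H K (t * Complex.I)) atTop (𝓝 0) := by
          refine squeeze_zero_norm (fun K => hD K _ ?_) (sum_geo D).tendsto_atTop_zero
          rw [norm_mul, Complex.norm_real, Complex.norm_I, Real.norm_eq_abs]
          linarith
        have hPr := ((Complex.continuous_re.tendsto _).comp hP).sub_const 1
        simp only [Complex.zero_re, zero_sub] at hPr
        refine hPr.congr fun K => ?_
        rw [Finset.sum_neg_distrib, ← Complex.re_sum, sum_qq]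
        simp
      rw [tendsto_nhds_unique h2 h1]
      exact hsr.hasSum
    rw [hq.tsum_eq]; norm_num
  · unfold ff
    refine tendsto_const_nhds.add ?_
    refine tendsto_tsum_of_dominated_convergence hsum (fun k => ?_) ?_
    · have hne : 1 - ((1 : ℝ) : ℂ) * ZZ W k (t * Complex.I) ≠ 0 := by
        rw [Complex.ofReal_one, one_mul]; exact norm_pos_iff.1 (hpos' k)
      have h1 := (hB.qq_diff k) (t * Complex.I)
      have h2 := (hB.ZZ_diff k) (t * Complex.I)
      have hc : ContinuousAt (term H W 1 k) (t * Complex.I) := by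
        unfold term
        exact ((((h1.mul h2).const_mul 2).mul_const _).mul
          ((h2.const_mul _).const_sub _ |>.inv hne)).continuousAt
      have hl : Tendsto (fun σ : ℝ => (σ : ℂ) + t * Complex.I) (𝓝[>] 0) (𝓝 (t * Complex.I)) := by
        have : Tendsto (fun σ : ℝ => (σ : ℂ) + t * Complex.I) (𝓝 0)
            (𝓝 (((0 : ℝ) : ℂ) + t * Complex.I)) := by
          apply Continuous.tendsto
          fun_prop
        rw [Complex.ofReal_zero, zero_add] at this
        exact this.mono_left nhdsWithin_le_nhds
      exact hc.tendsto.comp hl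
    · have : ∀ᶠ σ : ℝ in 𝓝[>] 0, σ ∈ Set.Ioc (0 : ℝ) 1 := Ioc_mem_nhdsGT zero_lt_one
      filter_upwards [this] with σ hσ k
      exact hbd k σ hσ.1.le hσ.2

end Blocks

open MeasureTheory Filter Complex Real

/-- For every `ε > 0` there is a singular inner function `g` in `𝓗^∞`: `g` is analytic
and zero-free on `Re s > 0` with `|g| ≤ 1`, is represented by a Dirichlet series
`∑ aₙ n^{-s}` in some half-plane, its boundary values have modulus `1` almost
everywhere, and yet `∑ |aₙ|² ≤ ε²`. -/
theorem exists_singular_inner_small_coefficients (ε : ℝ) (hε : 0 < ε) :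
    ∃ (g : ℂ → ℂ) (a : ℕ → ℂ) (σ₀ : ℝ) (gb : ℝ → ℂ),
      DifferentiableOn ℂ g {s : ℂ | 0 < s.re} ∧
      (∀ s : ℂ, 0 < s.re → ‖g s‖ ≤ 1) ∧
      (∀ s : ℂ, 0 < s.re → g s ≠ 0) ∧
      (∀ s : ℂ, σ₀ < s.re →
        HasSum (fun n : ℕ => a (n + 1) * ((n + 1 : ℕ) : ℂ) ^ (-s)) (g s)) ∧
      (∀ᵐ t : ℝ ∂volume,
        Tendsto (fun σ : ℝ => g (σ + t * I)) (nhdsWithin 0 (Set.Ioi 0)) (nhds (gb t))) ∧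
      (∀ᵐ t : ℝ ∂volume, ‖gb t‖ = 1) ∧
      (∑' n : ℕ, ‖a (n + 1)‖ ^ 2) ≤ ε ^ 2 := by
  have hδ : 0 < ε ^ 2 / 2 := by positivity
  obtain ⟨H, W, hB⟩ := exists_blocks (ε ^ 2 / 2) hδ
  obtain ⟨l, hl, hlε⟩ : ∃ l : ℝ, 0 ≤ l ∧ Real.exp (-2 * l) ≤ ε ^ 2 / 2 := by
    refine ⟨|Real.log (ε ^ 2 / 2)| / 2, by positivity, ?_⟩
    rw [← Real.le_log_iff_exp_le hδ]
    linarith [neg_abs_le (Real.log (ε ^ 2 / 2))]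
  set r : ℕ → ℝ := fun K => 1 - 1 / ((K : ℝ) + 1) with hrdef
  have hr0 : ∀ K, 0 ≤ r K := by
    intro K
    have : 1 / ((K : ℝ) + 1) ≤ 1 := by
      rw [div_le_one (by positivity)]
      linarith [Nat.cast_nonneg (α := ℝ) K]
    simp only [hrdef]; linarith
  have hr1 : ∀ K, r K < 1 := by
    intro K
    have : 0 < 1 / ((K : ℝ) + 1) := by positivity
    simp only [hrdef]; linarith
  have hr : Tendsto r atTop (nhds 1) := by
    have := (tendsto_one_div_add_atTop_nhds_zero_nat (𝕜 := ℝ)).const_sub 1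
    simpa [hrdef] using this
  set g : ℂ → ℂ := fun s => Complex.exp (-l * ff H W s) with hg
  have hgK : ∀ s : ℂ, 0 < s.re → Tendsto (fun K => Complex.exp (-l * fK H W (r K) K s)) atTop
      (nhds (g s)) := by
    intro s hs
    exact (Complex.continuous_exp.tendsto _).comp
      ((hB.fK_tendsto r hr0 (fun K => (hr1 K).le) hr hs).const_mul _)
  have hcoef := fun K => hB.coeff_bound hδ hl (hr0 K) (hr1 K) K
  choose A hAs hAb hAsum using hcoef
  have hAb' : ∀ K, ∑' n, ‖A K n‖ ^ 2 ≤ ε ^ 2 := fun K => (hAb K).trans (by linarith)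
  have hAn : ∀ K n, ‖A K n‖ ≤ ε := by
    intro K n
    have h1 : ‖A K n‖ ^ 2 ≤ ε ^ 2 :=
      ((hAs K).le_tsum n (fun _ _ => by positivity)).trans (hAb' K)
    exact (sq_le_sq₀ (norm_nonneg _) hε.le).1 h1
  have hcomp : IsCompact (Set.pi Set.univ (fun _ : ℕ => Metric.closedBall (0 : ℂ) ε)) :=
    isCompact_univ_pi fun _ => isCompact_closedBall _ _
  obtain ⟨b, hb, φ, hφ, hlim⟩ := hcomp.tendsto_subseq (x := A) (fun K n _ => by
    simpa using hAn K n)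
  rw [tendsto_pi_nhds] at hlim
  have hbdry := hB.ff_boundary
  have hbdry' : ∀ t : ℝ, ∃ β : ℂ, (∃ b : ℂ, b.re = 0 ∧
      Tendsto (fun σ : ℝ => ff H W (σ + t * Complex.I)) (nhdsWithin 0 (Set.Ioi 0)) (nhds b)) →
      β.re = 0 ∧ Tendsto (fun σ : ℝ => ff H W (σ + t * Complex.I))
        (nhdsWithin 0 (Set.Ioi 0)) (nhds β) := by
    intro t
    by_cases h : ∃ b : ℂ, b.re = 0 ∧
      Tendsto (fun σ : ℝ => ff H W (σ + t * Complex.I)) (nhdsWithin 0 (Set.Ioi 0)) (nhds b)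
    · obtain ⟨b, hb⟩ := h
      exact ⟨b, fun _ => hb⟩
    · exact ⟨0, fun h' => absurd h' h⟩
  choose β hβ using hbdry'
  refine ⟨g, fun n => b (n - 1), 1, fun t => Complex.exp (-l * β t), ?_, ?_, ?_, ?_, ?_, ?_, ?_⟩
  · exact (hB.ff_diff.const_mul _).cexp
  · intro s hs
    exact le_of_tendsto (hgK s hs).norm
      (Eventually.of_forall fun K => hB.gK_le_one hl (hr0 K) (hr1 K) K hs.le)
  · intro s _
    exact Complex.exp_ne_zero _
  · intro s hs
    simp only [Nat.add_sub_cancel]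
    have hs0 : 0 < s.re := by linarith
    have hsm : Summable (fun n : ℕ => ε * ((n + 1 : ℕ) : ℝ) ^ (-s.re)) := by
      refine Summable.mul_left _ ?_
      exact (summable_nat_add_iff 1 (f := fun n : ℕ => (n : ℝ) ^ (-s.re))).2
        (Real.summable_nat_rpow.2 (by linarith))
    have hnb : ∀ (c : ℂ) (n : ℕ), ‖c‖ ≤ ε → ‖c * ((n + 1 : ℕ) : ℂ) ^ (-s)‖ ≤
        ε * ((n + 1 : ℕ) : ℝ) ^ (-s.re) := by
      intro c n hc
      rw [norm_mul, Complex.norm_natCast_cpow_of_pos (by omega), Complex.neg_re]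
      gcongr
    have h1 : Tendsto (fun K => ∑' n : ℕ, A (φ K) n * ((n + 1 : ℕ) : ℂ) ^ (-s)) atTop
        (nhds (∑' n : ℕ, b n * ((n + 1 : ℕ) : ℂ) ^ (-s))) := by
      refine tendsto_tsum_of_dominated_convergence hsm (fun n => (hlim n).mul_const _) ?_
      exact Eventually.of_forall fun K n => hnb _ n (hAn _ n)
    have h2 : Tendsto (fun K => ∑' n : ℕ, A (φ K) n * ((n + 1 : ℕ) : ℂ) ^ (-s)) atTop
        (nhds (g s)) := by
      refine ((hgK s hs0).comp hφ.tendsto_atTop).congr fun K => ?_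
      exact ((hAsum (φ K) s hs0.le).tsum_eq).symm
    rw [tendsto_nhds_unique h2 h1]
    refine Summable.hasSum (Summable.of_norm_bounded hsm fun n => hnb _ n ?_)
    simpa using hb n (Set.mem_univ n)
  · filter_upwards [hbdry] with t ht
    exact (Complex.continuous_exp.tendsto _).comp ((hβ t ht).2.const_mul _)
  · filter_upwards [hbdry] with t ht
    rw [Blocks.norm_exp_neg, (hβ t ht).1]
    simp
  · simp only [Nat.add_sub_cancel]
    refine Real.tsum_le_of_sum_range_le (fun _ => by positivity) fun N => ?_
    have h1 : Tendsto (fun K => ∑ n ∈ Finset.range N, ‖A (φ K) n‖ ^ 2) atTop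
        (nhds (∑ n ∈ Finset.range N, ‖b n‖ ^ 2)) :=
      tendsto_finsetSum _ fun n _ => ((hlim n).norm.pow 2)
    refine le_of_tendsto h1 (Eventually.of_forall fun K => ?_)
    exact ((hAs (φ K)).sum_le_tsum _ (fun _ _ => by positivity)).trans (hAb' _)
end
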